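/- Fix an integer d ≥ 3 and a real p with 1/(d-1) < p < 1. For every b > 0 there exist δ, c, C, R > 0 such that: if 𝒢 is a regular (b,d)-expander on n vertices with girth exceeding R, then with probability at least 1 − C·exp(−c n), the random graph G ∼ 𝒢_p contains a minor of the complete graph K_t with t ≥ δ√n; that is, there exist t pairwise disjoint vertex subsets V₁, …, V_t of G, each inducing a connected subgraph of G, such that for every pair i ≠ j there is an edge of G with one endpoint in V_i and the other in V_j. -/

import Mathlib

open scoped Classical symmDiff

noncomputable section

namespace Percolation

variable {V : Type} [Fintype V] [DecidableEq V]

/-- The edge set of `G` as a finset. -/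
noncomputable def edgeFinset' (G : SimpleGraph V) : Finset (Sym2 V) :=
  Finset.univ.filter (· ∈ G.edgeSet)

/-- Probability that bond percolation on `G` with parameter `p` produces a spanning
subgraph satisfying `P`. -/
noncomputable def percProb (G : SimpleGraph V) (p : ℝ) (P : SimpleGraph V → Prop) : ℝ :=
  ∑ s ∈ (edgeFinset' G).powerset,
    (p ^ s.card * (1 - p) ^ ((edgeFinset' G).card - s.card)) *
      (if P (SimpleGraph.fromEdgeSet (↑s)) then 1 else 0)

/-- Joint probability for two independent bond percolations on `G`. -/
noncomputable def percProb2 (G : SimpleGraph V) (p₁ p₂ : ℝ)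
    (P : SimpleGraph V → SimpleGraph V → Prop) : ℝ :=
  ∑ s ∈ (edgeFinset' G).powerset, ∑ t ∈ (edgeFinset' G).powerset,
    (p₁ ^ s.card * (1 - p₁) ^ ((edgeFinset' G).card - s.card)) *
    (p₂ ^ t.card * (1 - p₂) ^ ((edgeFinset' G).card - t.card)) *
      (if P (SimpleGraph.fromEdgeSet (↑s)) (SimpleGraph.fromEdgeSet (↑t)) then 1 else 0)

/-- Number of edges of `G` joining `S` to its complement. -/
noncomputable def cutCard (G : SimpleGraph V) (S : Finset V) : ℕ :=
  ((edgeFinset' G).filter (fun e => ∃ x ∈ S, ∃ y, y ∉ S ∧ e = s(x, y))).card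

/-- `G` is a `(b,d)`-expander: max degree at most `d`, and every vertex set of size at most
`n/2` has at least `b|S|` edges to its complement. -/
def IsExpander (G : SimpleGraph V) (b : ℝ) (d : ℕ) : Prop :=
  (∀ v, (G.neighborSet v).ncard ≤ d) ∧
  ∀ S : Finset V, (S.card : ℝ) ≤ Fintype.card V / 2 → b * S.card ≤ cutCard G S

/-- `G` is a regular `(b,d)`-expander. -/
def IsRegularExpander (G : SimpleGraph V) (b : ℝ) (d : ℕ) : Prop :=
  IsExpander G b d ∧ ∀ v, (G.neighborSet v).ncard = d

/-- The vertices of the connected component `c` of `G`. -/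
noncomputable def compVerts (G : SimpleGraph V) (c : G.ConnectedComponent) : Finset V :=
  Finset.univ.filter (fun v => G.connectedComponentMk v = c)

/-- The edges of the connected component `c` of `G`. -/
noncomputable def compEdges (G : SimpleGraph V) (c : G.ConnectedComponent) : Finset (Sym2 V) :=
  (edgeFinset' G).filter (fun e => ∀ v ∈ e, G.connectedComponentMk v = c)

/-- `c` is a largest connected component of `G`. -/
def IsLargestComp (G : SimpleGraph V) (c : G.ConnectedComponent) : Prop :=
  ∀ c' : G.ConnectedComponent, (compVerts G c').card ≤ (compVerts G c).card

/-- The 2-core of the connected component `c` of `G` : the maximal subgraph of `G`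
supported inside `c` all of whose vertices have degree at least 2. -/
noncomputable def twoCoreComp (G : SimpleGraph V) (c : G.ConnectedComponent) : SimpleGraph V :=
  sSup {H : SimpleGraph V | H ≤ G ∧ (∀ v ∈ H.support, G.connectedComponentMk v = c) ∧
    ∀ v ∈ H.support, 2 ≤ (H.neighborSet v).ncard}

/-- The event `A^R_{x,y}(H)`: the connected component of `y` in `H` with the edge `xy`
removed (if present) has at least `R` vertices. -/
def eventA (H : SimpleGraph V) (R : ℕ) (x y : V) : Prop :=
  R ≤ (compVerts (H.deleteEdges {s(x, y)})
        ((H.deleteEdges {s(x, y)}).connectedComponentMk y)).card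

/-- `E₁(H)`: edges `xy` of `H` such that `A^R_{x,y}` or `A^R_{y,x}` holds. -/
noncomputable def E1set (H : SimpleGraph V) (R : ℕ) : Finset (Sym2 V) :=
  (edgeFinset' H).filter (fun e => ∃ x y, e = s(x, y) ∧ (eventA H R x y ∨ eventA H R y x))

/-- `V₁(H)`: vertices `x` such that for some `y`, `xy ∈ E(H)` and `A^R_{x,y}` holds. -/
noncomputable def V1set (H : SimpleGraph V) (R : ℕ) : Finset V :=
  Finset.univ.filter (fun x => ∃ y, H.Adj x y ∧ eventA H R x y)

/-- `E₂(H)`: edges `xy` of `H` such that both `A^R_{x,y}` and `A^R_{y,x}` hold. -/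
noncomputable def E2set (H : SimpleGraph V) (R : ℕ) : Finset (Sym2 V) :=
  (edgeFinset' H).filter (fun e => ∃ x y, e = s(x, y) ∧ eventA H R x y ∧ eventA H R y x)

/-- `V₂(H)`: vertices incident to an edge of `E₂(H)`. -/
noncomputable def V2set (H : SimpleGraph V) (R : ℕ) : Finset V :=
  Finset.univ.filter (fun x => ∃ e ∈ E2set H R, x ∈ e)

/-- `V̄₁(H)`: vertices `y` such that `A^R_{x,y}(H)` holds for some `x`. -/
noncomputable def Vbar1 (H : SimpleGraph V) (R : ℕ) : Finset V :=
  Finset.univ.filter (fun y => ∃ x, eventA H R x y)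

/-- `S` is `k`-thick in `H`: a union of pairwise disjoint subsets, each of size at least
`k`, each inducing a connected subgraph of `H`. -/
def IsThick (H : SimpleGraph V) (k : ℕ) (S : Finset V) : Prop :=
  ∃ P : Finset (Finset V),
    (∀ T ∈ P, k ≤ T.card ∧ (H.induce (↑T : Set V)).Connected) ∧
    (↑P : Set (Finset V)).PairwiseDisjoint id ∧ S = P.biUnion id

/-- `S` is a separator of `K`. -/
def IsSeparator {W : Type} [Fintype W] (K : SimpleGraph W) (S : Finset W) : Prop :=
  ∃ A B : Finset W, Disjoint A B ∧ Disjoint A S ∧ Disjoint B S ∧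
    (∀ w, w ∈ A ∨ w ∈ B ∨ w ∈ S) ∧
    (∀ a ∈ A, ∀ b ∈ B, ¬ K.Adj a b) ∧
    3 * A.card ≤ 2 * Fintype.card W ∧ 3 * B.card ≤ 2 * Fintype.card W

set_option linter.unusedSectionVars false

section Expectation

variable {α : Type*} [DecidableEq α]

/-- Expectation of `f` over a random subset of `E` retaining each element independently with
probability `p`. -/
noncomputable def percExp (p : ℝ) (E : Finset α) (f : Finset α → ℝ) : ℝ :=
  ∑ s ∈ E.powerset, (p ^ s.card * (1 - p) ^ (E.card - s.card)) * f s

lemma percExp_empty (p : ℝ) (f : Finset α → ℝ) : percExp p ∅ f = f ∅ := by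
  simp [percExp]

lemma percExp_insert (p : ℝ) {E : Finset α} {e : α} (he : e ∉ E) (f : Finset α → ℝ) :
    percExp p (insert e E) f
      = (1 - p) * percExp p E f + p * percExp p E (fun s => f (insert e s)) := by
  unfold percExp
  rw [Finset.sum_powerset_insert he, Finset.mul_sum, Finset.mul_sum]
  congr 1
  · refine Finset.sum_congr rfl fun s hs => ?_
    have h := Finset.card_le_card (Finset.mem_powerset.1 hs)
    rw [Finset.card_insert_of_notMem he, Nat.succ_sub h, pow_succ]
    ring
  · refine Finset.sum_congr rfl fun s hs => ?_
    have h : e ∉ s := fun h => he (Finset.mem_powerset.1 hs h)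
    rw [Finset.card_insert_of_notMem he, Finset.card_insert_of_notMem h, Nat.succ_sub_succ,
      pow_succ]
    ring

lemma percExp_mono {p : ℝ} (h0 : 0 ≤ p) (h1 : p ≤ 1) {E : Finset α} {f g : Finset α → ℝ}
    (h : ∀ s ⊆ E, f s ≤ g s) : percExp p E f ≤ percExp p E g :=
  Finset.sum_le_sum fun s hs => mul_le_mul_of_nonneg_left (h s (Finset.mem_powerset.1 hs))
    (mul_nonneg (pow_nonneg h0 _) (pow_nonneg (by linarith) _))

lemma percExp_congr {p : ℝ} {E : Finset α} {f g : Finset α → ℝ}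
    (h : ∀ s ⊆ E, f s = g s) : percExp p E f = percExp p E g :=
  Finset.sum_congr rfl fun s hs => by rw [h s (Finset.mem_powerset.1 hs)]

lemma percExp_add (p : ℝ) (E : Finset α) (f g : Finset α → ℝ) :
    percExp p E (fun s => f s + g s) = percExp p E f + percExp p E g := by
  simp [percExp, mul_add, Finset.sum_add_distrib]

lemma percExp_sub (p : ℝ) (E : Finset α) (f g : Finset α → ℝ) :
    percExp p E (fun s => f s - g s) = percExp p E f - percExp p E g := by
  simp [percExp, mul_sub, Finset.sum_sub_distrib]

lemma percExp_const_mul (p : ℝ) (E : Finset α) (c : ℝ) (f : Finset α → ℝ) :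
    percExp p E (fun s => c * f s) = c * percExp p E f := by
  simp only [percExp, Finset.mul_sum]
  exact Finset.sum_congr rfl fun s _ => by ring

lemma percExp_sum {ι : Type*} (p : ℝ) (E : Finset α) (I : Finset ι) (f : ι → Finset α → ℝ) :
    percExp p E (fun s => ∑ i ∈ I, f i s) = ∑ i ∈ I, percExp p E (f i) := by
  simp only [percExp, Finset.mul_sum]
  exact Finset.sum_comm

/-- The expectation of a product of functions of the individual elements. -/
lemma percExp_prod (p : ℝ) (E : Finset α) (a b : α → ℝ) :
    percExp p E (fun s => (∏ e ∈ s, a e) * ∏ e ∈ E \ s, b e)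
      = ∏ e ∈ E, (p * a e + (1 - p) * b e) := by
  rw [Finset.prod_add]
  refine Finset.sum_congr rfl fun s hs => ?_
  rw [Finset.prod_mul_distrib, Finset.prod_mul_distrib, Finset.prod_const, Finset.prod_const,
    Finset.card_sdiff_of_subset (Finset.mem_powerset.1 hs)]
  ring

lemma percExp_const (p : ℝ) (E : Finset α) (c : ℝ) : percExp p E (fun _ => c) = c := by
  have h := percExp_prod p E (fun _ => 1) (fun _ => 1)
  simp only [Finset.prod_const_one, mul_one, add_sub_cancel] at h
  have h2 := percExp_const_mul p E c (fun _ => 1)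
  rw [h] at h2
  simpa using h2

/-- Probability of a cylinder event. -/
lemma percExp_cylinder (p : ℝ) {E F I : Finset α} (hF : F ⊆ E) (hI : I ⊆ F) :
    percExp p E (fun s => if s ∩ F = I then 1 else 0)
      = p ^ I.card * (1 - p) ^ (F.card - I.card) := by
  have h := percExp_prod p E (fun e => if e ∈ F \ I then 0 else 1)
    (fun e => if e ∈ I then 0 else 1)
  have h2 : ∏ e ∈ E, (p * (if e ∈ F \ I then (0 : ℝ) else 1)
      + (1 - p) * (if e ∈ I then 0 else 1))
      = p ^ I.card * (1 - p) ^ (F.card - I.card) := by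
    have h3 : ∀ e ∈ E, (p * (if e ∈ F \ I then (0 : ℝ) else 1)
      + (1 - p) * (if e ∈ I then 0 else 1))
      = (if e ∈ I then p else 1) * (if e ∈ F \ I then 1 - p else 1) := by
      intro e _
      by_cases h1 : e ∈ I <;> by_cases h2 : e ∈ F <;> simp [h1, h2]
    rw [Finset.prod_congr rfl h3, Finset.prod_mul_distrib, Finset.prod_ite_mem,
      Finset.prod_ite_mem, Finset.prod_const, Finset.prod_const,
      Finset.inter_eq_right.2 (hI.trans hF),
      Finset.inter_eq_right.2 (Finset.sdiff_subset.trans hF), Finset.card_sdiff_of_subset hI]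
  rw [← h2, ← h]
  refine percExp_congr fun s hs => ?_
  split_ifs with hc
  · rw [Finset.prod_eq_one, Finset.prod_eq_one, mul_one]
    · intro e he
      have : e ∉ I := by
        rw [← hc]; simp at he ⊢; tauto
      simp [this]
    · intro e he
      have : e ∉ F \ I := by
        rw [← hc]; simp; tauto
      simp only [this, if_false]
  · symm
    have : ∃ e, (e ∈ s ∧ e ∈ F \ I) ∨ (e ∈ I ∧ e ∉ s) := by
      by_contra! hcon
      apply hc
      ext e
      have := hcon e
      have h4 : e ∈ I → e ∈ F := fun h => hI h
      simp only [Finset.mem_inter, Finset.mem_sdiff] at this ⊢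
      tauto
    obtain ⟨e, ⟨h1, h2⟩ | ⟨h1, h2⟩⟩ := this
    · rw [Finset.prod_eq_zero h1 (by simp only [h2, if_true]), zero_mul]
    · rw [Finset.prod_eq_zero (i := e) (s := E \ s) (by simp [h2, hF (hI h1)]) (by simp [h1]),
        mul_zero]

lemma percExp_subset (p : ℝ) {E F : Finset α} (hF : F ⊆ E) :
    percExp p E (fun s => if F ⊆ s then 1 else 0) = p ^ F.card := by
  have h := percExp_cylinder p hF (subset_refl F)
  simpa only [Finset.inter_eq_right, Nat.sub_self, pow_zero, mul_one] using h

/-- Two independent rounds of percolation. -/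
lemma percExp_union {p p₁ p₂ : ℝ} (hp : 1 - p = (1 - p₁) * (1 - p₂)) (E : Finset α)
    (f : Finset α → ℝ) :
    percExp p E f = percExp p₁ E (fun s => percExp p₂ E (fun t => f (s ∪ t))) := by
  have hp' : p = 1 - (1 - p₁) * (1 - p₂) := by linarith
  induction E using Finset.induction_on generalizing f with
  | empty => simp [percExp_empty]
  | insert e E he ih =>
    rw [percExp_insert p he, percExp_insert p₁ he, ih, ih]
    simp only [percExp_insert p₂ he, Finset.union_insert, Finset.insert_union,
      Finset.insert_idem, percExp_add, percExp_const_mul]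
    rw [hp']
    ring

lemma exp_two_point_le {p x y K : ℝ} (h0 : 0 ≤ p) (h1 : p ≤ 1) (hK : K ≤ 1)
    (hxy : |x - y| ≤ K) :
    (1 - p) * Real.exp x + p * Real.exp y ≤ Real.exp ((1 - p) * x + p * y + K ^ 2) := by
  set m := (1 - p) * x + p * y with hm
  have hx : |x - m| ≤ K := by
    have : x - m = p * (x - y) := by rw [hm]; ring
    rw [this, abs_mul, abs_of_nonneg h0]
    nlinarith [abs_nonneg (x - y)]
  have hy : |y - m| ≤ K := by
    have : y - m = -((1 - p) * (x - y)) := by rw [hm]; ring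
    rw [this, abs_neg, abs_mul, abs_of_nonneg (by linarith : 0 ≤ 1 - p)]
    nlinarith [abs_nonneg (x - y)]
  have key : ∀ z, |z| ≤ K → Real.exp z ≤ 1 + z + K ^ 2 := by
    intro z hz
    have h := Real.abs_exp_sub_one_sub_id_le (hz.trans hK)
    have h2 : z ^ 2 ≤ K ^ 2 := by
      rw [← sq_abs z]; gcongr
    linarith [(abs_le.1 h).2]
  have e1 : Real.exp x = Real.exp m * Real.exp (x - m) := by rw [← Real.exp_add]; ring_nf
  have e2 : Real.exp y = Real.exp m * Real.exp (y - m) := by rw [← Real.exp_add]; ring_nf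
  have e3 : (1 - p) * Real.exp (x - m) + p * Real.exp (y - m) ≤ Real.exp (K ^ 2) := by
    have a1 := mul_le_mul_of_nonneg_left (key _ hx) (by linarith : 0 ≤ 1 - p)
    have a2 := mul_le_mul_of_nonneg_left (key _ hy) h0
    have a3 := Real.add_one_le_exp (K ^ 2)
    have a4 : (1 - p) * (1 + (x - m) + K ^ 2) + p * (1 + (y - m) + K ^ 2) = 1 + K ^ 2 := by
      rw [hm]; ring
    linarith
  rw [Real.exp_add, e1, e2]
  nlinarith [Real.exp_pos m]

/-- Bounded-difference estimate for the moment generating function. -/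
lemma percExp_exp_le {p : ℝ} (h0 : 0 ≤ p) (h1 : p ≤ 1) (E : Finset α) (f : Finset α → ℝ)
    {K : ℝ} (hK : K ≤ 1) (hf : ∀ e s, |f (insert e s) - f s| ≤ K) :
    percExp p E (fun s => Real.exp (f s)) ≤ Real.exp (percExp p E f + E.card * K ^ 2) := by
  induction E using Finset.induction_on generalizing f with
  | empty => simp [percExp_empty]
  | insert e E he ih =>
    rw [percExp_insert p he, percExp_insert p he, Finset.card_insert_of_notMem he]
    have i1 := ih f hf
    have i2 := ih (fun s => f (insert e s)) (fun e' s => by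
      rw [Finset.insert_comm]; exact hf _ _)
    set A := percExp p E f
    set B := percExp p E (fun s => f (insert e s))
    have hAB : |A - B| ≤ K := by
      rw [← percExp_sub, abs_le]
      constructor
      · rw [← percExp_const p E (-K)]
        exact percExp_mono h0 h1 fun s _ => by linarith [(abs_le.1 (hf e s)).2]
      · rw [← percExp_const p E K]
        exact percExp_mono h0 h1 fun s _ => by linarith [(abs_le.1 (hf e s)).1]
    have h2 := exp_two_point_le h0 h1 hK hAB
    calc _ ≤ (1 - p) * Real.exp (A + E.card * K ^ 2) + p * Real.exp (B + E.card * K ^ 2) := by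
          gcongr
      _ = ((1 - p) * Real.exp A + p * Real.exp B) * Real.exp (E.card * K ^ 2) := by
          rw [Real.exp_add, Real.exp_add]; ring
      _ ≤ Real.exp ((1 - p) * A + p * B + K ^ 2) * Real.exp (E.card * K ^ 2) := by gcongr
      _ = _ := by rw [← Real.exp_add]; push_cast; ring_nf

end Expectation

section Clusters

/-- The cluster of `v` in the configuration with open edges `s`. -/
noncomputable def cluster (s : Finset (Sym2 V)) (v : V) : Finset V :=
  Finset.univ.filter (fun x => (SimpleGraph.fromEdgeSet (↑s : Set (Sym2 V))).Reachable v x)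

lemma mem_cluster {s : Finset (Sym2 V)} {v x : V} :
    x ∈ cluster s v ↔ (SimpleGraph.fromEdgeSet (↑s : Set (Sym2 V))).Reachable v x := by
  simp [cluster]

lemma self_mem_cluster (s : Finset (Sym2 V)) (v : V) : v ∈ cluster s v :=
  mem_cluster.2 (SimpleGraph.Reachable.refl _)

/-- A set closed under adjacency is closed under reachability. -/
lemma reachable_closed {K : SimpleGraph V} {C : Set V}
    (hC : ∀ x y, K.Adj x y → x ∈ C → y ∈ C) {a b : V} (h : K.Reachable a b) (ha : a ∈ C) :
    b ∈ C := by
  obtain ⟨w⟩ := h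
  induction w with
  | nil => exact ha
  | cons hadj _ ih => exact ih (hC _ _ hadj ha)

lemma cluster_eq_of_mem {s : Finset (Sym2 V)} {v x : V} (h : x ∈ cluster s v) :
    cluster s x = cluster s v := by
  ext y
  rw [mem_cluster] at h
  rw [mem_cluster, mem_cluster]
  exact ⟨fun h' => h.trans h', fun h' => h.symm.trans h'⟩

lemma mem_cluster_comm {s : Finset (Sym2 V)} {v x : V} : x ∈ cluster s v ↔ v ∈ cluster s x := by
  rw [mem_cluster, mem_cluster, SimpleGraph.reachable_comm]

lemma mem_cluster_of_adj {s : Finset (Sym2 V)} {v x y : V} (hx : x ∈ cluster s v)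
    (hxy : (SimpleGraph.fromEdgeSet (↑s : Set (Sym2 V))).Adj x y) : y ∈ cluster s v :=
  mem_cluster.2 ((mem_cluster.1 hx).trans hxy.reachable)

lemma cluster_mono {s t : Finset (Sym2 V)} (h : s ⊆ t) (v : V) : cluster s v ⊆ cluster t v := by
  intro x hx
  rw [mem_cluster] at *
  exact hx.mono (SimpleGraph.fromEdgeSet_mono (by exact_mod_cast h))

/-- Edges of `G` with at least one endpoint in `S`. -/
noncomputable def edgesTouching (G : SimpleGraph V) (S : Finset V) : Finset (Sym2 V) :=
  (edgeFinset' G).filter (fun e => ∃ x ∈ e, x ∈ S)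

/-- Edges of `G` with both endpoints in `S`. -/
noncomputable def edgesInside (G : SimpleGraph V) (S : Finset V) : Finset (Sym2 V) :=
  (edgeFinset' G).filter (fun e => ∀ x ∈ e, x ∈ S)

lemma mk_mem_edgeFinset' {G : SimpleGraph V} {x y : V} : s(x, y) ∈ edgeFinset' G ↔ G.Adj x y := by
  simp [edgeFinset']

lemma edgesInside_subset_edgesTouching (G : SimpleGraph V) (S : Finset V) :
    edgesInside G S ⊆ edgesTouching G S := by
  intro e he
  simp only [edgesInside, edgesTouching, Finset.mem_filter] at *
  refine ⟨he.1, ?_⟩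
  induction e with
  | h x y => exact ⟨x, by simp, he.2 x (by simp)⟩

lemma fromEdgeSet_le {G : SimpleGraph V} {s : Finset (Sym2 V)} (hs : s ⊆ edgeFinset' G) :
    SimpleGraph.fromEdgeSet (↑s : Set (Sym2 V)) ≤ G := by
  intro x y h
  rw [SimpleGraph.fromEdgeSet_adj] at h
  exact mk_mem_edgeFinset'.1 (hs (by exact_mod_cast h.1))

lemma cluster_eq_of_inter_eq {G : SimpleGraph V} {s s₀ : Finset (Sym2 V)} {v : V}
    (hs : s ⊆ edgeFinset' G) (hs₀ : s₀ ⊆ edgeFinset' G)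
    (h : s ∩ edgesTouching G (cluster s₀ v) = s₀ ∩ edgesTouching G (cluster s₀ v)) :
    cluster s v = cluster s₀ v := by
  have key : ∀ e ∈ edgeFinset' G, (∃ x ∈ e, x ∈ cluster s₀ v) → (e ∈ s ↔ e ∈ s₀) := by
    intro e he hx
    have h1 : e ∈ edgesTouching G (cluster s₀ v) := by
      simp only [edgesTouching, Finset.mem_filter]; exact ⟨he, hx⟩
    have := Finset.ext_iff.1 h e
    simpa [h1] using this
  apply Finset.Subset.antisymm
  · intro x hx
    refine reachable_closed (C := ↑(cluster s₀ v)) ?_ (mem_cluster.1 hx) (self_mem_cluster _ _)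
    intro x y hxy hx
    refine mem_cluster_of_adj hx ?_
    rw [SimpleGraph.fromEdgeSet_adj] at *
    exact ⟨(key _ (hs hxy.1) ⟨x, by simp, hx⟩).1 hxy.1, hxy.2⟩
  · intro x hx
    refine (reachable_closed (C := ↑(cluster s₀ v) ∩ ↑(cluster s v)) ?_ (mem_cluster.1 hx)
      ⟨self_mem_cluster _ _, self_mem_cluster _ _⟩).2
    rintro x y hxy ⟨hx, hx'⟩
    refine ⟨mem_cluster_of_adj hx hxy, mem_cluster_of_adj hx' ?_⟩
    rw [SimpleGraph.fromEdgeSet_adj] at *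
    exact ⟨(key _ (hs₀ hxy.1) ⟨x, by simp, hx⟩).2 hxy.1, hxy.2⟩

/-- Below the girth, the clusters are induced subgraphs. -/
lemma inter_edgesTouching_cluster {G : SimpleGraph V} {s : Finset (Sym2 V)} {v : V}
    (hs : s ⊆ edgeFinset' G) (hg : (cluster s v).card < G.girth) :
    s ∩ edgesTouching G (cluster s v) = edgesInside G (cluster s v) := by
  ext e
  induction e with
  | h x y =>
  simp only [edgesTouching, edgesInside, Finset.mem_inter, Finset.mem_filter, Sym2.mem_iff,
    exists_eq_or_imp, exists_eq_left, forall_eq_or_imp, forall_eq]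
  constructor
  · rintro ⟨h1, h2, h3⟩
    have hadj : (SimpleGraph.fromEdgeSet (↑s : Set (Sym2 V))).Adj x y := by
      rw [SimpleGraph.fromEdgeSet_adj]
      exact ⟨h1, (mk_mem_edgeFinset'.1 h2).ne⟩
    refine ⟨h2, ?_⟩
    rcases h3 with h3 | h3
    · exact ⟨h3, mem_cluster_of_adj h3 hadj⟩
    · exact ⟨mem_cluster_of_adj h3 hadj.symm, h3⟩
  · rintro ⟨h1, hx, hy⟩
    refine ⟨?_, h1, Or.inl hx⟩
    by_contra hxy
    have hr : (SimpleGraph.fromEdgeSet (↑s : Set (Sym2 V))).Reachable y x :=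
      (mem_cluster.1 hy).symm.trans (mem_cluster.1 hx)
    obtain ⟨w, hw⟩ := hr.exists_isPath
    have hle := fromEdgeSet_le hs
    have hmem : s(x, y) ∉ (w.mapLe hle).edges := by
      rw [SimpleGraph.Walk.edges_mapLe_eq_edges]
      intro h
      have := w.edges_subset_edgeSet h
      rw [SimpleGraph.edgeSet_fromEdgeSet] at this
      exact hxy this.1
    have hc := SimpleGraph.Path.cons_isCycle (⟨w.mapLe hle, hw.mapLe hle⟩ : G.Path y x)
      (mk_mem_edgeFinset'.1 h1) hmem
    have h2 := SimpleGraph.girth_le_length hc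
    simp only [SimpleGraph.Walk.length_cons, SimpleGraph.Walk.length_map,
      SimpleGraph.Walk.mapLe] at h2
    have h3 : w.support.toFinset ⊆ cluster s v := by
      intro z hz
      rw [List.mem_toFinset] at hz
      rw [mem_cluster]
      exact (mem_cluster.1 hy).trans (w.takeUntil z hz).reachable
    have h4 := Finset.card_le_card h3
    rw [List.toFinset_card_of_nodup hw.support_nodup, SimpleGraph.Walk.length_support] at h4
    omega

lemma induce_cluster_connected (s : Finset (Sym2 V)) (v : V) :
    ((SimpleGraph.fromEdgeSet (↑s : Set (Sym2 V))).induce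
      (↑(cluster s v) : Set V)).Connected := by
  refine SimpleGraph.induce_connected_of_patches v (self_mem_cluster s v) fun {x} hx => ?_
  obtain ⟨w⟩ := mem_cluster.1 (Finset.mem_coe.1 hx)
  refine ⟨{z | z ∈ w.support}, ?_, by simp, by simp, (w.connected_induce_support).preconnected _ _⟩
  intro z hz
  exact mem_cluster.2 (w.takeUntil z hz).reachable

lemma card_edgesInside_add_one {G : SimpleGraph V} {S : Finset V}
    (hc : (G.induce (↑S : Set V)).Connected) (hg : S.card < G.girth) :
    (edgesInside G S).card + 1 = S.card := by
  have hac : (G.induce (↑S : Set V)).IsAcyclic := by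
    intro a w hw
    have h1 := hw.map (f := (SimpleGraph.Embedding.induce (G := G) (↑S : Set V)).toHom)
      Subtype.val_injective
    have h2 := SimpleGraph.girth_le_length h1
    rw [SimpleGraph.Walk.length_map] at h2
    have h3 : w.length ≤ Fintype.card (↑S : Set V) := by
      have := hw.support_nodup.length_le_card
      simpa using this
    simp at h3
    omega
  have ht : (G.induce (↑S : Set V)).IsTree := ⟨hc, hac⟩
  have := ht.card_edgeFinset
  rw [← Nat.card_eq_fintype_card] at this
  simp only [SetLike.coe_sort_coe, Nat.card_eq_fintype_card, Fintype.card_coe] at this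
  rw [← this]
  congr 1
  symm
  refine Finset.card_bij (fun e _ => e.map Subtype.val) ?_ ?_ ?_
  · intro e he
    induction e with
    | h x y =>
    simp only [SimpleGraph.mem_edgeFinset, SimpleGraph.mem_edgeSet, SimpleGraph.comap_adj] at he
    simp only [Sym2.map_mk, edgesInside, Finset.mem_filter, mk_mem_edgeFinset']
    refine ⟨he, fun z hz => ?_⟩
    rcases Sym2.mem_iff.1 hz with rfl | rfl
    · exact x.2
    · exact y.2
  · intro a _ b _ h
    exact Sym2.map.injective Subtype.val_injective h
  · intro e he
    induction e with
    | h x y =>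
    simp only [edgesInside, Finset.mem_filter, mk_mem_edgeFinset'] at he
    refine ⟨s(⟨x, he.2 x (by simp)⟩, ⟨y, he.2 y (by simp)⟩), ?_, by simp⟩
    simpa using he.1

lemma sum_card_filter_adj_inside (G : SimpleGraph V) (S : Finset V) :
    ((S ×ˢ S).filter (fun q => G.Adj q.1 q.2)).card = 2 * (edgesInside G S).card := by
  have : ((S ×ˢ S).filter (fun q => G.Adj q.1 q.2)).card
      = ∑ e ∈ edgesInside G S, 2 := by
    rw [Finset.card_eq_sum_card_fiberwise (f := fun q : V × V => s(q.1, q.2))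
      (t := edgesInside G S)]
    · refine Finset.sum_congr rfl fun e he => ?_
      induction e with
      | h x y =>
      simp only [edgesInside, Finset.mem_filter, mk_mem_edgeFinset'] at he
      have hx := he.2 x (by simp)
      have hy := he.2 y (by simp)
      rw [Finset.filter_filter]
      have h2 : (S ×ˢ S).filter (fun q => G.Adj q.1 q.2 ∧ s(q.1, q.2) = s(x, y))
          = {(x, y), (y, x)} := by
        ext ⟨a, b⟩
        simp only [Finset.mem_filter, Finset.mem_product, Sym2.eq_iff, Finset.mem_insert,
          Finset.mem_singleton, Prod.mk.injEq]
        constructor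
        · tauto
        · rintro (⟨rfl, rfl⟩ | ⟨rfl, rfl⟩)
          · exact ⟨⟨hx, hy⟩, he.1, by simp⟩
          · exact ⟨⟨hy, hx⟩, he.1.symm, by simp⟩
      rw [h2, Finset.card_pair]
      simp [he.1.ne]
    · rintro ⟨a, b⟩ h
      simp only [Finset.coe_filter, Finset.mem_product, Set.mem_ofPred_eq] at h
      simp only [edgesInside, Finset.coe_filter, Set.mem_ofPred_eq, mk_mem_edgeFinset']
      refine ⟨h.2, fun z hz => ?_⟩
      rcases Sym2.mem_iff.1 hz with rfl | rfl
      exacts [h.1.1, h.1.2]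
  rw [this]; simp [mul_comm]

lemma card_edgesTouching {G : SimpleGraph V} {d : ℕ} (hd : ∀ x, (G.neighborSet x).ncard = d)
    (S : Finset V) :
    2 * (edgesInside G S).card + ((edgesTouching G S).card - (edgesInside G S).card)
      = d * S.card := by
  rw [← Finset.card_sdiff_of_subset (edgesInside_subset_edgesTouching G S),
    ← sum_card_filter_adj_inside]
  have h1 : (edgesTouching G S \ edgesInside G S).card
      = ((S ×ˢ Sᶜ).filter (fun q => G.Adj q.1 q.2)).card := by
    symm
    refine Finset.card_bij (fun q _ => s(q.1, q.2)) ?_ ?_ ?_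
    · rintro ⟨a, b⟩ h
      simp only [Finset.mem_filter, Finset.mem_product, Finset.mem_compl] at h
      simp only [edgesTouching, edgesInside, Finset.mem_sdiff, Finset.mem_filter,
        mk_mem_edgeFinset']
      refine ⟨⟨h.2, a, by simp, h.1.1⟩, fun h' => h.1.2 (h'.2 b (by simp))⟩
    · rintro ⟨a, b⟩ h ⟨a', b'⟩ h' heq
      simp only [Finset.mem_filter, Finset.mem_product, Finset.mem_compl] at h h'
      simp only [Sym2.eq_iff] at heq
      rcases heq with ⟨rfl, rfl⟩ | ⟨rfl, rfl⟩
      · rfl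
      · exact absurd h.1.1 h'.1.2
    · intro e he
      induction e with
      | h x y =>
      simp only [edgesTouching, edgesInside, Finset.mem_sdiff, Finset.mem_filter,
        mk_mem_edgeFinset', Sym2.mem_iff, exists_eq_or_imp, exists_eq_left, forall_eq_or_imp,
        forall_eq] at he
      obtain ⟨⟨h1, h2⟩, h3⟩ := he
      by_cases hx : x ∈ S
      · refine ⟨(x, y), ?_, rfl⟩
        simp only [Finset.mem_filter, Finset.mem_product, Finset.mem_compl]
        exact ⟨⟨hx, fun hy => h3 ⟨h1, hx, hy⟩⟩, h1⟩
      · refine ⟨(y, x), ?_, Sym2.eq_swap⟩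
        simp only [Finset.mem_filter, Finset.mem_product, Finset.mem_compl]
        exact ⟨⟨h2.resolve_left hx, hx⟩, h1.symm⟩
  rw [h1, ← Finset.card_union_of_disjoint, ← Finset.filter_union, ← Finset.product_union,
    Finset.union_compl, Finset.card_filter, Finset.sum_product]
  · have : ∀ x ∈ S, ∑ y : V, (if G.Adj x y then 1 else 0) = d := by
      intro x _
      rw [← Finset.card_filter, ← hd x, Set.ncard_eq_toFinset_card']
      congr 1
      ext y; simp
    rw [Finset.sum_congr rfl this]
    simp [mul_comm]
  · refine Finset.disjoint_filter_filter ?_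
    rw [Finset.disjoint_left]
    rintro ⟨a, b⟩ h h'
    simp only [Finset.mem_product, Finset.mem_compl] at h h'
    exact h'.2 h.2

end Clusters

section LargeClusters

lemma card_edgeFinset'_le {G : SimpleGraph V} {d : ℕ} (hd : ∀ x, (G.neighborSet x).ncard = d) :
    (edgeFinset' G).card ≤ d * Fintype.card V := by
  have h := card_edgesTouching hd Finset.univ
  have h2 : edgesInside G Finset.univ = edgeFinset' G := by
    simp [edgesInside]
  rw [h2, Finset.card_univ] at h
  omega

/-- Comparison of tree-cluster weights at `p` with those at the critical value `1 / (d - 1)`. -/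
lemma tree_weight_le {d : ℕ} (hd : 3 ≤ d) {p q : ℝ} (hq : q = 1 / ((d : ℝ) - 1)) (hqp : q < p)
    (hp1 : p < 1) {m i j : ℕ} (hi : i + 1 = m) (hj : 2 * i + j = d * m) :
    p ^ i * (1 - p) ^ j ≤ (1 - p) / (1 - q) * (q ^ i * (1 - q) ^ j) := by
  have hd' : (3 : ℝ) ≤ d := by exact_mod_cast hd
  have hq0 : 0 < q := by rw [hq]; apply one_div_pos.2; linarith
  have hq1 : 0 < 1 - q := by linarith
  set a := p / q with ha
  set c := (1 - p) / (1 - q) with hc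
  have ha0 : 0 < a := div_pos (by linarith) hq0
  have hc0 : 0 < c := div_pos (by linarith) hq1
  have hc1 : c ≤ 1 := by rw [hc, div_le_one hq1]; linarith
  have hac : a * c ^ (d - 2) ≤ 1 := by
    have h1 : a ≤ Real.exp (a - 1) := by linarith [Real.add_one_le_exp (a - 1)]
    have h2 : c ≤ Real.exp (c - 1) := by linarith [Real.add_one_le_exp (c - 1)]
    calc a * c ^ (d - 2) ≤ Real.exp (a - 1) * Real.exp (c - 1) ^ (d - 2) := by gcongr
      _ = Real.exp ((a - 1) + (d - 2 : ℕ) * (c - 1)) := by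
          rw [Real.exp_add, Real.exp_nat_mul]
      _ = Real.exp 0 := by
          congr 1
          rw [Nat.cast_sub (by omega), ha, hc, hq]
          have h3 : (d : ℝ) - 1 ≠ 0 := by linarith
          have h4 : (d : ℝ) - 2 ≠ 0 := by linarith
          have h5 : 1 - 1 / ((d : ℝ) - 1) = (d - 2) / (d - 1) := by field_simp; ring
          rw [h5]
          field_simp
          push_cast
          ring
      _ = 1 := Real.exp_zero
  obtain ⟨r, rfl⟩ : ∃ r, d = r + 2 := ⟨d - 2, by omega⟩
  have hj' : j = r * i + (r + 2) := by subst hi; nlinarith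
  have h1 : a ^ i * c ^ j ≤ c := by
    have : a ^ i * c ^ j = (a * c ^ r) ^ i * (c * c ^ (r + 1)) := by
      rw [hj', pow_add, pow_mul, mul_pow]; ring
    rw [this]
    calc _ ≤ 1 * (c * 1) := by
          gcongr
          · exact pow_le_one₀ (by positivity) hac
          · exact pow_le_one₀ hc0.le hc1
      _ = c := by ring
  have e1 : p ^ i = a ^ i * q ^ i := by rw [← mul_pow, ha, div_mul_cancel₀ _ hq0.ne']
  have e2 : (1 - p) ^ j = c ^ j * (1 - q) ^ j := by
    rw [← mul_pow, hc, div_mul_cancel₀ _ hq1.ne']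
  rw [e1, e2]
  calc _ = a ^ i * c ^ j * (q ^ i * (1 - q) ^ j) := by ring
    _ ≤ _ := by gcongr

lemma percExp_cluster_eq_le {G : SimpleGraph V} {d : ℕ} (hd : 3 ≤ d)
    (hreg : ∀ x, (G.neighborSet x).ncard = d) {p q : ℝ} (hq : q = 1 / ((d : ℝ) - 1))
    (hqp : q < p) (hp1 : p < 1) (v : V) {S : Finset V} (hS : S.card < G.girth) :
    percExp p (edgeFinset' G) (fun s => if cluster s v = S then 1 else 0)
      ≤ (1 - p) / (1 - q) *
        percExp q (edgeFinset' G) (fun s => if cluster s v = S then 1 else 0) := by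
  by_cases h : ∃ s₀ ⊆ edgeFinset' G, cluster s₀ v = S
  · obtain ⟨s₀, hs₀, rfl⟩ := h
    have key : ∀ r : ℝ, percExp r (edgeFinset' G)
        (fun s => if cluster s v = cluster s₀ v then 1 else 0)
        = r ^ (edgesInside G (cluster s₀ v)).card * (1 - r) ^
          ((edgesTouching G (cluster s₀ v)).card - (edgesInside G (cluster s₀ v)).card) := by
      intro r
      have hsub : edgesTouching G (cluster s₀ v) ⊆ edgeFinset' G := Finset.filter_subset _ _
      rw [← percExp_cylinder r hsub
        (edgesInside_subset_edgesTouching G (cluster s₀ v))]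
      refine percExp_congr fun s hs => ?_
      have : cluster s v = cluster s₀ v ↔
          s ∩ edgesTouching G (cluster s₀ v) = edgesInside G (cluster s₀ v) := by
        constructor
        · intro h
          rw [← h]
          exact inter_edgesTouching_cluster hs (h ▸ hS)
        · intro h
          exact cluster_eq_of_inter_eq hs hs₀ (h.trans (inter_edgesTouching_cluster hs₀ hS).symm)
      by_cases hc : cluster s v = cluster s₀ v
      · rw [if_pos hc]
        exact (if_pos (this.1 hc)).symm
      · rw [if_neg hc]
        exact (if_neg (fun h => hc (this.2 h))).symm
    rw [key, key]
    refine tree_weight_le hd hq hqp hp1 (m := (cluster s₀ v).card) ?_ (card_edgesTouching hreg _)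
    refine card_edgesInside_add_one ?_ hS
    exact (induce_cluster_connected s₀ v).mono (SimpleGraph.comap_monotone _ (fromEdgeSet_le hs₀))
  · have key : ∀ r : ℝ, percExp r (edgeFinset' G)
        (fun s => if cluster s v = S then 1 else 0) = 0 := by
      intro r
      refine (percExp_congr fun s hs => ?_).trans (percExp_const r (edgeFinset' G) 0)
      exact if_neg fun hc => h ⟨s, hs, hc⟩
    rw [key, key, mul_zero]

/-- Above the critical probability, a vertex lies in a small cluster with probability bounded
away from `1`. -/
lemma percExp_small_cluster_le {G : SimpleGraph V} {d : ℕ} (hd : 3 ≤ d)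
    (hreg : ∀ x, (G.neighborSet x).ncard = d) {p q : ℝ} (hq : q = 1 / ((d : ℝ) - 1))
    (hqp : q < p) (hp1 : p < 1) (v : V) {k : ℕ} (hk : k ≤ G.girth) :
    percExp p (edgeFinset' G) (fun s => if (cluster s v).card < k then 1 else 0)
      ≤ (1 - p) / (1 - q) := by
  have hd' : (3 : ℝ) ≤ d := by exact_mod_cast hd
  have hq0 : 0 < q := by rw [hq]; apply one_div_pos.2; linarith
  have key : ∀ r : ℝ, percExp r (edgeFinset' G)
      (fun s => if (cluster s v).card < k then 1 else 0)
      = ∑ S ∈ Finset.univ.filter (fun S : Finset V => S.card < k),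
        percExp r (edgeFinset' G) (fun s => if cluster s v = S then 1 else 0) := by
    intro r
    rw [← percExp_sum]
    refine percExp_congr fun s _ => ?_
    rw [Finset.sum_ite_eq]
    simp
  have hle : percExp q (edgeFinset' G) (fun s => if (cluster s v).card < k then 1 else 0) ≤ 1 := by
    refine (percExp_mono hq0.le (by linarith) fun s _ => ?_).trans_eq
      (percExp_const q (edgeFinset' G) 1)
    split_ifs <;> norm_num
  calc _ ≤ (1 - p) / (1 - q) *
        percExp q (edgeFinset' G) (fun s => if (cluster s v).card < k then 1 else 0) := by
        rw [key, key, Finset.mul_sum]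
        refine Finset.sum_le_sum fun S hS => percExp_cluster_eq_le hd hreg hq hqp hp1 v ?_
        simp only [Finset.mem_filter] at hS
        omega
    _ ≤ (1 - p) / (1 - q) * 1 := by
        gcongr
        apply div_nonneg <;> linarith
    _ = _ := mul_one _

/-- The vertices lying in clusters with at least `k` vertices. -/
noncomputable def largeVerts (k : ℕ) (s : Finset (Sym2 V)) : Finset V :=
  Finset.univ.filter (fun v => k ≤ (cluster s v).card)

lemma cluster_insert_subset {s : Finset (Sym2 V)} {x y v : V} (hx : v ∉ cluster s x)
    (hy : v ∉ cluster s y) : cluster (insert s(x, y) s) v ⊆ cluster s v := by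
  intro z hz
  refine reachable_closed (C := ↑(cluster s v)) ?_ (mem_cluster.1 hz) (self_mem_cluster _ _)
  intro a b hab ha
  rw [SimpleGraph.fromEdgeSet_adj] at hab
  have h1 := hab.1
  simp only [Finset.coe_insert, Set.mem_insert_iff, Sym2.eq_iff] at h1
  rcases h1 with (⟨rfl, rfl⟩ | ⟨rfl, rfl⟩) | h1
  · exact absurd (mem_cluster_comm.1 ha) hx
  · exact absurd (mem_cluster_comm.1 ha) hy
  · exact mem_cluster_of_adj ha ((SimpleGraph.fromEdgeSet_adj _).2 ⟨h1, hab.2⟩)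

lemma card_largeVerts_insert (k : ℕ) (e : Sym2 V) (s : Finset (Sym2 V)) :
    |((largeVerts k (insert e s)).card : ℝ) - (largeVerts k s).card| ≤ 2 * k := by
  induction e with
  | h x y =>
  have h1 : largeVerts k s ⊆ largeVerts k (insert s(x, y) s) := by
    intro v hv
    simp only [largeVerts, Finset.mem_filter, Finset.mem_univ, true_and] at *
    exact hv.trans (Finset.card_le_card (cluster_mono (Finset.subset_insert _ _) v))
  set T : V → Finset V := fun x => if (cluster s x).card < k then cluster s x else ∅ with hT
  have hTc : ∀ x, (T x).card ≤ k := by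
    intro x
    simp only [hT]
    split_ifs with h
    · exact h.le
    · simp
  have h2 : largeVerts k (insert s(x, y) s) ⊆ largeVerts k s ∪ (T x ∪ T y) := by
    intro v hv
    by_cases hvs : v ∈ largeVerts k s
    · exact Finset.mem_union_left _ hvs
    apply Finset.mem_union_right
    simp only [largeVerts, Finset.mem_filter, Finset.mem_univ, true_and, not_le] at hv hvs
    by_contra hcon
    rw [Finset.mem_union, not_or] at hcon
    have key : ∀ z, v ∉ T z → v ∉ cluster s z := by
      intro z hz hvz
      apply hz
      simp only [hT]
      rw [if_pos, ← cluster_eq_of_mem hvz]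
      · exact self_mem_cluster _ _
      · rw [← cluster_eq_of_mem hvz]; exact hvs
    have := Finset.card_le_card (cluster_insert_subset (key x hcon.1) (key y hcon.2))
    omega
  have h3 := Finset.card_le_card h1
  have h4 := (Finset.card_le_card h2).trans (Finset.card_union_le _ _)
  have h5 := Finset.card_union_le (T x) (T y)
  have h6 := hTc x
  have h7 := hTc y
  have h8 : (largeVerts k (insert s(x, y) s)).card ≤ (largeVerts k s).card + 2 * k := by omega
  rw [abs_le]
  constructor
  · have : ((largeVerts k s).card : ℝ) ≤ (largeVerts k (insert s(x, y) s)).card := by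
      exact_mod_cast h3
    have : (0 : ℝ) ≤ k := Nat.cast_nonneg k
    linarith
  · have : ((largeVerts k (insert s(x, y) s)).card : ℝ) ≤ (largeVerts k s).card + 2 * k := by
      exact_mod_cast h8
    linarith

/-- With exponentially high probability, linearly many vertices lie in large clusters. -/
lemma percExp_largeVerts_le {G : SimpleGraph V} {d : ℕ} (hd : 3 ≤ d)
    (hreg : ∀ x, (G.neighborSet x).ncard = d) {p q η : ℝ} (hq : q = 1 / ((d : ℝ) - 1))
    (hqp : q < p) (hp1 : p < 1) (hη : η = 1 - (1 - p) / (1 - q)) {k : ℕ} (hk1 : 1 ≤ k)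
    (hk : k ≤ G.girth) :
    percExp p (edgeFinset' G)
      (fun s => if ((largeVerts k s).card : ℝ) < η / 2 * Fintype.card V then 1 else 0)
      ≤ Real.exp (-(η ^ 2 / (64 * d * k ^ 2)) * Fintype.card V) := by
  have hd' : (3 : ℝ) ≤ d := by exact_mod_cast hd
  have hk' : (1 : ℝ) ≤ k := by exact_mod_cast hk1
  have hq0 : 0 < q := by rw [hq]; apply one_div_pos.2; linarith
  have hη0 : 0 < η := by rw [hη, sub_pos, div_lt_one (by linarith)]; linarith
  have hη1 : η ≤ 1 := by
    rw [hη]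
    have : 0 ≤ (1 - p) / (1 - q) := div_nonneg (by linarith) (by linarith)
    linarith
  set n : ℝ := ((Fintype.card V : ℕ) : ℝ) with hn
  have hn0 : 0 ≤ n := Nat.cast_nonneg _
  set E := edgeFinset' G
  have hmean : η * n ≤ percExp p E (fun s => ((largeVerts k s).card : ℝ)) := by
    have : ∀ s : Finset (Sym2 V), ((largeVerts k s).card : ℝ)
        = ∑ v : V, (1 - if (cluster s v).card < k then 1 else 0) := by
      intro s
      rw [largeVerts, Finset.card_filter, Nat.cast_sum]
      refine Finset.sum_congr rfl fun v _ => ?_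
      by_cases h : k ≤ (cluster s v).card
      · rw [if_pos h, if_neg (not_lt.2 h)]
        simp
      · rw [if_neg h, if_pos (not_le.1 h)]
        simp
    simp only [this]
    rw [percExp_sum]
    have h2 : ∀ v ∈ (Finset.univ : Finset V),
        η ≤ percExp p E (fun s => 1 - if (cluster s v).card < k then 1 else 0) := by
      intro v _
      rw [percExp_sub, percExp_const]
      have := percExp_small_cluster_le hd hreg hq hqp hp1 v hk
      linarith
    have h3 := Finset.card_nsmul_le_sum _ _ _ h2
    rw [nsmul_eq_mul, Finset.card_univ] at h3
    linarith
  set l : ℝ := η / (16 * d * k ^ 2) with hl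
  have hl0 : 0 ≤ l := by positivity
  have hlk : l * (2 * k) ≤ 1 := by
    rw [hl, div_mul_eq_mul_div, div_le_one (by positivity)]
    nlinarith [mul_nonneg (by linarith : (0:ℝ) ≤ k) (by linarith : (0:ℝ) ≤ 1 - η),
      mul_nonneg (by linarith : (0:ℝ) ≤ k) (by linarith : (0:ℝ) ≤ k - 1),
      mul_nonneg (by linarith : (0:ℝ) ≤ d - 3) (by positivity : (0:ℝ) ≤ k ^ 2)]
  have hmgf := percExp_exp_le (p := p) (by linarith) hp1.le E
    (fun s => l * (η / 2 * n - (largeVerts k s).card)) hlk (by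
      intro e s
      have := card_largeVerts_insert k e s
      rw [← mul_sub, abs_mul, abs_of_nonneg hl0, sub_sub_sub_cancel_left, abs_sub_comm]
      gcongr)
  calc _ ≤ percExp p E (fun s => Real.exp (l * (η / 2 * n - (largeVerts k s).card))) := by
        refine percExp_mono (by linarith) hp1.le fun s _ => ?_
        split_ifs with h
        · exact Real.one_le_exp (mul_nonneg hl0 (by linarith))
        · exact (Real.exp_pos _).le
    _ ≤ _ := hmgf
    _ ≤ _ := by
        apply Real.exp_le_exp.2
        rw [percExp_const_mul, percExp_sub, percExp_const]
        have hE : (E.card : ℝ) ≤ d * n := by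
          rw [hn]; exact_mod_cast card_edgeFinset'_le hreg
        have e1 : l * (η / 2 * n - percExp p E (fun s => ((largeVerts k s).card : ℝ)))
            ≤ l * (η / 2 * n - η * n) := by gcongr
        have e2 : (E.card : ℝ) * (l * (2 * k)) ^ 2 ≤ d * n * (l * (2 * k)) ^ 2 := by gcongr
        have e3 : l * (η / 2 * n - η * n) + d * n * (l * (2 * k)) ^ 2
            = -(η ^ 2 / (64 * d * k ^ 2)) * n := by
          rw [hl]
          field_simp
          ring
        linarith

end LargeClusters

section PathFamily

lemma card_filter_mem_sym2_le (e : Sym2 V) : (Finset.univ.filter (· ∈ e)).card ≤ 2 := by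
  induction e with
  | h x y =>
  have : Finset.univ.filter (· ∈ s(x, y)) ⊆ {x, y} := by
    intro z hz
    simpa using hz
  exact (Finset.card_le_card this).trans Finset.card_le_two

/-- The vertices outside `S` with a neighbour in `S`. -/
def outerNbrs (G : SimpleGraph V) (S : Finset V) : Finset V :=
  Finset.univ.filter (fun x => x ∉ S ∧ ∃ y ∈ S, G.Adj y x)

lemma card_filter_adj_le {G : SimpleGraph V} {d : ℕ} (hd : ∀ x, (G.neighborSet x).ncard ≤ d)
    (x : V) : (Finset.univ.filter (G.Adj x)).card ≤ d := by
  refine le_trans (le_of_eq ?_) (hd x)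
  rw [Set.ncard_eq_toFinset_card']
  congr 1
  ext y
  simp

lemma cutCard_le {G : SimpleGraph V} {d : ℕ} (hd : ∀ x, (G.neighborSet x).ncard ≤ d)
    (S : Finset V) : cutCard G S ≤ d * (outerNbrs G S).card := by
  have hsub : (edgeFinset' G).filter (fun e => ∃ x ∈ S, ∃ y, y ∉ S ∧ e = s(x, y))
      ⊆ (outerNbrs G S).biUnion
        (fun y => (Finset.univ.filter (G.Adj y)).image (fun x => s(x, y))) := by
    intro e he
    rw [Finset.mem_filter] at he
    obtain ⟨he, x, hx, y, hy, rfl⟩ := he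
    have hadj := mk_mem_edgeFinset'.1 he
    rw [Finset.mem_biUnion]
    refine ⟨y, ?_, Finset.mem_image.2 ⟨x, ?_, rfl⟩⟩
    · simp only [outerNbrs, Finset.mem_filter, Finset.mem_univ, true_and]
      exact ⟨hy, x, hx, hadj⟩
    · simpa using hadj.symm
  refine (Finset.card_le_card hsub).trans ?_
  rw [mul_comm]
  exact Finset.card_biUnion_le_card_mul _ _ _ fun y _ =>
    Finset.card_image_le.trans (card_filter_adj_le hd y)

/-- The ball of radius `r` around `A` in the graph `G` with the vertices in `Y` removed. -/
def avoidBall (G : SimpleGraph V) (Y A : Finset V) : ℕ → Finset V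
  | 0 => A \ Y
  | r + 1 => avoidBall G Y A r ∪ (outerNbrs G (avoidBall G Y A r)) \ Y

lemma avoidBall_disjoint (G : SimpleGraph V) (Y A : Finset V) (r : ℕ) :
    ∀ x ∈ avoidBall G Y A r, x ∉ Y := by
  induction r with
  | zero => intro x hx; exact (Finset.mem_sdiff.1 hx).2
  | succ r ih =>
    intro x hx
    rcases Finset.mem_union.1 hx with h | h
    · exact ih x h
    · exact (Finset.mem_sdiff.1 h).2

lemma reachable_mono_edges {Q Q' : Finset (Sym2 V)} (h : Q ⊆ Q') {x y : V}
    (hr : (SimpleGraph.fromEdgeSet (Q : Set (Sym2 V))).Reachable x y) :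
    (SimpleGraph.fromEdgeSet (Q' : Set (Sym2 V))).Reachable x y :=
  hr.mono (SimpleGraph.fromEdgeSet_mono (Finset.coe_subset.2 h))

lemma exists_edges_of_mem_avoidBall (G : SimpleGraph V) (Y A : Finset V) (r : ℕ) :
    ∀ x ∈ avoidBall G Y A r, ∃ Q ⊆ edgeFinset' G, Q.card ≤ r ∧ (∀ e ∈ Q, ∀ z ∈ e, z ∉ Y) ∧
      ∃ a ∈ A, (SimpleGraph.fromEdgeSet (Q : Set (Sym2 V))).Reachable a x := by
  induction r with
  | zero =>
    intro x hx
    exact ⟨∅, by simp, by simp, by simp, x, (Finset.mem_sdiff.1 hx).1, SimpleGraph.Reachable.refl _⟩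
  | succ r ih =>
    intro x hx
    rcases Finset.mem_union.1 hx with h | h
    · obtain ⟨Q, h1, h2, h3⟩ := ih x h
      exact ⟨Q, h1, by omega, h3⟩
    · rw [Finset.mem_sdiff, outerNbrs, Finset.mem_filter] at h
      obtain ⟨⟨-, -, y, hy, hadj⟩, hxY⟩ := h
      obtain ⟨Q, h1, h2, h3, a, ha, har⟩ := ih y hy
      refine ⟨insert s(y, x) Q, ?_, ?_, ?_, a, ha, ?_⟩
      · exact Finset.insert_subset (mk_mem_edgeFinset'.2 hadj) h1
      · exact (Finset.card_insert_le _ _).trans (by omega)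
      · intro e he z hz
        rcases Finset.mem_insert.1 he with rfl | he
        · rcases Sym2.mem_iff.1 hz with rfl | rfl
          · exact avoidBall_disjoint G Y A r _ hy
          · exact hxY
        · exact h3 e he z hz
      · refine (reachable_mono_edges (Finset.subset_insert _ _) har).trans
          (SimpleGraph.Adj.reachable ?_)
        rw [SimpleGraph.fromEdgeSet_adj]
        exact ⟨by simp, hadj.ne⟩

lemma card_avoidBall {G : SimpleGraph V} {b : ℝ} {d : ℕ} (hG : IsExpander G b d) (hb : 0 < b)
    (hd : 0 < d) {θ κ : ℝ} (hκ1 : κ ≤ b * θ / (4 * d)) (hκ2 : κ ≤ θ / 2) {Y A : Finset V}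
    (hA : θ * Fintype.card V ≤ A.card) (hY : (Y.card : ℝ) ≤ κ * Fintype.card V) (r : ℕ) :
    θ / 2 * Fintype.card V ≤ ((avoidBall G Y A r).card : ℝ) ∧
    ((Fintype.card V : ℝ) / 2 < (avoidBall G Y A r).card ∨
      r * κ * Fintype.card V ≤ (avoidBall G Y A r).card) := by
  have hn : (0 : ℝ) ≤ Fintype.card V := Nat.cast_nonneg _
  have hd' : (0 : ℝ) < d := by exact_mod_cast hd
  induction r with
  | zero =>
    have h := Finset.le_card_sdiff Y A
    have h2 : (A.card : ℝ) ≤ (A \ Y).card + Y.card := by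
      have : A.card ≤ (A \ Y).card + Y.card := by omega
      exact_mod_cast this
    refine ⟨?_, Or.inr ?_⟩
    · simp only [avoidBall]
      nlinarith
    · simp
  | succ r ih =>
    obtain ⟨ih1, ih2⟩ := ih
    have hmono : (avoidBall G Y A r).card ≤ (avoidBall G Y A (r + 1)).card :=
      Finset.card_le_card Finset.subset_union_left
    have hmono' : ((avoidBall G Y A r).card : ℝ) ≤ (avoidBall G Y A (r + 1)).card := by
      exact_mod_cast hmono
    refine ⟨ih1.trans hmono', ?_⟩
    by_cases hbig : (Fintype.card V : ℝ) / 2 < (avoidBall G Y A r).card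
    · exact Or.inl (hbig.trans_le hmono')
    · right
      have ih2 := ih2.resolve_left hbig
      have hcut := hG.2 _ (not_lt.1 hbig)
      have hcut2 : (cutCard G (avoidBall G Y A r) : ℝ)
          ≤ d * (outerNbrs G (avoidBall G Y A r)).card := by
        exact_mod_cast cutCard_le hG.1 _
      have hdisj : Disjoint (avoidBall G Y A r) ((outerNbrs G (avoidBall G Y A r)) \ Y) := by
        rw [Finset.disjoint_left]
        intro x hx hx'
        rw [Finset.mem_sdiff, outerNbrs, Finset.mem_filter] at hx'
        exact hx'.1.2.1 hx
      have hcard : (avoidBall G Y A r).card + (outerNbrs G (avoidBall G Y A r)).card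
          ≤ (avoidBall G Y A (r + 1)).card + Y.card := by
        have := Finset.le_card_sdiff Y (outerNbrs G (avoidBall G Y A r))
        have h3 : (avoidBall G Y A (r + 1)).card = _ := Finset.card_union_of_disjoint hdisj
        omega
      have hcard' : ((avoidBall G Y A r).card : ℝ) + (outerNbrs G (avoidBall G Y A r)).card
          ≤ (avoidBall G Y A (r + 1)).card + Y.card := by
        exact_mod_cast hcard
      have h4 : b * (θ / 2 * Fintype.card V) ≤ d * (outerNbrs G (avoidBall G Y A r)).card :=
        le_trans (by gcongr) (hcut.trans hcut2)
      have h5 : 2 * κ * Fintype.card V ≤ (outerNbrs G (avoidBall G Y A r)).card := by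
        have : 2 * κ * Fintype.card V ≤ b * (θ / 2 * Fintype.card V) / d := by
          calc 2 * κ * Fintype.card V ≤ 2 * (b * θ / (4 * d)) * Fintype.card V := by gcongr
            _ = _ := by field_simp; ring
        refine this.trans ?_
        rw [div_le_iff₀ hd']
        linarith
      push_cast
      nlinarith

lemma exists_connecting_edges {G : SimpleGraph V} {b : ℝ} {d : ℕ} (hG : IsExpander G b d)
    (hb : 0 < b) (hd : 0 < d) {θ κ : ℝ} (hκ1 : κ ≤ b * θ / (4 * d)) (hκ2 : κ ≤ θ / 2)
    {r : ℕ} (hr : 1 ≤ r * κ) {Y A B : Finset V} (hAB : Disjoint A B)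
    (hn : 0 < Fintype.card V) (hA : θ * Fintype.card V ≤ A.card)
    (hB : θ * Fintype.card V ≤ B.card) (hY : (Y.card : ℝ) ≤ κ * Fintype.card V) :
    ∃ Q ⊆ edgeFinset' G, Q.Nonempty ∧ Q.card ≤ 2 * r ∧ (∀ e ∈ Q, ∀ z ∈ e, z ∉ Y) ∧
      ∃ a ∈ A, ∃ b ∈ B, (SimpleGraph.fromEdgeSet (Q : Set (Sym2 V))).Reachable a b := by
  have hn' : (0 : ℝ) < Fintype.card V := by exact_mod_cast hn
  have hbig : ∀ A : Finset V, θ * Fintype.card V ≤ A.card →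
      (Fintype.card V : ℝ) / 2 < (avoidBall G Y A r).card := by
    intro A hA
    rcases (card_avoidBall hG hb hd hκ1 hκ2 hA hY r).2 with h | h
    · exact h
    · nlinarith
  have hA' := hbig A hA
  have hB' := hbig B hB
  have : ¬ Disjoint (avoidBall G Y A r) (avoidBall G Y B r) := by
    intro hdis
    have h1 := Finset.card_union_of_disjoint hdis
    have h2 := Finset.card_le_univ (avoidBall G Y A r ∪ avoidBall G Y B r)
    rw [h1] at h2
    have h3 : ((avoidBall G Y A r).card : ℝ) + (avoidBall G Y B r).card ≤ Fintype.card V := by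
      exact_mod_cast h2
    linarith
  obtain ⟨x, hxA, hxB⟩ := Finset.not_disjoint_iff.1 this
  obtain ⟨Q, h1, h2, h3, a, ha, har⟩ := exists_edges_of_mem_avoidBall G Y A r x hxA
  obtain ⟨Q', h1', h2', h3', b', hb', hbr⟩ := exists_edges_of_mem_avoidBall G Y B r x hxB
  have hreach : (SimpleGraph.fromEdgeSet ((Q ∪ Q' : Finset _) : Set (Sym2 V))).Reachable a b' :=
    (reachable_mono_edges Finset.subset_union_left har).trans
      (reachable_mono_edges Finset.subset_union_right hbr).symm
  refine ⟨Q ∪ Q', Finset.union_subset h1 h1', ?_, ?_, ?_, a, ha, b', hb', hreach⟩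
  · rw [Finset.nonempty_iff_ne_empty]
    intro h0
    rw [h0] at hreach
    have : a = b' := by simpa using hreach
    exact Finset.disjoint_left.1 hAB ha (this ▸ hb')
  · exact (Finset.card_union_le _ _).trans (by omega)
  · intro e he
    rcases Finset.mem_union.1 he with he | he
    · exact h3 e he
    · exact h3' e he

/-- Two large sets are joined by linearly many disjoint short paths avoiding a small set. -/
lemma exists_disjoint_paths {G : SimpleGraph V} {b : ℝ} {d : ℕ} (hG : IsExpander G b d)
    (hb : 0 < b) (hd : 0 < d) {θ κ : ℝ} (hκ1 : κ ≤ b * θ / (4 * d)) (hκ2 : κ ≤ θ / 2)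
    {r : ℕ} (hr : 1 ≤ r * κ) {X A B : Finset V} (hAB : Disjoint A B)
    (hn : 0 < Fintype.card V) (hA : θ * Fintype.card V ≤ A.card)
    (hB : θ * Fintype.card V ≤ B.card) (m : ℕ)
    (hX : (X.card : ℝ) + 4 * r * m ≤ κ * Fintype.card V) :
    ∃ 𝒬 : Finset (Finset (Sym2 V)), 𝒬.card = m ∧
      (𝒬 : Set (Finset (Sym2 V))).PairwiseDisjoint id ∧
      ∀ Q ∈ 𝒬, Q ⊆ edgeFinset' G ∧ Q.card ≤ 2 * r ∧ (∀ e ∈ Q, ∀ z ∈ e, z ∉ X) ∧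
      ∃ a ∈ A, ∃ b ∈ B, (SimpleGraph.fromEdgeSet (Q : Set (Sym2 V))).Reachable a b := by
  suffices h : ∀ m : ℕ, (X.card : ℝ) + 4 * r * m ≤ κ * Fintype.card V →
      ∃ (𝒬 : Finset (Finset (Sym2 V))) (Y : Finset V), Y.card ≤ X.card + 4 * r * m ∧ X ⊆ Y ∧
      (∀ Q ∈ 𝒬, ∀ e ∈ Q, ∀ z ∈ e, z ∈ Y) ∧ 𝒬.card = m ∧
      (𝒬 : Set (Finset (Sym2 V))).PairwiseDisjoint id ∧
      ∀ Q ∈ 𝒬, Q ⊆ edgeFinset' G ∧ Q.card ≤ 2 * r ∧ (∀ e ∈ Q, ∀ z ∈ e, z ∉ X) ∧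
      ∃ a ∈ A, ∃ b ∈ B, (SimpleGraph.fromEdgeSet (Q : Set (Sym2 V))).Reachable a b by
    obtain ⟨𝒬, Y, -, -, -, h⟩ := h m hX
    exact ⟨𝒬, h⟩
  intro m
  induction m with
  | zero => intro _; exact ⟨∅, X, by simp, subset_rfl, by simp, by simp, by simp, by simp⟩
  | succ m ih =>
    intro hm
    have hr0 : (0 : ℝ) ≤ r := Nat.cast_nonneg r
    push_cast at hm
    obtain ⟨𝒬, Y, hYc, hXY, hV, hc, hdis, hall⟩ := ih (by linarith)
    have hY : (Y.card : ℝ) ≤ κ * Fintype.card V := by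
      have : (Y.card : ℝ) ≤ X.card + 4 * r * m := by exact_mod_cast hYc
      linarith
    obtain ⟨Q, hQE, hQne, hQc, hQY, hQab⟩ :=
      exists_connecting_edges hG hb hd hκ1 hκ2 hr hAB hn hA hB hY
    have hQdis : ∀ Q' ∈ 𝒬, Disjoint Q' Q := by
      intro Q' hQ'
      rw [Finset.disjoint_left]
      intro e he he'
      induction e with
      | h x y =>
        exact hQY _ he' x (Sym2.mem_mk_left x y) (hV Q' hQ' _ he x (Sym2.mem_mk_left x y))
    have hQnot : Q ∉ 𝒬 := fun h => hQne.ne_empty (disjoint_self.1 (hQdis Q h))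
    refine ⟨insert Q 𝒬, Y ∪ Q.biUnion (fun e => Finset.univ.filter (· ∈ e)), ?_,
      hXY.trans Finset.subset_union_left, ?_, ?_, ?_, ?_⟩
    · have h1 := Finset.card_union_le Y (Q.biUnion (fun e => Finset.univ.filter (· ∈ e)))
      have h2 := Finset.card_biUnion_le_card_mul Q (fun e => Finset.univ.filter (· ∈ e)) 2
        (fun e _ => card_filter_mem_sym2_le e)
      nlinarith
    · intro Q' hQ' e he z hz
      rcases Finset.mem_insert.1 hQ' with rfl | hQ'
      · refine Finset.mem_union_right _ (Finset.mem_biUnion.2 ⟨e, he, by simpa using hz⟩)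
      · exact Finset.mem_union_left _ (hV Q' hQ' e he z hz)
    · rw [Finset.card_insert_of_notMem hQnot, hc]
    · rw [Finset.coe_insert]
      refine hdis.insert fun Q' hQ' _ => (hQdis Q' hQ').symm
    · intro Q' hQ'
      rcases Finset.mem_insert.1 hQ' with rfl | hQ'
      · exact ⟨hQE, hQc, fun e he z hz hzX => hQY e he z hz (hXY hzX), hQab⟩
      · exact hall Q' hQ'

/-- Sprinkling fails to contain any set of a large disjoint family with small probability. -/
lemma percExp_no_member_le {α : Type} [DecidableEq α] {p : ℝ} (h0 : 0 < p) (h1 : p ≤ 1)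
    {E : Finset α} {𝒬 : Finset (Finset α)} (hdis : (𝒬 : Set (Finset α)).PairwiseDisjoint id)
    {L : ℕ} (hQ : ∀ Q ∈ 𝒬, Q ⊆ E ∧ Q.card ≤ L) {l : ℝ} (hl0 : 0 ≤ l) (hl1 : l ≤ 1) :
    percExp p E (fun t => if ∃ Q ∈ 𝒬, Q ⊆ t then 0 else 1)
      ≤ Real.exp (-(l * p ^ L * 𝒬.card) + E.card * l ^ 2) := by
  set N : Finset α → ℝ := fun t => ∑ Q ∈ 𝒬, if Q ⊆ t then 1 else 0 with hN
  have hlip : ∀ e s, |N (insert e s) - N s| ≤ 1 := by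
    intro e s
    have hle : ∀ Q ∈ 𝒬, (0 : ℝ) ≤ (if Q ⊆ insert e s then 1 else 0) - (if Q ⊆ s then 1 else 0) := by
      intro Q _
      by_cases h : Q ⊆ s
      · rw [if_pos h, if_pos (h.trans (Finset.subset_insert _ _))]; simp
      · rw [if_neg h]; split_ifs <;> norm_num
    rw [hN]
    simp only
    rw [← Finset.sum_sub_distrib, abs_of_nonneg (Finset.sum_nonneg hle)]
    have hz : ∀ Q, e ∉ Q →
        ((if Q ⊆ insert e s then 1 else 0) - (if Q ⊆ s then 1 else 0) : ℝ) = 0 := by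
      intro Q he
      have : Q ⊆ insert e s ↔ Q ⊆ s := Finset.subset_insert_iff_of_notMem he
      by_cases h : Q ⊆ s
      · rw [if_pos h, if_pos (this.2 h)]; simp
      · rw [if_neg h, if_neg (fun h' => h (this.1 h'))]; simp
    by_cases hex : ∃ Q ∈ 𝒬, e ∈ Q
    · obtain ⟨Q, hQ, heQ⟩ := hex
      rw [Finset.sum_eq_single Q]
      · split_ifs <;> norm_num
      · intro Q' hQ' hne
        refine hz Q' fun he => ?_
        exact Finset.disjoint_left.1 (hdis hQ' hQ hne) he heQ
      · exact fun h => absurd hQ h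
    · push Not at hex
      rw [Finset.sum_eq_zero fun Q hQ => hz Q (hex Q hQ)]
      exact zero_le_one
  have hmgf := percExp_exp_le h0.le h1 E (fun s => (-l) * N s) hl1 (by
    intro e s
    rw [← mul_sub, abs_mul, abs_neg, abs_of_nonneg hl0]
    exact mul_le_of_le_one_right hl0 (hlip e s))
  have hmean : p ^ L * 𝒬.card ≤ percExp p E N := by
    rw [hN, percExp_sum, mul_comm, ← nsmul_eq_mul]
    refine Finset.card_nsmul_le_sum _ _ _ fun Q hQ' => ?_
    rw [percExp_subset p (hQ Q hQ').1]
    exact pow_le_pow_of_le_one h0.le h1 (hQ Q hQ').2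
  calc _ ≤ percExp p E (fun s => Real.exp ((-l) * N s)) := by
        refine percExp_mono h0.le h1 fun s _ => ?_
        split_ifs with h
        · exact (Real.exp_pos _).le
        · have : N s = 0 := by
            rw [hN]
            refine Finset.sum_eq_zero fun Q hQ => if_neg fun hs => h ⟨Q, hQ, hs⟩
          rw [this]; simp
    _ ≤ _ := hmgf
    _ ≤ _ := by
        rw [percExp_const_mul]
        apply Real.exp_le_exp.2
        have := mul_le_mul_of_nonneg_left hmean hl0
        linarith

/-- In a percolated expander, two large sets fail to be joined off a small set with
exponentially small probability. -/
lemma exists_percExp_no_path_le {b : ℝ} (hb : 0 < b) {d : ℕ} (hd : 0 < d) {θ : ℝ} (hθ : 0 < θ)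
    (hθ1 : θ ≤ 1) {p : ℝ} (h0 : 0 < p) (h1 : p ≤ 1) :
    ∃ c > (0 : ℝ), ∃ ε > (0 : ℝ), ∀ (V : Type) [Fintype V] [DecidableEq V] (G : SimpleGraph V),
      IsRegularExpander G b d → ∀ X A B : Finset V, Disjoint A B →
        θ * Fintype.card V ≤ A.card → θ * Fintype.card V ≤ B.card →
        (X.card : ℝ) ≤ ε * Fintype.card V →
        percExp p (edgeFinset' G) (fun t => if ∃ Q ⊆ t, (∀ e ∈ Q, ∀ z ∈ e, z ∉ X) ∧
          ∃ a ∈ A, ∃ b ∈ B, (SimpleGraph.fromEdgeSet (Q : Set (Sym2 V))).Reachable a b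
          then 0 else 1) ≤ Real.exp (1 - c * Fintype.card V) := by
  have hd' : (0 : ℝ) < d := by exact_mod_cast hd
  have hd1 : (1 : ℝ) ≤ d := by exact_mod_cast hd
  set κ := min (b * θ / (4 * d)) (θ / 2) with hκ
  have hκ0 : 0 < κ := lt_min (by positivity) (by positivity)
  have hκ1 : κ ≤ 1 := (min_le_right _ _).trans (by linarith)
  obtain ⟨r, hr⟩ := exists_nat_ge (1 / κ)
  have hr1 : 1 ≤ r * κ := (div_le_iff₀ hκ0).1 hr
  have hr0 : (1 : ℝ) ≤ r := by
    by_contra h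
    push Not at h
    nlinarith [(Nat.cast_nonneg r : (0 : ℝ) ≤ r)]
  set l := p ^ (2 * r) * κ / (16 * r * d) with hl
  have hp0 : 0 < p ^ (2 * r) := pow_pos h0 _
  have hp1 : p ^ (2 * r) ≤ 1 := pow_le_one₀ h0.le h1
  have hl0 : 0 < l := by positivity
  have hl1 : l ≤ 1 := by
    rw [hl, div_le_one (by positivity)]
    nlinarith [mul_le_mul hp1 hκ1 hκ0.le zero_le_one,
      mul_le_mul hr0 hd1 zero_le_one (by positivity)]
  refine ⟨d * l ^ 2, by positivity, κ / 2, by positivity, ?_⟩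
  intro V _ _ G hG X A B hAB hA hB hX
  rcases Nat.eq_zero_or_pos (Fintype.card V) with hn | hn
  · refine (percExp_mono h0.le h1 (g := fun _ => 1) fun s _ => ?_).trans ?_
    · split_ifs <;> norm_num
    · rw [percExp_const, hn]
      simp
  set n : ℝ := ((Fintype.card V : ℕ) : ℝ) with hn'
  have hn0 : 0 < n := by rw [hn']; exact_mod_cast hn
  set m := ⌊κ * n / (8 * r)⌋₊ with hm
  have hm1 : (m : ℝ) ≤ κ * n / (8 * r) := Nat.floor_le (by positivity)
  have hm2 : κ * n / (8 * r) - 1 ≤ m := (Nat.sub_one_lt_floor _).le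
  have hmX : (X.card : ℝ) + 4 * r * m ≤ κ * Fintype.card V := by
    have : 4 * r * m ≤ 4 * r * (κ * n / (8 * r)) := by gcongr
    have e : 4 * r * (κ * n / (8 * r)) = κ / 2 * n := by field_simp; ring
    rw [← hn']
    linarith
  obtain ⟨𝒬, hc, hdis, hall⟩ := exists_disjoint_paths hG.1 hb hd (min_le_left _ _)
    (min_le_right _ _) hr1 hAB hn hA hB m hmX
  have hmain := percExp_no_member_le h0 h1 hdis (L := 2 * r)
    (fun Q hQ => ⟨(hall Q hQ).1, (hall Q hQ).2.1⟩) hl0.le hl1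
  calc _ ≤ percExp p (edgeFinset' G) (fun t => if ∃ Q ∈ 𝒬, Q ⊆ t then 0 else 1) := by
        refine percExp_mono h0.le h1 fun s _ => ?_
        by_cases h : ∃ Q ∈ 𝒬, Q ⊆ s
        · obtain ⟨Q, hQ, hQs⟩ := h
          rw [if_pos ⟨Q, hQs, (hall Q hQ).2.2⟩, if_pos ⟨Q, hQ, hQs⟩]
        · rw [if_neg h]
          split_ifs <;> norm_num
    _ ≤ _ := hmain
    _ ≤ _ := by
        apply Real.exp_le_exp.2
        rw [hc]
        have hE : ((edgeFinset' G).card : ℝ) ≤ d * n := by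
          rw [hn']; exact_mod_cast card_edgeFinset'_le hG.2
        have e1 : ((edgeFinset' G).card : ℝ) * l ^ 2 ≤ d * n * l ^ 2 := by gcongr
        have e2 : l * p ^ (2 * r) * (κ * n / (8 * r) - 1) ≤ l * p ^ (2 * r) * m := by gcongr
        have e3 : l * p ^ (2 * r) * (κ * n / (8 * r)) = 2 * d * l ^ 2 * n := by
          rw [hl]; field_simp; ring
        have e4 : l * p ^ (2 * r) ≤ 1 := mul_le_one₀ hl1 hp0.le hp1
        nlinarith

end PathFamily

section Separation

/-- The edges of `s` with no endpoint in `X`. -/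
def edgesOff (s : Finset (Sym2 V)) (X : Finset V) : Finset (Sym2 V) :=
  s.filter (fun e => ∀ x ∈ e, x ∉ X)

lemma edgesOff_adj {s : Finset (Sym2 V)} {X : Finset V} {x y : V} :
    (SimpleGraph.fromEdgeSet (↑(edgesOff s X) : Set (Sym2 V))).Adj x y ↔
      (SimpleGraph.fromEdgeSet (↑s : Set (Sym2 V))).Adj x y ∧ x ∉ X ∧ y ∉ X := by
  simp only [SimpleGraph.fromEdgeSet_adj, edgesOff, Finset.coe_filter, Set.mem_ofPred_eq,
    Sym2.mem_iff, forall_eq_or_imp, forall_eq, Finset.mem_coe]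
  tauto

/-- The clusters with at least `k` vertices after deleting the vertices in `X`. -/
def chunks (s : Finset (Sym2 V)) (X : Finset V) (k : ℕ) : Finset (Finset V) :=
  (Finset.univ.filter (fun v => v ∉ X ∧ k ≤ (cluster (edgesOff s X) v).card)).image
    (cluster (edgesOff s X))

lemma card_chunks_le (s : Finset (Sym2 V)) (X : Finset V) (k : ℕ) :
    k * (chunks s X k).card ≤ Fintype.card V := by
  have hdis : (chunks s X k : Set (Finset V)).PairwiseDisjoint id := by
    intro C hC D hD hne
    simp only [chunks, Finset.coe_image, Set.mem_image, Finset.mem_coe] at hC hD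
    obtain ⟨v, -, rfl⟩ := hC
    obtain ⟨w, -, rfl⟩ := hD
    simp only [Function.onFun, id, Finset.disjoint_left]
    intro x hx hx'
    exact hne ((cluster_eq_of_mem hx).symm.trans (cluster_eq_of_mem hx'))
  have h1 := Finset.card_biUnion hdis
  have h2 := Finset.card_le_univ ((chunks s X k).biUnion id)
  rw [h1] at h2
  refine le_trans ?_ h2
  rw [mul_comm, ← smul_eq_mul]
  refine Finset.card_nsmul_le_sum _ _ _ fun C hC => ?_
  simp only [chunks, Finset.mem_image, Finset.mem_filter] at hC
  obtain ⟨v, hv, rfl⟩ := hC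
  exact hv.2.2

lemma card_outerNbrs_le {G : SimpleGraph V} {d : ℕ} (hd : ∀ x, (G.neighborSet x).ncard ≤ d)
    (X : Finset V) : (outerNbrs G X).card ≤ d * X.card := by
  have : outerNbrs G X ⊆ X.biUnion (fun x => Finset.univ.filter (G.Adj x)) := by
    intro y hy
    simp only [outerNbrs, Finset.mem_filter, Finset.mem_univ, true_and] at hy
    obtain ⟨-, x, hx, hxy⟩ := hy
    exact Finset.mem_biUnion.2 ⟨x, hx, by simpa using hxy⟩
  refine (Finset.card_le_card this).trans ?_
  rw [mul_comm]
  exact Finset.card_biUnion_le_card_mul _ _ _ fun y _ => card_filter_adj_le hd y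

section Partition

variable {s : Finset (Sym2 V)} {A B X : Finset V}

lemma cluster_edgesOff_subset (hcov : ∀ v, v ∈ A ∨ v ∈ B ∨ v ∈ X)
    (hno : ∀ x ∈ A, ∀ y ∈ B, ¬ (SimpleGraph.fromEdgeSet (↑s : Set (Sym2 V))).Adj x y)
    {v : V} (hv : v ∈ A) : cluster (edgesOff s X) v ⊆ A := by
  intro x hx
  refine reachable_closed (C := ↑A) ?_ (mem_cluster.1 hx) hv
  intro x y hxy hx
  rw [edgesOff_adj] at hxy
  rcases hcov y with h | h | h
  · exact h
  · exact absurd hxy.1 (hno x hx y h)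
  · exact absurd h hxy.2.2

/-- Vertices of large clusters on one side of a separation are mostly in large chunks. -/
lemma card_inter_largeVerts_le {G : SimpleGraph V} {d : ℕ}
    (hd : ∀ x, (G.neighborSet x).ncard ≤ d) (hs : s ⊆ edgeFinset' G) (k : ℕ)
    (hcov : ∀ v, v ∈ A ∨ v ∈ B ∨ v ∈ X) (hAX : Disjoint A X)
    (hno : ∀ x ∈ A, ∀ y ∈ B, ¬ (SimpleGraph.fromEdgeSet (↑s : Set (Sym2 V))).Adj x y) :
    (A ∩ largeVerts k s).card ≤
      (((chunks s X k).filter (· ⊆ A)).biUnion id).card + d * X.card * k := by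
  set T : V → Finset V := fun y =>
    if (cluster (edgesOff s X) y).card < k then cluster (edgesOff s X) y else ∅ with hT
  have hTk : ∀ y ∈ outerNbrs G X, (T y).card ≤ k := by
    intro y _
    simp only [hT]
    split_ifs with h
    · exact h.le
    · simp
  have hsub : A ∩ largeVerts k s ⊆
      ((chunks s X k).filter (· ⊆ A)).biUnion id ∪ (outerNbrs G X).biUnion T := by
    intro v hv
    rw [Finset.mem_inter, largeVerts, Finset.mem_filter] at hv
    obtain ⟨hvA, -, hvk⟩ := hv
    have hsubA := cluster_edgesOff_subset hcov hno hvA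
    by_cases hk : k ≤ (cluster (edgesOff s X) v).card
    · refine Finset.mem_union_left _ (Finset.mem_biUnion.2
        ⟨cluster (edgesOff s X) v, Finset.mem_filter.2 ⟨?_, hsubA⟩, self_mem_cluster _ _⟩)
      refine Finset.mem_image.2 ⟨v, ?_, rfl⟩
      simp only [Finset.mem_filter, Finset.mem_univ, true_and]
      exact ⟨Finset.disjoint_left.1 hAX hvA, hk⟩
    · refine Finset.mem_union_right _ ?_
      have hex : ∃ y ∈ cluster (edgesOff s X) v, y ∈ outerNbrs G X := by
        by_contra hcon
        push Not at hcon
        apply hk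
        refine hvk.trans (Finset.card_le_card fun z hz => ?_)
        refine reachable_closed (C := ↑(cluster (edgesOff s X) v)) ?_ (mem_cluster.1 hz)
          (self_mem_cluster _ _)
        intro x y hxy hx
        have hxX : x ∉ X := Finset.disjoint_left.1 hAX (hsubA hx)
        by_cases hy : y ∈ X
        · refine absurd ?_ (hcon x hx)
          simp only [outerNbrs, Finset.mem_filter, Finset.mem_univ, true_and]
          exact ⟨hxX, y, hy, fromEdgeSet_le hs hxy.symm⟩
        · exact mem_cluster_of_adj hx (edgesOff_adj.2 ⟨hxy, hxX, hy⟩)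
      obtain ⟨y, hy, hyX⟩ := hex
      refine Finset.mem_biUnion.2 ⟨y, hyX, ?_⟩
      simp only [hT]
      rw [cluster_eq_of_mem hy, if_pos (not_le.1 hk)]
      exact self_mem_cluster _ _
  refine (Finset.card_le_card hsub).trans ((Finset.card_union_le _ _).trans ?_)
  have h1 := Finset.card_biUnion_le_card_mul _ _ k hTk
  have h2 := Nat.mul_le_mul_right k (card_outerNbrs_le hd X)
  omega

lemma chunk_subset_or (k : ℕ) (hcov : ∀ v, v ∈ A ∨ v ∈ B ∨ v ∈ X)
    (hno : ∀ x ∈ A, ∀ y ∈ B, ¬ (SimpleGraph.fromEdgeSet (↑s : Set (Sym2 V))).Adj x y)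
    {C : Finset V} (hC : C ∈ chunks s X k) : C ⊆ A ∨ C ⊆ B := by
  simp only [chunks, Finset.mem_image, Finset.mem_filter, Finset.mem_univ, true_and] at hC
  obtain ⟨v, ⟨hvX, -⟩, rfl⟩ := hC
  rcases hcov v with h | h | h
  · exact Or.inl (cluster_edgesOff_subset hcov hno h)
  · exact Or.inr (cluster_edgesOff_subset (A := B) (B := A) (fun v => by have := hcov v; tauto)
      (fun x hx y hy h => hno y hy x hx h.symm) h)
  · exact absurd h hvX

end Partition

/-- `𝒜` and `𝒞 \ 𝒜` cover large disjoint sets not joined off `X` by the edges of `t`. -/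
def BadSplit (X : Finset V) (𝒜 𝒞 : Finset (Finset V)) (m : ℝ) (t : Finset (Sym2 V)) : Prop :=
  Disjoint (𝒜.biUnion id) ((𝒞 \ 𝒜).biUnion id) ∧ m ≤ (𝒜.biUnion id).card ∧
    m ≤ ((𝒞 \ 𝒜).biUnion id).card ∧
    ¬ ∃ Q ⊆ t, (∀ e ∈ Q, ∀ z ∈ e, z ∉ X) ∧ ∃ a ∈ 𝒜.biUnion id, ∃ b ∈ (𝒞 \ 𝒜).biUnion id,
      (SimpleGraph.fromEdgeSet (Q : Set (Sym2 V))).Reachable a b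

/-- `H` has a large vertex set `Z` that cannot be split evenly by a small vertex separator. -/
def WellLinked (H : SimpleGraph V) (η ε : ℝ) : Prop :=
  ∃ Z : Finset V, η * Fintype.card V ≤ Z.card ∧
    ∀ A B X : Finset V, Disjoint A B → Disjoint A X → Disjoint B X →
      (∀ v, v ∈ A ∨ v ∈ B ∨ v ∈ X) → (∀ x ∈ A, ∀ y ∈ B, ¬ H.Adj x y) →
      Z.card ≤ 4 * (A ∩ Z).card → Z.card ≤ 4 * (B ∩ Z).card →
      ε * Fintype.card V < X.card

lemma exists_badSplit {G : SimpleGraph V} {d : ℕ} (hd : ∀ x, (G.neighborSet x).ncard ≤ d)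
    {s t : Finset (Sym2 V)} (hs : s ⊆ edgeFinset' G) {k : ℕ} {η ε : ℝ}
    (hε : 8 * d * k * ε ≤ η) (hZ : η * Fintype.card V ≤ (largeVerts k s).card)
    (hbad : ¬ WellLinked (SimpleGraph.fromEdgeSet (↑(s ∪ t) : Set (Sym2 V))) η ε) :
    ∃ X : Finset V, (X.card : ℝ) ≤ ε * Fintype.card V ∧ ∃ 𝒜 ⊆ chunks s X k,
      BadSplit X 𝒜 (chunks s X k) (η / 8 * Fintype.card V) t := by
  simp only [WellLinked, not_exists, not_and, not_forall, not_lt, exists_prop] at hbad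
  obtain ⟨A, B, X, hAB, hAX, hBX, hcov, hno, hA, hB, hX⟩ := hbad _ hZ
  have hn : (0 : ℝ) ≤ Fintype.card V := Nat.cast_nonneg _
  have hnos : ∀ x ∈ A, ∀ y ∈ B, ¬ (SimpleGraph.fromEdgeSet (↑s : Set (Sym2 V))).Adj x y := by
    intro x hx y hy h
    refine hno x hx y hy (SimpleGraph.fromEdgeSet_mono ?_ h)
    exact Finset.coe_subset.2 Finset.subset_union_left
  have hcov' : ∀ v, v ∈ B ∨ v ∈ A ∨ v ∈ X := fun v => by have := hcov v; tauto
  have hA' : ((chunks s X k).filter (· ⊆ A)).biUnion id ⊆ A :=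
    Finset.biUnion_subset.2 fun C hC => (Finset.mem_filter.1 hC).2
  have hB' : (chunks s X k \ (chunks s X k).filter (· ⊆ A)).biUnion id ⊆ B := by
    refine Finset.biUnion_subset.2 fun C hC => ?_
    rw [Finset.mem_sdiff, Finset.mem_filter] at hC
    exact (chunk_subset_or k hcov hnos hC.1).resolve_left fun h => hC.2 ⟨hC.1, h⟩
  have hfB : (chunks s X k).filter (· ⊆ B) ⊆
      (chunks s X k \ (chunks s X k).filter (· ⊆ A)) := by
    intro C hC
    rw [Finset.mem_filter] at hC
    refine Finset.mem_sdiff.2 ⟨hC.1, fun h => ?_⟩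
    have hCA := (Finset.mem_filter.1 h).2
    have hC0 := hC.1
    simp only [chunks, Finset.mem_image] at hC0
    obtain ⟨v, -, rfl⟩ := hC0
    exact Finset.disjoint_left.1 hAB (hCA (self_mem_cluster _ v)) (hC.2 (self_mem_cluster _ v))
  have hsize : ∀ a b : ℕ, (largeVerts k s).card ≤ 4 * a → a ≤ b + d * X.card * k →
      η / 8 * Fintype.card V ≤ (b : ℝ) := by
    intro a b h1 h2
    have h1' : ((largeVerts k s).card : ℝ) ≤ 4 * a := by exact_mod_cast h1
    have h2' : (a : ℝ) ≤ b + d * X.card * k := by exact_mod_cast h2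
    have h3 : (d : ℝ) * X.card * k ≤ d * (ε * Fintype.card V) * k := by gcongr
    nlinarith [mul_le_mul_of_nonneg_right hε hn]
  refine ⟨X, hX, (chunks s X k).filter (· ⊆ A), Finset.filter_subset _ _,
    Finset.disjoint_of_subset_left hA' (Finset.disjoint_of_subset_right hB' hAB), ?_, ?_, ?_⟩
  · exact hsize _ _ hA (card_inter_largeVerts_le hd hs k hcov hAX hnos)
  · refine hsize _ _ hB ((card_inter_largeVerts_le hd hs k hcov' hBX
      (fun x hx y hy h => hnos y hy x hx h.symm)).trans ?_)
    exact Nat.add_le_add_right (Finset.card_le_card (Finset.biUnion_subset_biUnion_of_subset_left _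
      hfB)) _
  · rintro ⟨Q, hQt, hQX, a, ha, b, hb, hab⟩
    have : b ∈ (A : Set V) := by
      refine reachable_closed ?_ hab (hA' ha)
      intro x y hxy hx
      rw [SimpleGraph.fromEdgeSet_adj] at hxy
      rcases hcov y with h | h | h
      · exact h
      · refine absurd ?_ (hno x hx y h)
        rw [SimpleGraph.fromEdgeSet_adj]
        exact ⟨Finset.mem_coe.2 (Finset.mem_union_right _ (hQt hxy.1)), hxy.2⟩
      · exact absurd h (hQX _ hxy.1 y (Sym2.mem_mk_right x y))
    exact Finset.disjoint_left.1 hAB this (hB' hb)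

lemma card_small_sets_le {l : ℝ} (hl0 : 0 < l) (hl1 : l ≤ 1) (m : ℝ) :
    ((Finset.univ.filter (fun X : Finset V => (X.card : ℝ) ≤ m)).card : ℝ)
      ≤ Real.exp (l * Fintype.card V - Real.log l * m) := by
  have h1 : ∑ X : Finset V, l ^ X.card = (l + 1) ^ Fintype.card V := by
    simpa using Fintype.sum_pow_mul_eq_add_pow V l 1
  have hlog : Real.log l ≤ 0 := Real.log_nonpos hl0.le hl1
  have h2 : ((Finset.univ.filter (fun X : Finset V => (X.card : ℝ) ≤ m)).card : ℝ)
      * Real.exp (Real.log l * m) ≤ (l + 1) ^ Fintype.card V := by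
    rw [← h1, ← nsmul_eq_mul]
    refine (Finset.card_nsmul_le_sum _ (fun X : Finset V => l ^ X.card) _ fun X hX => ?_).trans
      (Finset.sum_le_sum_of_subset_of_nonneg (Finset.filter_subset _ _) fun X _ _ => by positivity)
    rw [Finset.mem_filter] at hX
    rw [← Real.rpow_natCast, Real.rpow_def_of_pos hl0]
    exact Real.exp_le_exp.2 (mul_le_mul_of_nonpos_left hX.2 hlog)
  have h3 : (l + 1) ^ Fintype.card V ≤ Real.exp (l * Fintype.card V) := by
    rw [mul_comm, Real.exp_nat_mul]
    gcongr
    exact Real.add_one_le_exp l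
  rw [Real.exp_sub, le_div_iff₀ (Real.exp_pos _)]
  exact h2.trans h3

/-- The union bound over all candidate splits. -/
lemma percExp_not_wellLinked_le {G : SimpleGraph V} {b : ℝ} {d : ℕ}
    (hG : IsRegularExpander G b d) {s : Finset (Sym2 V)} (hs : s ⊆ edgeFinset' G) {k : ℕ}
    (hk : 0 < k) {η ε c l p : ℝ} (h0 : 0 ≤ p) (h1 : p ≤ 1) (hl0 : 0 < l) (hl1 : l ≤ 1)
    (hε : 8 * d * k * ε ≤ η) (hZ : η * Fintype.card V ≤ (largeVerts k s).card)
    (hpath : ∀ X A B : Finset V, Disjoint A B →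
        η / 8 * Fintype.card V ≤ A.card → η / 8 * Fintype.card V ≤ B.card →
        (X.card : ℝ) ≤ ε * Fintype.card V →
        percExp p (edgeFinset' G) (fun t => if ∃ Q ⊆ t, (∀ e ∈ Q, ∀ z ∈ e, z ∉ X) ∧
          ∃ a ∈ A, ∃ b ∈ B, (SimpleGraph.fromEdgeSet (Q : Set (Sym2 V))).Reachable a b
          then 0 else 1) ≤ Real.exp (1 - c * Fintype.card V)) :
    percExp p (edgeFinset' G) (fun t =>
        if WellLinked (SimpleGraph.fromEdgeSet (↑(s ∪ t) : Set (Sym2 V))) η ε then 0 else 1)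
      ≤ Real.exp (1 - (c - Real.log 2 / k - l + Real.log l * ε) * Fintype.card V) := by
  set n : ℝ := ((Fintype.card V : ℕ) : ℝ) with hn
  have hk' : (0 : ℝ) < k := by exact_mod_cast hk
  have hterm : ∀ X ∈ Finset.univ.filter (fun X : Finset V => (X.card : ℝ) ≤ ε * n),
      ∀ 𝒜 ∈ (chunks s X k).powerset,
      percExp p (edgeFinset' G) (fun t => if BadSplit X 𝒜 (chunks s X k) (η / 8 * n) t
        then 1 else 0) ≤ Real.exp (1 - c * n) := by
    intro X hX 𝒜 _
    rw [Finset.mem_filter] at hX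
    by_cases hcond : Disjoint (𝒜.biUnion id) ((chunks s X k \ 𝒜).biUnion id) ∧
        η / 8 * n ≤ (𝒜.biUnion id).card ∧ η / 8 * n ≤ ((chunks s X k \ 𝒜).biUnion id).card
    · refine (percExp_mono h0 h1 fun t _ => ?_).trans
        (hpath X _ _ hcond.1 hcond.2.1 hcond.2.2 hX.2)
      by_cases hbs : BadSplit X 𝒜 (chunks s X k) (η / 8 * n) t
      · rw [if_pos hbs, if_neg hbs.2.2.2]
      · rw [if_neg hbs]
        split_ifs <;> norm_num
    · refine ((percExp_congr fun t _ => if_neg ?_).trans (percExp_const p _ 0)).trans_le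
        (Real.exp_pos _).le
      exact fun h => hcond ⟨h.1, h.2.1, h.2.2.1⟩
  have hpow : ∀ X : Finset V, ((chunks s X k).powerset.card : ℝ)
      ≤ Real.exp (Real.log 2 / k * n) := by
    intro X
    rw [Finset.card_powerset]
    push_cast
    rw [← Real.rpow_natCast, Real.rpow_def_of_pos two_pos]
    apply Real.exp_le_exp.2
    rw [div_mul_eq_mul_div, mul_div_assoc]
    have : (0 : ℝ) ≤ Real.log 2 := Real.log_nonneg one_le_two
    gcongr
    rw [le_div_iff₀ hk', hn]
    have := card_chunks_le s X k
    rw [mul_comm] at this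
    exact_mod_cast this
  calc _ ≤ percExp p (edgeFinset' G) (fun t =>
        ∑ X ∈ Finset.univ.filter (fun X : Finset V => (X.card : ℝ) ≤ ε * n),
          ∑ 𝒜 ∈ (chunks s X k).powerset,
            if BadSplit X 𝒜 (chunks s X k) (η / 8 * n) t then 1 else 0) := by
        refine percExp_mono h0 h1 fun t _ => ?_
        have hnn : ∀ X : Finset V, ∀ 𝒜 : Finset (Finset V),
            (0 : ℝ) ≤ if BadSplit X 𝒜 (chunks s X k) (η / 8 * n) t then 1 else 0 := by
          intro X 𝒜; split_ifs <;> norm_num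
        by_cases hw : WellLinked (SimpleGraph.fromEdgeSet (↑(s ∪ t) : Set (Sym2 V))) η ε
        · rw [if_pos hw]
          exact Finset.sum_nonneg fun X _ => Finset.sum_nonneg fun 𝒜 _ => hnn X 𝒜
        · rw [if_neg hw]
          obtain ⟨X, hX, 𝒜, h𝒜, hbs⟩ := exists_badSplit (fun x => (hG.2 x).le) hs hε hZ hw
          have hXm : X ∈ Finset.univ.filter (fun X : Finset V => (X.card : ℝ) ≤ ε * n) :=
            Finset.mem_filter.2 ⟨Finset.mem_univ X, hX⟩
          have e1 := Finset.single_le_sum (f := fun X => ∑ 𝒜 ∈ (chunks s X k).powerset,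
            if BadSplit X 𝒜 (chunks s X k) (η / 8 * n) t then (1 : ℝ) else 0)
            (fun X _ => Finset.sum_nonneg fun 𝒜 _ => hnn X 𝒜) hXm
          have e2 := Finset.single_le_sum (f := fun 𝒜 =>
            if BadSplit X 𝒜 (chunks s X k) (η / 8 * n) t then (1 : ℝ) else 0)
            (fun 𝒜 _ => hnn X 𝒜) (Finset.mem_powerset.2 h𝒜)
          rw [if_pos hbs] at e2
          exact e2.trans e1
    _ ≤ ∑ X ∈ Finset.univ.filter (fun X : Finset V => (X.card : ℝ) ≤ ε * n),
          Real.exp (Real.log 2 / k * n) * Real.exp (1 - c * n) := by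
        rw [percExp_sum]
        refine Finset.sum_le_sum fun X hX => ?_
        rw [percExp_sum]
        refine (Finset.sum_le_card_nsmul _ _ _ (hterm X hX)).trans ?_
        rw [nsmul_eq_mul]
        gcongr
        exact hpow X
    _ ≤ Real.exp (l * n - Real.log l * (ε * n)) *
          (Real.exp (Real.log 2 / k * n) * Real.exp (1 - c * n)) := by
        rw [Finset.sum_const, nsmul_eq_mul]
        gcongr
        exact card_small_sets_le hl0 hl1 _
    _ = _ := by
        rw [← Real.exp_add, ← Real.exp_add]
        congr 1
        ring

/-- Supercritical percolation on a regular expander of large girth is well-linked with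
exponentially high probability. -/
theorem exists_percExp_not_wellLinked_le {d : ℕ} (hd : 3 ≤ d) {p : ℝ}
    (hp : 1 / ((d : ℝ) - 1) < p) (hp1 : p < 1) {b : ℝ} (hb : 0 < b) :
    ∃ η > (0 : ℝ), ∃ ε > (0 : ℝ), ∃ c > (0 : ℝ), ∃ R : ℕ, 0 < R ∧
      ∀ (V : Type) [Fintype V] [DecidableEq V] (G : SimpleGraph V),
        IsRegularExpander G b d → R < G.girth →
        percExp p (edgeFinset' G) (fun s =>
          if WellLinked (SimpleGraph.fromEdgeSet (↑s : Set (Sym2 V))) η ε then 0 else 1)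
          ≤ (1 + Real.exp 1) * Real.exp (-c * Fintype.card V) := by
  have hd' : (3 : ℝ) ≤ d := by exact_mod_cast hd
  set q : ℝ := 1 / ((d : ℝ) - 1) with hq
  have hq0 : 0 < q := by rw [hq]; apply one_div_pos.2; linarith
  set p₁ := (p + q) / 2 with hp₁
  have hp₁q : q < p₁ := by rw [hp₁]; linarith
  have hp₁1 : p₁ < 1 := by rw [hp₁]; linarith
  set p₂ := (p - p₁) / (1 - p₁) with hp₂
  have hp₂0 : 0 < p₂ := div_pos (by linarith) (by linarith)
  have hp₂1 : p₂ ≤ 1 := by rw [hp₂, div_le_one (by linarith)]; linarith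
  have hpp : 1 - p = (1 - p₁) * (1 - p₂) := by
    have : 1 - p₁ ≠ 0 := by linarith
    rw [hp₂]; field_simp; ring
  set η₀ := 1 - (1 - p₁) / (1 - q) with hη₀
  have hη₀0 : 0 < η₀ := by rw [hη₀, sub_pos, div_lt_one (by linarith)]; linarith
  have hη₀1 : η₀ ≤ 1 := by
    have : 0 ≤ (1 - p₁) / (1 - q) := div_nonneg (by linarith) (by linarith)
    linarith
  obtain ⟨c₁, hc₁, ε₀, hε₀, hpath⟩ := exists_percExp_no_path_le hb (show 0 < d by omega)
    (θ := η₀ / 2 / 8) (by positivity) (by linarith) hp₂0 hp₂1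
  obtain ⟨k, hk⟩ := exists_nat_ge (4 * Real.log 2 / c₁ + 1)
  have hlog2 : 0 < Real.log 2 := Real.log_pos one_lt_two
  have hk1 : (1 : ℝ) ≤ k := by
    have : 0 ≤ 4 * Real.log 2 / c₁ := by positivity
    linarith
  have hk0 : 0 < k := by
    have : (0 : ℝ) < k := by linarith
    exact_mod_cast this
  have hkc : Real.log 2 / k ≤ c₁ / 4 := by
    rw [div_le_iff₀ (by linarith)]
    have : 4 * Real.log 2 / c₁ ≤ k := by linarith
    rw [div_le_iff₀ hc₁] at this
    linarith
  set l := min 1 (c₁ / 8) with hl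
  have hl0 : 0 < l := lt_min one_pos (by positivity)
  have hl1 : l ≤ 1 := min_le_left _ _
  have hlc : l ≤ c₁ / 8 := min_le_right _ _
  have hlog : Real.log l ≤ 0 := Real.log_nonpos hl0.le hl1
  set ε := min ε₀ (min (c₁ / (8 * (1 - Real.log l))) (η₀ / 2 / (8 * d * k))) with hε
  have hε0 : 0 < ε := lt_min hε₀ (lt_min (div_pos hc₁ (by linarith)) (by positivity))
  have hεl : -(Real.log l * ε) ≤ c₁ / 8 := by
    have : ε ≤ c₁ / (8 * (1 - Real.log l)) := (min_le_right _ _).trans (min_le_left _ _)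
    rw [le_div_iff₀ (by linarith)] at this
    nlinarith
  have hεk : 8 * d * k * ε ≤ η₀ / 2 := by
    have : ε ≤ η₀ / 2 / (8 * d * k) := (min_le_right _ _).trans (min_le_right _ _)
    rw [le_div_iff₀ (by positivity)] at this
    linarith
  set c₀ := η₀ ^ 2 / (64 * d * k ^ 2) with hc₀
  have hc₀0 : 0 < c₀ := by positivity
  refine ⟨η₀ / 2, by positivity, ε, hε0, min c₀ (c₁ / 2), lt_min hc₀0 (by positivity), k, hk0, ?_⟩
  intro V _ _ G hG hgirth
  set n : ℝ := ((Fintype.card V : ℕ) : ℝ) with hn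
  have hn0 : 0 ≤ n := Nat.cast_nonneg _
  rw [percExp_union hpp]
  have hlarge := percExp_largeVerts_le hd hG.2 hq hp₁q hp₁1 hη₀ hk0 hgirth.le
  have hsp : ∀ s ⊆ edgeFinset' G, percExp p₂ (edgeFinset' G) (fun t =>
      if WellLinked (SimpleGraph.fromEdgeSet (↑(s ∪ t) : Set (Sym2 V))) (η₀ / 2) ε then 0 else 1)
      ≤ (if ((largeVerts k s).card : ℝ) < η₀ / 2 * n then 1 else 0)
        + Real.exp 1 * Real.exp (-min c₀ (c₁ / 2) * n) := by
    intro s hs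
    by_cases hZ : ((largeVerts k s).card : ℝ) < η₀ / 2 * n
    · rw [if_pos hZ]
      have : percExp p₂ (edgeFinset' G) (fun t =>
          if WellLinked (SimpleGraph.fromEdgeSet (↑(s ∪ t) : Set (Sym2 V))) (η₀ / 2) ε
          then 0 else 1) ≤ 1 := by
        refine (percExp_mono hp₂0.le hp₂1 fun t _ => ?_).trans_eq (percExp_const p₂ _ 1)
        split_ifs <;> norm_num
      have h2 : 0 ≤ Real.exp 1 * Real.exp (-min c₀ (c₁ / 2) * n) := by positivity
      linarith
    · rw [if_neg hZ, zero_add, ← Real.exp_add]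
      refine (percExp_not_wellLinked_le hG hs hk0 hp₂0.le hp₂1 hl0 hl1 hεk (not_lt.1 hZ)
        (fun X A B hAB hA hB hX => hpath V G hG X A B hAB hA hB (hX.trans ?_))).trans ?_
      · gcongr
        exact min_le_left _ _
      · apply Real.exp_le_exp.2
        have h1 : min c₀ (c₁ / 2) ≤ c₁ - Real.log 2 / k - l + Real.log l * ε :=
          (min_le_right _ _).trans (by linarith)
        have := mul_le_mul_of_nonneg_right h1 hn0
        linarith
  calc _ ≤ percExp p₁ (edgeFinset' G) (fun s =>
        (if ((largeVerts k s).card : ℝ) < η₀ / 2 * n then 1 else 0)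
        + Real.exp 1 * Real.exp (-min c₀ (c₁ / 2) * n)) :=
        percExp_mono (by linarith) hp₁1.le hsp
    _ ≤ Real.exp (-c₀ * n) + Real.exp 1 * Real.exp (-min c₀ (c₁ / 2) * n) := by
        rw [percExp_add, percExp_const]
        gcongr
    _ ≤ _ := by
        have : Real.exp (-c₀ * n) ≤ Real.exp (-min c₀ (c₁ / 2) * n) := by
          apply Real.exp_le_exp.2
          have := mul_le_mul_of_nonneg_right (min_le_left c₀ (c₁ / 2)) hn0
          linarith
        linarith

end Separation

section KilledWalk

/-- The adjacency indicator. -/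
def adjW (H : SimpleGraph V) (x y : V) : ℝ := if H.Adj x y then 1 else 0

lemma adjW_nonneg (H : SimpleGraph V) (x y : V) : 0 ≤ adjW H x y := by
  unfold adjW; split_ifs <;> norm_num

lemma adjW_comm (H : SimpleGraph V) (x y : V) : adjW H x y = adjW H y x := by
  simp only [adjW, H.adj_comm]

lemma sum_adjW_le {H : SimpleGraph V} {d : ℕ} (hd : ∀ x, (H.neighborSet x).ncard ≤ d)
    (U : Finset V) (x : V) : ∑ y ∈ U, adjW H x y ≤ d := by
  calc ∑ y ∈ U, adjW H x y ≤ ∑ y, adjW H x y :=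
        Finset.sum_le_sum_of_subset_of_nonneg (Finset.subset_univ _)
          fun y _ _ => adjW_nonneg H x y
    _ = ((Finset.univ.filter (H.Adj x)).card : ℝ) := by
        simp only [adjW]
        rw [Finset.sum_boole]
    _ ≤ d := by exact_mod_cast card_filter_adj_le hd x

/-- The number of edges from `T` to the rest of `U`. -/
def edgeBd (H : SimpleGraph V) (U T : Finset V) : ℝ := ∑ x ∈ T, ∑ y ∈ U \ T, adjW H x y

lemma edgeBd_eq (H : SimpleGraph V) {U T : Finset V} (hT : T ⊆ U) :
    edgeBd H U T = ∑ x ∈ U, ∑ y ∈ U, adjW H x y * if x ∈ T ∧ y ∉ T then 1 else 0 := by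
  rw [edgeBd, ← Finset.sum_subset hT]
  · refine Finset.sum_congr rfl fun x hx => ?_
    rw [← Finset.sum_subset (Finset.sdiff_subset (s := U) (t := T))]
    · refine Finset.sum_congr rfl fun y hy => ?_
      rw [if_pos ⟨hx, (Finset.mem_sdiff.1 hy).2⟩, mul_one]
    · intro y hy hy'
      rw [if_neg, mul_zero]
      exact fun h => hy' (Finset.mem_sdiff.2 ⟨hy, h.2⟩)
  · intro x _ hx
    refine Finset.sum_eq_zero fun y _ => ?_
    rw [if_neg fun h => hx h.1, mul_zero]

/-- The co-area inequality on an edge expander. -/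
lemma coarea_le (H : SimpleGraph V) (U : Finset V) (α : ℝ) (h : V → ℝ)
    (h0 : ∀ x ∈ U, 0 ≤ h x)
    (hexp : ∀ T ⊆ U, (∀ x ∈ T, 0 < h x) → α * T.card ≤ edgeBd H U T) :
    α * ∑ x ∈ U, h x ≤ ∑ x ∈ U, ∑ y ∈ U, adjW H x y * max (h x - h y) 0 := by
  induction hN : (U.filter (fun x => 0 < h x)).card using Nat.strong_induction_on
    generalizing h with
  | _ N ih =>
  set T := U.filter (fun x => 0 < h x) with hT
  have hTU : T ⊆ U := Finset.filter_subset _ _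
  have hz : ∀ x ∈ U, x ∉ T → h x = 0 := by
    intro x hx hxT
    refine le_antisymm (not_lt.1 fun h' => hxT (Finset.mem_filter.2 ⟨hx, h'⟩)) (h0 x hx)
  rcases T.eq_empty_or_nonempty with he | hne
  · rw [Finset.sum_eq_zero fun x hx => hz x hx (by simp [he]), mul_zero]
    exact Finset.sum_nonneg fun x _ => Finset.sum_nonneg fun y _ =>
      mul_nonneg (adjW_nonneg H x y) (le_max_right _ _)
  · obtain ⟨x₀, hx₀, hmin⟩ := T.exists_min_image h hne
    set m := h x₀ with hm
    have hm0 : 0 < m := (Finset.mem_filter.1 hx₀).2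
    set h' : V → ℝ := fun x => h x - m * if x ∈ T then 1 else 0 with hh'
    have hT1 : ∀ x ∈ T, h' x = h x - m := fun x hx => by simp only [hh', if_pos hx, mul_one]
    have hT2 : ∀ x, x ∉ T → h' x = h x := fun x hx => by
      simp only [hh', if_neg hx, mul_zero, sub_zero]
    have h0' : ∀ x ∈ U, 0 ≤ h' x := by
      intro x hx
      by_cases hxT : x ∈ T
      · rw [hT1 x hxT]; linarith [hmin x hxT]
      · rw [hT2 x hxT]; exact h0 x hx
    have hlt : ∀ x ∈ U, 0 < h' x → x ∈ T := by
      intro x hx hpos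
      by_contra hxT
      rw [hT2 x hxT, hz x hx hxT] at hpos
      exact lt_irrefl _ hpos
    have hsub : U.filter (fun x => 0 < h' x) ⊂ T := by
      refine (Finset.ssubset_iff_of_subset fun x hx => ?_).2 ⟨x₀, hx₀, ?_⟩
      · rw [Finset.mem_filter] at hx
        exact hlt x hx.1 hx.2
      · rw [Finset.mem_filter, hT1 x₀ hx₀]
        simp [hm]
    have hrec := ih _ (hN ▸ Finset.card_lt_card hsub) h' h0' (fun T' hT' hpos => by
      refine hexp T' hT' fun x hx => ?_
      exact (Finset.mem_filter.1 (hlt x (hT' hx) (hpos x hx))).2) rfl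
    have hbd := hexp T hTU fun x hx => (Finset.mem_filter.1 hx).2
    rw [edgeBd_eq H hTU] at hbd
    have e1 : ∑ x ∈ U, h x = ∑ x ∈ U, h' x + m * T.card := by
      rw [hh']
      simp only [Finset.sum_sub_distrib, ← Finset.mul_sum]
      rw [Finset.sum_boole]
      have : U.filter (· ∈ T) = T := by
        rw [Finset.filter_mem_eq_inter, Finset.inter_eq_right.2 hTU]
      rw [this]; ring
    have e2 : ∑ x ∈ U, ∑ y ∈ U, adjW H x y * max (h x - h y) 0
        = ∑ x ∈ U, ∑ y ∈ U, adjW H x y * max (h' x - h' y) 0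
          + m * ∑ x ∈ U, ∑ y ∈ U, adjW H x y * if x ∈ T ∧ y ∉ T then 1 else 0 := by
      rw [Finset.mul_sum, ← Finset.sum_add_distrib]
      refine Finset.sum_congr rfl fun x hx => ?_
      rw [Finset.mul_sum, ← Finset.sum_add_distrib]
      refine Finset.sum_congr rfl fun y hy => ?_
      have key : max (h x - h y) 0 = max (h' x - h' y) 0 + m * if x ∈ T ∧ y ∉ T then 1 else 0 := by
        by_cases hxT : x ∈ T
        · by_cases hyT : y ∈ T
          · rw [hT1 x hxT, hT1 y hyT, if_neg (by tauto)]
            simp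
          · rw [hT1 x hxT, hT2 y hyT, if_pos ⟨hxT, hyT⟩, hz y hy hyT]
            have := hmin x hxT
            rw [max_eq_left (by linarith), max_eq_left (by linarith)]
            ring
        · rw [if_neg (by tauto), hT2 x hxT, hz x hx hxT]
          have h1 := h0 y hy
          have h2 := h0' y hy
          rw [max_eq_right (by linarith), max_eq_right (by linarith)]
          ring
      rw [key]; ring
    rw [e1, e2]
    have := mul_le_mul_of_nonneg_left hbd hm0.le
    linarith

/-- The one-sided Cheeger inequality. -/
lemma cheeger_one_sided {H : SimpleGraph V} {d : ℕ} (hd : ∀ x, (H.neighborSet x).ncard ≤ d)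
    (hd0 : 0 < d) (U : Finset V) {α : ℝ} (hα : 0 < α) (g : V → ℝ) (g0 : ∀ x ∈ U, 0 ≤ g x)
    (hexp : ∀ T ⊆ U, (∀ x ∈ T, 0 < g x) → α * T.card ≤ edgeBd H U T) :
    α ^ 2 / (4 * d) * ∑ x ∈ U, g x ^ 2
      ≤ ∑ x ∈ U, ∑ y ∈ U, adjW H x y * max (g x - g y) 0 ^ 2 := by
  have hd' : (0 : ℝ) < d := by exact_mod_cast hd0
  have h1 := coarea_le H U α (fun x => g x ^ 2) (fun x _ => sq_nonneg _) (fun T hT hpos =>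
    hexp T hT fun x hx => lt_of_le_of_ne (g0 x (hT hx)) fun h => by
      have := hpos x hx
      rw [← h] at this
      simp at this)
  set S := ∑ x ∈ U, ∑ y ∈ U, adjW H x y * max (g x - g y) 0 ^ 2 with hS
  have h2 : ∑ x ∈ U, ∑ y ∈ U, adjW H x y * max (g x ^ 2 - g y ^ 2) 0
      ≤ ∑ x ∈ U, ∑ y ∈ U, (2 * d / α * (adjW H x y * max (g x - g y) 0 ^ 2)
        + α / (4 * d) * (adjW H x y * g x ^ 2) + α / (4 * d) * (adjW H x y * g y ^ 2)) := by
    refine Finset.sum_le_sum fun x hx => Finset.sum_le_sum fun y hy => ?_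
    have hx0 := g0 x hx
    have hy0 := g0 y hy
    have key : max (g x ^ 2 - g y ^ 2) 0 ≤ 2 * d / α * max (g x - g y) 0 ^ 2
        + α / (4 * d) * g x ^ 2 + α / (4 * d) * g y ^ 2 := by
      have hpos : (0 : ℝ) ≤ 2 * d / α * max (g x - g y) 0 ^ 2
        + α / (4 * d) * g x ^ 2 + α / (4 * d) * g y ^ 2 := by positivity
      refine max_le ?_ hpos
      rcases le_total (g x) (g y) with h | h
      · have : g x ^ 2 ≤ g y ^ 2 := by gcongr
        linarith
      · rw [max_eq_left (by linarith)]
        have h3 : 0 ≤ (2 * d * (g x - g y) / α - (g x + g y) / 2) ^ 2 * (α / (2 * d)) := by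
          positivity
        have h4 : (2 * d * (g x - g y) / α - (g x + g y) / 2) ^ 2 * (α / (2 * d))
            = 2 * d / α * (g x - g y) ^ 2 - (g x ^ 2 - g y ^ 2)
              + α / (8 * d) * (g x + g y) ^ 2 := by
          field_simp
          ring
        have h5 : α / (8 * d) * (g x + g y) ^ 2 ≤ α / (8 * d) * (2 * g x ^ 2 + 2 * g y ^ 2) := by
          gcongr
          nlinarith [sq_nonneg (g x - g y)]
        have h6 : α / (8 * d) * (2 * g x ^ 2 + 2 * g y ^ 2)
            = α / (4 * d) * g x ^ 2 + α / (4 * d) * g y ^ 2 := by field_simp; ring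
        linarith
    calc _ ≤ adjW H x y * (2 * d / α * max (g x - g y) 0 ^ 2
        + α / (4 * d) * g x ^ 2 + α / (4 * d) * g y ^ 2) :=
          mul_le_mul_of_nonneg_left key (adjW_nonneg H x y)
      _ = _ := by ring
  have h3 : ∑ x ∈ U, ∑ y ∈ U, adjW H x y * g x ^ 2 ≤ d * ∑ x ∈ U, g x ^ 2 := by
    rw [Finset.mul_sum]
    refine Finset.sum_le_sum fun x _ => ?_
    rw [← Finset.sum_mul]
    exact mul_le_mul_of_nonneg_right (sum_adjW_le hd U x) (sq_nonneg _)
  have h4 : ∑ x ∈ U, ∑ y ∈ U, adjW H x y * g y ^ 2 ≤ d * ∑ x ∈ U, g x ^ 2 := by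
    rw [Finset.sum_comm]
    simpa only [adjW_comm H] using h3
  simp only [Finset.sum_add_distrib, ← Finset.mul_sum] at h2
  rw [← hS] at h2
  have h5 : α / (4 * d) * (∑ x ∈ U, ∑ y ∈ U, adjW H x y * g x ^ 2)
      ≤ α / (4 * d) * (d * ∑ x ∈ U, g x ^ 2) := by gcongr
  have h6 : α / (4 * d) * (∑ x ∈ U, ∑ y ∈ U, adjW H x y * g y ^ 2)
      ≤ α / (4 * d) * (d * ∑ x ∈ U, g x ^ 2) := by gcongr
  have h7 : α / (4 * d) * (d * ∑ x ∈ U, g x ^ 2) = α / 4 * ∑ x ∈ U, g x ^ 2 := by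
    field_simp
  have h8 : α / 2 * ∑ x ∈ U, g x ^ 2 ≤ 2 * d / α * S := by
    linarith
  calc α ^ 2 / (4 * d) * ∑ x ∈ U, g x ^ 2
      = α / (2 * d) * (α / 2 * ∑ x ∈ U, g x ^ 2) := by field_simp; ring
    _ ≤ α / (2 * d) * (2 * d / α * S) := by gcongr
    _ = S := by field_simp

lemma exists_median (U : Finset V) (u : V → ℝ) :
    ∃ c, 2 * (U.filter (fun x => c < u x)).card ≤ U.card ∧
      2 * (U.filter (fun x => u x < c)).card ≤ U.card := by
  rcases U.eq_empty_or_nonempty with rfl | hne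
  · exact ⟨0, by simp, by simp⟩
  set M := U.filter (fun z => 2 * (U.filter (fun x => u z < u x)).card ≤ U.card) with hM
  have hMne : M.Nonempty := by
    obtain ⟨z, hz, hmax⟩ := U.exists_max_image u hne
    refine ⟨z, Finset.mem_filter.2 ⟨hz, ?_⟩⟩
    rw [Finset.filter_eq_empty_iff.2 fun x hx => not_lt.2 (hmax x hx)]
    simp
  obtain ⟨z, hz, hmin⟩ := M.exists_min_image u hMne
  refine ⟨u z, (Finset.mem_filter.1 hz).2, ?_⟩
  rcases (U.filter (fun x => u x < u z)).eq_empty_or_nonempty with he | hne'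
  · rw [he]; simp
  · obtain ⟨w, hw, hmax⟩ := (U.filter (fun x => u x < u z)).exists_max_image u hne'
    rw [Finset.mem_filter] at hw
    have hwM : w ∉ M := fun h => absurd (hmin w h) (not_le.2 hw.2)
    have h1 : U.card < 2 * (U.filter (fun x => u w < u x)).card := by
      by_contra h
      exact hwM (Finset.mem_filter.2 ⟨hw.1, not_lt.1 h⟩)
    have h2 : Disjoint (U.filter (fun x => u x < u z)) (U.filter (fun x => u w < u x)) := by
      rw [Finset.disjoint_left]
      intro x hx hx'
      exact absurd (hmax x hx) (not_le.2 (Finset.mem_filter.1 hx').2)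
    have h3 := Finset.card_union_of_disjoint h2
    have h4 := Finset.card_le_card (Finset.union_subset (Finset.filter_subset
      (fun x => u x < u z) U) (Finset.filter_subset (fun x => u w < u x) U))
    omega

/-- `U` induces an edge expander of `H`. -/
def ExpandsOn (H : SimpleGraph V) (U : Finset V) (α : ℝ) : Prop :=
  ∀ T ⊆ U, 2 * T.card ≤ U.card → α * T.card ≤ edgeBd H U T

/-- The Poincaré inequality for functions vanishing on `T`. -/
lemma poincare {H : SimpleGraph V} {d : ℕ} (hd : ∀ x, (H.neighborSet x).ncard ≤ d)
    (hd0 : 0 < d) {U : Finset V} {α : ℝ} (hα : 0 < α) (hU : ExpandsOn H U α) {T : Finset V}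
    (hT : T ⊆ U) (u : V → ℝ) (hu : ∀ x ∈ T, u x = 0) :
    α ^ 2 / (4 * d) * (T.card / U.card * ∑ x ∈ U, u x ^ 2)
      ≤ ∑ x ∈ U, ∑ y ∈ U, adjW H x y * (u x - u y) ^ 2 := by
  have hd' : (0 : ℝ) < d := by exact_mod_cast hd0
  obtain ⟨c, hc1, hc2⟩ := exists_median U u
  have hp := cheeger_one_sided hd hd0 U hα (fun x => max (u x - c) 0)
    (fun x _ => le_max_right _ _) (fun S hS hpos => hU S hS (by
      have : S ⊆ U.filter (fun x => c < u x) := fun x hx => Finset.mem_filter.2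
        ⟨hS hx, by simpa using hpos x hx⟩
      have := Finset.card_le_card this
      omega))
  have hm := cheeger_one_sided hd hd0 U hα (fun x => max (c - u x) 0)
    (fun x _ => le_max_right _ _) (fun S hS hpos => hU S hS (by
      have : S ⊆ U.filter (fun x => u x < c) := fun x hx => Finset.mem_filter.2
        ⟨hS hx, by simpa using hpos x hx⟩
      have := Finset.card_le_card this
      omega))
  have h1 : α ^ 2 / (4 * d) * ∑ x ∈ U, (u x - c) ^ 2
      ≤ ∑ x ∈ U, ∑ y ∈ U, adjW H x y * (u x - u y) ^ 2 := by
    have e1 : ∑ x ∈ U, (u x - c) ^ 2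
        = ∑ x ∈ U, max (u x - c) 0 ^ 2 + ∑ x ∈ U, max (c - u x) 0 ^ 2 := by
      rw [← Finset.sum_add_distrib]
      refine Finset.sum_congr rfl fun x _ => ?_
      rcases le_total c (u x) with h | h
      · rw [max_eq_left (by linarith), max_eq_right (by linarith)]; ring
      · rw [max_eq_right (by linarith), max_eq_left (by linarith)]; ring
    rw [e1, mul_add]
    refine (add_le_add hp hm).trans ?_
    rw [← Finset.sum_add_distrib]
    refine Finset.sum_le_sum fun x _ => ?_
    rw [← Finset.sum_add_distrib]
    refine Finset.sum_le_sum fun y _ => ?_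
    rw [← mul_add]
    refine mul_le_mul_of_nonneg_left ?_ (adjW_nonneg H x y)
    have hlip : ∀ p q r : ℝ, p ≤ q → max (max (q - r) 0 - max (p - r) 0) 0 ^ 2 ≤ (q - p) ^ 2 := by
      intro p q r hpq
      refine pow_le_pow_left₀ (le_max_right _ _) ?_ 2
      refine max_le ?_ (by linarith)
      rcases le_total r p with h | h
      · rw [max_eq_left (by linarith), max_eq_left (by linarith)]; linarith
      · rw [max_eq_right (a := p - r) (by linarith), sub_zero]
        exact max_le (by linarith) (by linarith)
    have hzero : ∀ p q r : ℝ, p ≤ q → max (max (p - r) 0 - max (q - r) 0) 0 = 0 := by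
      intro p q r hpq
      refine max_eq_right ?_
      have : max (p - r) 0 ≤ max (q - r) 0 := max_le_max (by linarith) le_rfl
      linarith
    have e2 : ∀ z, c - u z = -u z - (-c) := fun z => by ring
    simp only [e2]
    rcases le_total (u x) (u y) with h | h
    · rw [hzero (u x) (u y) c h]
      have := hlip (-u y) (-u x) (-c) (by linarith)
      nlinarith
    · rw [hzero (-u x) (-u y) (-c) (by linarith)]
      have := hlip (u y) (u x) c h
      nlinarith
  refine le_trans ?_ h1
  refine mul_le_mul_of_nonneg_left ?_ (by positivity)
  rcases U.eq_empty_or_nonempty with rfl | hne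
  · simp
  have hm0 : (0 : ℝ) < U.card := by exact_mod_cast hne.card_pos
  have e3 : ∑ x ∈ U, (u x - c) ^ 2
      = ∑ x ∈ U, u x ^ 2 - 2 * c * ∑ x ∈ U, u x + U.card * c ^ 2 := by
    simp only [sub_sq, Finset.sum_add_distrib, Finset.sum_sub_distrib, Finset.sum_const,
      nsmul_eq_mul]
    rw [Finset.mul_sum]
    congr 2
    refine Finset.sum_congr rfl fun x _ => by ring
  have e4 : ∑ x ∈ U, u x = ∑ x ∈ U \ T, u x := by
    rw [← Finset.sum_sdiff hT, Finset.sum_eq_zero (s := T) hu, add_zero]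
  have e5 : (∑ x ∈ U \ T, u x) ^ 2 ≤ (U.card - T.card) * ∑ x ∈ U, u x ^ 2 := by
    have h2 := sq_sum_le_card_mul_sum_sq (s := U \ T) (f := u)
    rw [Finset.card_sdiff_of_subset hT, Nat.cast_sub (Finset.card_le_card hT)] at h2
    refine h2.trans (mul_le_mul_of_nonneg_left ?_ ?_)
    · exact Finset.sum_le_sum_of_subset_of_nonneg Finset.sdiff_subset fun x _ _ => sq_nonneg _
    · rw [sub_nonneg]; exact_mod_cast Finset.card_le_card hT
  rw [← e4] at e5
  rw [e3, div_mul_eq_mul_div, div_le_iff₀ hm0]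
  nlinarith [sq_nonneg (U.card * c - ∑ x ∈ U, u x)]

/-- One step of the lazy random walk on `U`. -/
def lazyStep (H : SimpleGraph V) (d : ℕ) (U : Finset V) (u : V → ℝ) (x : V) : ℝ :=
  u x - 1 / (2 * d) * ∑ y ∈ U, adjW H x y * (u x - u y)

lemma sum_lazyStep_sq_le {H : SimpleGraph V} {d : ℕ} (hd : ∀ x, (H.neighborSet x).ncard ≤ d)
    (hd0 : 0 < d) (U : Finset V) (u : V → ℝ) :
    ∑ x ∈ U, lazyStep H d U u x ^ 2 ≤ ∑ x ∈ U, u x ^ 2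
      - 1 / (4 * d) * ∑ x ∈ U, ∑ y ∈ U, adjW H x y * (u x - u y) ^ 2 := by
  have hd' : (0 : ℝ) < d := by exact_mod_cast hd0
  set D := ∑ x ∈ U, ∑ y ∈ U, adjW H x y * (u x - u y) ^ 2 with hD
  have e1 : ∑ x ∈ U, lazyStep H d U u x ^ 2 = ∑ x ∈ U, u x ^ 2
      - 1 / d * ∑ x ∈ U, u x * ∑ y ∈ U, adjW H x y * (u x - u y)
      + 1 / (4 * d ^ 2) * ∑ x ∈ U, (∑ y ∈ U, adjW H x y * (u x - u y)) ^ 2 := by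
    rw [Finset.mul_sum, Finset.mul_sum, ← Finset.sum_sub_distrib, ← Finset.sum_add_distrib]
    refine Finset.sum_congr rfl fun x _ => ?_
    rw [lazyStep]
    field_simp
    ring
  have e2 : 2 * ∑ x ∈ U, u x * ∑ y ∈ U, adjW H x y * (u x - u y) = D := by
    have s1 : ∑ x ∈ U, u x * ∑ y ∈ U, adjW H x y * (u x - u y)
        = ∑ x ∈ U, ∑ y ∈ U, adjW H x y * (u x * (u x - u y)) := by
      refine Finset.sum_congr rfl fun x _ => ?_
      rw [Finset.mul_sum]
      exact Finset.sum_congr rfl fun y _ => by ring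
    have s2 : ∑ x ∈ U, ∑ y ∈ U, adjW H x y * (u x * (u x - u y))
        = ∑ x ∈ U, ∑ y ∈ U, adjW H x y * (u y * (u y - u x)) := by
      rw [Finset.sum_comm]
      refine Finset.sum_congr rfl fun x _ => Finset.sum_congr rfl fun y _ => ?_
      rw [adjW_comm]
    rw [two_mul, s1]
    nth_rewrite 2 [s2]
    rw [← Finset.sum_add_distrib]
    refine Finset.sum_congr rfl fun x _ => ?_
    rw [← Finset.sum_add_distrib]
    exact Finset.sum_congr rfl fun y _ => by ring
  have e3 : ∑ x ∈ U, (∑ y ∈ U, adjW H x y * (u x - u y)) ^ 2 ≤ d * D := by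
    rw [hD, Finset.mul_sum]
    refine Finset.sum_le_sum fun x _ => ?_
    have hcs := Finset.sum_mul_sq_le_sq_mul_sq U (fun y => adjW H x y)
      (fun y => adjW H x y * (u x - u y))
    have hsq : ∀ y, adjW H x y ^ 2 = adjW H x y := by
      intro y; unfold adjW; split_ifs <;> norm_num
    have hsq' : ∀ y, adjW H x y * (adjW H x y * (u x - u y)) = adjW H x y * (u x - u y) := by
      intro y; rw [← mul_assoc, ← sq, hsq]
    simp only [hsq, hsq', mul_pow] at hcs
    refine hcs.trans (mul_le_mul_of_nonneg_right (sum_adjW_le hd U x) ?_)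
    exact Finset.sum_nonneg fun y _ => mul_nonneg (adjW_nonneg H x y) (sq_nonneg _)
  rw [e1]
  have e4 : 1 / (4 * (d : ℝ) ^ 2) * ∑ x ∈ U, (∑ y ∈ U, adjW H x y * (u x - u y)) ^ 2
      ≤ 1 / (4 * (d : ℝ) ^ 2) * (d * D) := by gcongr
  have e5 : 1 / (4 * (d : ℝ) ^ 2) * (d * D) = 1 / (4 * d) * D := by field_simp
  have e6 : 1 / (d : ℝ) * ∑ x ∈ U, u x * ∑ y ∈ U, adjW H x y * (u x - u y)
      = 2 * (1 / (4 * d) * D) := by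
    rw [← e2]; field_simp; ring
  linarith

/-- The probability that the lazy random walk on `U` avoids `T` for `l` steps. -/
def avoidProb (H : SimpleGraph V) (d : ℕ) (U T : Finset V) : ℕ → V → ℝ
  | 0, x => if x ∈ T then 0 else 1
  | l + 1, x => if x ∈ T then 0 else lazyStep H d U (avoidProb H d U T l) x

lemma avoidProb_eq_zero (H : SimpleGraph V) (d : ℕ) (U T : Finset V) (l : ℕ) {x : V}
    (hx : x ∈ T) : avoidProb H d U T l x = 0 := by
  cases l <;> simp [avoidProb, hx]

lemma sum_avoidProb_le {H : SimpleGraph V} {d : ℕ} (hd : ∀ x, (H.neighborSet x).ncard ≤ d)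
    (hd0 : 0 < d) {U : Finset V} {α : ℝ} (hα : 0 < α) (hU : ExpandsOn H U α) {T : Finset V}
    (hT : T ⊆ U) (l : ℕ) :
    ∑ x ∈ U, avoidProb H d U T l x
      ≤ U.card * Real.exp (-(α ^ 2 / (16 * d ^ 2) * (T.card / U.card) * l) / 2) := by
  have hd' : (0 : ℝ) < d := by exact_mod_cast hd0
  set ρ := α ^ 2 / (16 * d ^ 2) * (T.card / U.card : ℝ) with hρ
  have hsq : ∑ x ∈ U, avoidProb H d U T l x ^ 2 ≤ U.card * Real.exp (-(ρ * l)) := by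
    induction l with
    | zero =>
      simp only [avoidProb, Nat.cast_zero, mul_zero, neg_zero, Real.exp_zero, mul_one]
      calc _ ≤ ∑ x ∈ U, (1 : ℝ) := Finset.sum_le_sum fun x _ => by split_ifs <;> norm_num
        _ = _ := by simp
    | succ l ih =>
      set u := avoidProb H d U T l with hu
      have h1 : ∑ x ∈ U, avoidProb H d U T (l + 1) x ^ 2 ≤ ∑ x ∈ U, lazyStep H d U u x ^ 2 := by
        refine Finset.sum_le_sum fun x _ => ?_
        simp only [avoidProb]
        split_ifs
        · simpa using sq_nonneg _
        · exact le_rfl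
      have h2 := sum_lazyStep_sq_le hd hd0 U u
      have h3 := poincare hd hd0 hα hU hT u fun x hx => avoidProb_eq_zero H d U T l hx
      have h4 : ρ * ∑ x ∈ U, u x ^ 2 ≤
          1 / (4 * d) * ∑ x ∈ U, ∑ y ∈ U, adjW H x y * (u x - u y) ^ 2 := by
        refine le_trans (le_of_eq ?_) (mul_le_mul_of_nonneg_left h3 (by positivity))
        rw [hρ]
        ring
      have h5 : 0 ≤ ∑ x ∈ U, u x ^ 2 := Finset.sum_nonneg fun x _ => sq_nonneg _
      calc _ ≤ (1 - ρ) * ∑ x ∈ U, u x ^ 2 := by linarith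
        _ ≤ Real.exp (-ρ) * ∑ x ∈ U, u x ^ 2 := by
            gcongr
            exact Real.one_sub_le_exp_neg ρ
        _ ≤ Real.exp (-ρ) * (U.card * Real.exp (-(ρ * l))) := by gcongr
        _ = _ := by
            rw [mul_left_comm, ← Real.exp_add]
            congr 2
            push_cast
            ring
  have hcs := sq_sum_le_card_mul_sum_sq (s := U) (f := avoidProb H d U T l)
  refine abs_le_of_sq_le_sq' ?_ (by positivity) |>.2
  calc _ ≤ (U.card : ℝ) * (U.card * Real.exp (-(ρ * l))) := hcs.trans (by gcongr)
    _ = _ := by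
        rw [mul_pow, ← Real.exp_nat_mul]
        push_cast
        rw [show 2 * (-(ρ * l) / 2) = -(ρ * l) by ring]
        ring

end KilledWalk

section Hitting

lemma sum_lazyStep {ι : Type*} (H : SimpleGraph V) (d : ℕ) (U : Finset V) (I : Finset ι)
    (u : ι → V → ℝ) (x : V) :
    ∑ i ∈ I, lazyStep H d U (u i) x = lazyStep H d U (fun z => ∑ i ∈ I, u i z) x := by
  simp only [lazyStep]
  rw [Finset.sum_sub_distrib, ← Finset.mul_sum, Finset.sum_comm]
  congr 2
  refine Finset.sum_congr rfl fun y _ => ?_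
  rw [← Finset.mul_sum, Finset.sum_sub_distrib]

/-- Some possible position after a lazy step is at most the average. -/
lemma exists_le_lazyStep {H : SimpleGraph V} {d : ℕ} (hd : ∀ x, (H.neighborSet x).ncard ≤ d)
    (hd0 : 0 < d) (U : Finset V) (F : V → ℝ) (x : V) :
    ∃ y, (y = x ∨ y ∈ U ∧ H.Adj x y) ∧ F y ≤ lazyStep H d U F x := by
  have hd' : (0 : ℝ) < d := by exact_mod_cast hd0
  by_contra hcon
  push Not at hcon
  have hx := hcon x (Or.inl rfl)
  set P := lazyStep H d U F x with hP
  have h1 : ∑ y ∈ U, adjW H x y * (F x - F y) ≤ ∑ y ∈ U, adjW H x y * (F x - P) := by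
    refine Finset.sum_le_sum fun y hy => ?_
    by_cases hadj : H.Adj x y
    · have := hcon y (Or.inr ⟨hy, hadj⟩)
      exact mul_le_mul_of_nonneg_left (by linarith) (adjW_nonneg H x y)
    · simp [adjW, hadj]
  rw [← Finset.sum_mul] at h1
  have h2 : (∑ y ∈ U, adjW H x y) * (F x - P) ≤ d * (F x - P) :=
    mul_le_mul_of_nonneg_right (sum_adjW_le hd U x) (by linarith)
  have h3 : 1 / (2 * (d : ℝ)) * ∑ y ∈ U, adjW H x y * (F x - F y)
      ≤ 1 / (2 * d) * (d * (F x - P)) := by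
    gcongr
    exact h1.trans h2
  have h4 : 1 / (2 * (d : ℝ)) * (d * (F x - P)) = (F x - P) / 2 := by field_simp
  have h5 : P = F x - 1 / (2 * d) * ∑ y ∈ U, adjW H x y * (F x - F y) := rfl
  linarith

lemma induce_insert_connected {H : SimpleGraph V} {W : Finset V} {x y : V}
    (hW : (H.induce (↑W : Set V)).Connected) (hy : y ∈ W) (hxy : x = y ∨ H.Adj x y) :
    (H.induce (↑(insert x W) : Set V)).Connected := by
  rcases hxy with rfl | hxy
  · rwa [Finset.insert_eq_of_mem hy]
  · have h1 := H.induce_pair_connected_of_adj hxy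
    have h2 := SimpleGraph.induce_union_connected h1.preconnected hW.preconnected
      ⟨y, by simp, by exact_mod_cast hy⟩
    have e : (↑(insert x W) : Set V) = {x, y} ∪ ↑W := by
      ext z
      simp only [Finset.coe_insert, Set.mem_insert_iff, Finset.mem_coe, Set.mem_union,
        Set.mem_singleton_iff]
      constructor
      · tauto
      · rintro ((h | rfl) | h)
        · exact Or.inl h
        · exact Or.inr hy
        · exact Or.inr h
    rw [e]
    exact h2

lemma induce_singleton_connected (H : SimpleGraph V) (x : V) :
    (H.induce (↑({x} : Finset V) : Set V)).Connected := by
  rw [Finset.coe_singleton]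
  have : Subsingleton ({x} : Set V) := Set.subsingleton_coe _ |>.2 Set.subsingleton_singleton
  exact (SimpleGraph.connected_iff _).2 ⟨fun a b => by rw [Subsingleton.elim a b], ⟨⟨x, rfl⟩⟩⟩

/-- A short connected set whose number of missed targets is at most the expectation for the
lazy random walk. -/
lemma exists_connected_few_missed {ι : Type*} {H : SimpleGraph V} {d : ℕ}
    (hd : ∀ x, (H.neighborSet x).ncard ≤ d) (hd0 : 0 < d) (U : Finset V) (T : ι → Finset V)
    (l : ℕ) : ∀ (I : Finset ι), ∀ x ∈ U, ∃ W ⊆ U, x ∈ W ∧ (H.induce (↑W : Set V)).Connected ∧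
      W.card ≤ l + 1 ∧ ((I.filter (fun i => Disjoint W (T i))).card : ℝ)
        ≤ ∑ i ∈ I, avoidProb H d U (T i) l x := by
  induction l with
  | zero =>
    intro I x hx
    refine ⟨{x}, by simpa using hx, by simp, induce_singleton_connected H x, by simp, ?_⟩
    rw [Finset.card_filter]
    push_cast
    refine Finset.sum_le_sum fun i _ => ?_
    simp only [Finset.disjoint_singleton_left, avoidProb]
    split_ifs <;> simp_all
  | succ l ih =>
    intro I x hx
    set I' := I.filter (fun i => x ∉ T i) with hI'
    obtain ⟨y, hy, hle⟩ := exists_le_lazyStep hd hd0 U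
      (fun z => ∑ i ∈ I', avoidProb H d U (T i) l z) x
    have hyU : y ∈ U := by
      rcases hy with rfl | h
      · exact hx
      · exact h.1
    obtain ⟨W, hWU, hyW, hWc, hWl, hWm⟩ := ih I' y hyU
    refine ⟨insert x W, Finset.insert_subset hx hWU, Finset.mem_insert_self _ _,
      induce_insert_connected hWc hyW ?_, (Finset.card_insert_le _ _).trans (by omega), ?_⟩
    · rcases hy with h | h
      · exact Or.inl h.symm
      · exact Or.inr h.2
    · have e1 : I.filter (fun i => Disjoint (insert x W) (T i))
          = I'.filter (fun i => Disjoint W (T i)) := by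
        rw [hI', Finset.filter_filter]
        refine Finset.filter_congr fun i _ => ?_
        rw [Finset.disjoint_insert_left]
      have e2 : ∑ i ∈ I, avoidProb H d U (T i) (l + 1) x
          = ∑ i ∈ I', lazyStep H d U (avoidProb H d U (T i) l) x := by
        rw [hI', Finset.sum_filter]
        refine Finset.sum_congr rfl fun i _ => ?_
        simp only [avoidProb]
        split_ifs <;> simp_all
      rw [e1, e2, sum_lazyStep]
      exact hWm.trans hle

/-- A short connected set missing few targets on average over the starting point. -/
lemma exists_connected_few_missed_avg {ι : Type*} {H : SimpleGraph V} {d : ℕ}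
    (hd : ∀ x, (H.neighborSet x).ncard ≤ d) (hd0 : 0 < d) {U : Finset V} (hne : U.Nonempty)
    {α : ℝ} (hα : 0 < α) (hU : ExpandsOn H U α) (I : Finset ι) (T : ι → Finset V)
    (hT : ∀ i ∈ I, T i ⊆ U) (l : ℕ) :
    ∃ W ⊆ U, (H.induce (↑W : Set V)).Connected ∧ W.card ≤ l + 1 ∧
      ((I.filter (fun i => Disjoint W (T i))).card : ℝ)
        ≤ ∑ i ∈ I, Real.exp (-(α ^ 2 / (16 * d ^ 2) * ((T i).card / U.card) * l) / 2) := by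
  have h1 : ∑ x ∈ U, ∑ i ∈ I, avoidProb H d U (T i) l x ≤ ∑ x ∈ U,
      ∑ i ∈ I, Real.exp (-(α ^ 2 / (16 * d ^ 2) * ((T i).card / U.card) * l) / 2) := by
    rw [Finset.sum_comm, Finset.sum_const, nsmul_eq_mul, Finset.mul_sum]
    exact Finset.sum_le_sum fun i hi => sum_avoidProb_le hd hd0 hα hU (hT i hi) l
  obtain ⟨x, hx, hle⟩ := Finset.exists_le_of_sum_le hne h1
  obtain ⟨W, hWU, -, hWc, hWl, hWm⟩ := exists_connected_few_missed hd hd0 U T l I x hx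
  exact ⟨W, hWU, hWc, hWl, hWm.trans hle⟩

/-- The neighbours of `S` in `U`. -/
def nbrsIn (H : SimpleGraph V) (U S : Finset V) : Finset V :=
  (U \ S).filter (fun y => ∃ x ∈ S, H.Adj x y)

lemma edgeBd_le (H : SimpleGraph V) {d : ℕ} (hd : ∀ x, (H.neighborSet x).ncard ≤ d)
    (U S : Finset V) : edgeBd H U S ≤ d * (nbrsIn H U S).card := by
  rw [edgeBd, Finset.sum_comm]
  have h1 : ∑ y ∈ nbrsIn H U S, ∑ x ∈ S, adjW H x y = ∑ y ∈ U \ S, ∑ x ∈ S, adjW H x y := by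
    refine Finset.sum_subset (Finset.filter_subset _ _) fun y hy hy' => ?_
    refine Finset.sum_eq_zero fun x hx => ?_
    rw [adjW, if_neg]
    exact fun h => hy' (Finset.mem_filter.2 ⟨hy, x, hx, h⟩)
  rw [← h1, mul_comm, ← nsmul_eq_mul]
  refine Finset.sum_le_card_nsmul _ _ _ fun y _ => ?_
  simp only [adjW_comm H _ y]
  exact sum_adjW_le hd S y

lemma card_nbrsIn_le (H : SimpleGraph V) (U S : Finset V) :
    ((nbrsIn H U S).card : ℝ) ≤ edgeBd H U S := by
  rw [edgeBd, Finset.sum_comm]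
  have h1 : ∑ y ∈ nbrsIn H U S, (1 : ℝ) ≤ ∑ y ∈ nbrsIn H U S, ∑ x ∈ S, adjW H x y := by
    refine Finset.sum_le_sum fun y hy => ?_
    obtain ⟨-, x, hx, hxy⟩ := Finset.mem_filter.1 hy
    have := Finset.single_le_sum (f := fun x => adjW H x y) (fun z _ => adjW_nonneg H z y) hx
    refine le_trans ?_ this
    simp [adjW, hxy]
  rw [Finset.sum_const, nsmul_eq_mul, mul_one] at h1
  refine h1.trans (Finset.sum_le_sum_of_subset_of_nonneg (Finset.filter_subset _ _) ?_)
  exact fun y _ _ => Finset.sum_nonneg fun x _ => adjW_nonneg H x y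

lemma edgeBd_compl (H : SimpleGraph V) {U S : Finset V} (hS : S ⊆ U) :
    edgeBd H U (U \ S) = edgeBd H U S := by
  rw [edgeBd, edgeBd, Finset.sdiff_sdiff_eq_self hS, Finset.sum_comm]
  exact Finset.sum_congr rfl fun x _ => Finset.sum_congr rfl fun y _ => adjW_comm H y x

/-- The ball of radius `r` around `S` inside `U`. -/
def ballIn (H : SimpleGraph V) (U S : Finset V) : ℕ → Finset V
  | 0 => S
  | r + 1 => ballIn H U S r ∪ nbrsIn H U (ballIn H U S r)

lemma ballIn_subset (H : SimpleGraph V) {U S : Finset V} (hS : S ⊆ U) (r : ℕ) :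
    ballIn H U S r ⊆ U := by
  induction r with
  | zero => exact hS
  | succ r ih => 
    exact Finset.union_subset ih ((Finset.filter_subset _ _).trans Finset.sdiff_subset)

lemma ballIn_mono (H : SimpleGraph V) (U S : Finset V) : Monotone (ballIn H U S) :=
  monotone_nat_of_le_succ fun _ => Finset.subset_union_left

lemma exists_connected_of_mem_ballIn (H : SimpleGraph V) {U S : Finset V} (hS : S ⊆ U) (r : ℕ) :
    ∀ x ∈ ballIn H U S r, ∃ W ⊆ U, x ∈ W ∧ (H.induce (↑W : Set V)).Connected ∧
      W.card ≤ r + 1 ∧ ¬ Disjoint W S := by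
  induction r with
  | zero =>
    intro x hx
    refine ⟨{x}, by simpa using hS hx, by simp, induce_singleton_connected H x, by simp, ?_⟩
    rw [Finset.disjoint_singleton_left, not_not]
    exact hx
  | succ r ih =>
    intro x hx
    rcases Finset.mem_union.1 hx with h | h
    · obtain ⟨W, h1, h2, h3, h4, h5⟩ := ih x h
      exact ⟨W, h1, h2, h3, by omega, h5⟩
    · obtain ⟨hxU, y, hy, hyx⟩ := Finset.mem_filter.1 h
      obtain ⟨W, h1, h2, h3, h4, h5⟩ := ih y hy
      refine ⟨insert x W, Finset.insert_subset (Finset.mem_sdiff.1 hxU).1 h1,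
        Finset.mem_insert_self _ _, induce_insert_connected h3 h2 (Or.inr hyx.symm),
        (Finset.card_insert_le _ _).trans (by omega), fun h => h5 ?_⟩
      exact Finset.disjoint_of_subset_left (Finset.subset_insert _ _) h

lemma card_ballIn {H : SimpleGraph V} {d : ℕ} (hd : ∀ x, (H.neighborSet x).ncard ≤ d)
    (hd0 : 0 < d) {U : Finset V} {α : ℝ} (hα : 0 < α) (hU : ExpandsOn H U α) {S : Finset V}
    (hS : S ⊆ U) (r : ℕ) :
    (U.card : ℝ) / 2 < (ballIn H U S r).card ∨
      (1 + r * (α / d)) * S.card ≤ (ballIn H U S r).card := by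
  have hd' : (0 : ℝ) < d := by exact_mod_cast hd0
  induction r with
  | zero => right; simp [ballIn]
  | succ r ih =>
    have hmono : ((ballIn H U S r).card : ℝ) ≤ (ballIn H U S (r + 1)).card := by
      exact_mod_cast Finset.card_le_card (ballIn_mono H U S (Nat.le_succ r))
    by_cases hbig : (U.card : ℝ) / 2 < (ballIn H U S r).card
    · exact Or.inl (hbig.trans_le hmono)
    · right
      have ih := ih.resolve_left hbig
      have h2 : 2 * (ballIn H U S r).card ≤ U.card := by
        have : 2 * ((ballIn H U S r).card : ℝ) ≤ U.card := by linarith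
        exact_mod_cast this
      have h3 := (hU _ (ballIn_subset H hS r) h2).trans (edgeBd_le H hd U _)
      have h4 : (ballIn H U S (r + 1)).card
          = (ballIn H U S r).card + (nbrsIn H U (ballIn H U S r)).card := by
        refine Finset.card_union_of_disjoint (Finset.disjoint_left.2 fun x hx hx' => ?_)
        exact (Finset.mem_sdiff.1 (Finset.mem_filter.1 hx').1).2 hx
      have h5 : (S.card : ℝ) ≤ (ballIn H U S r).card := by
        exact_mod_cast Finset.card_le_card (ballIn_mono H U S (Nat.zero_le r))
      have h6 : α / d * S.card ≤ (nbrsIn H U (ballIn H U S r)).card := by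
        rw [div_mul_eq_mul_div, div_le_iff₀ hd']
        have : α * S.card ≤ α * (ballIn H U S r).card := by gcongr
        linarith
      rw [h4]
      push_cast
      linarith

lemma induce_union_biUnion_connected {ι : Type*} (H : SimpleGraph V) {W : Finset V}
    (hW : (H.induce (↑W : Set V)).Connected) (J : Finset ι) (P : ι → Finset V)
    (hP : ∀ j ∈ J, (H.induce (↑(P j) : Set V)).Connected) (hm : ∀ j ∈ J, ¬ Disjoint W (P j)) :
    (H.induce (↑(W ∪ J.biUnion P) : Set V)).Connected := by
  induction J using Finset.induction_on with
  | empty => rw [Finset.biUnion_empty, Finset.union_empty]; exact hW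
  | insert j J hj ih =>
    have h1 := ih (fun i hi => hP i (Finset.mem_insert_of_mem hi))
      (fun i hi => hm i (Finset.mem_insert_of_mem hi))
    obtain ⟨z, hz, hz'⟩ := Finset.not_disjoint_iff.1 (hm j (Finset.mem_insert_self _ _))
    have h2 := SimpleGraph.induce_union_connected h1.preconnected
      (hP j (Finset.mem_insert_self _ _)).preconnected
      ⟨z, by exact_mod_cast Finset.mem_union_left _ hz, by exact_mod_cast hz'⟩
    have e : (↑(W ∪ (insert j J).biUnion P) : Set V) = ↑(W ∪ J.biUnion P) ∪ ↑(P j) := by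
      rw [← Finset.coe_union, Finset.biUnion_insert]
      congr 1
      ext x
      simp only [Finset.mem_union]
      tauto
    rw [e]
    exact h2

/-- Bound for the expected distance from the walk to a target. -/
lemma sum_exp_ball_le {γ α : ℝ} {d s m : ℕ} (hγ : 0 < γ) (hα : 0 < α) (hd : 0 < d) (hm : 0 < m)
    (hms : m ≤ s ^ 2) (c : ℕ → ℝ)
    (hc : ∀ r, (m : ℝ) / 2 < c r ∨ (1 + r * (α / d)) * (α * s) ≤ c r) :
    ∑ r ∈ Finset.range m, Real.exp (-(γ * (c r / m) * s) / 2)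
      ≤ 1 / (1 - Real.exp (-(γ * α ^ 2 / (2 * d)))) + 32 / γ ^ 2 := by
  have hd' : (0 : ℝ) < d := by exact_mod_cast hd
  have hm' : (0 : ℝ) < m := by exact_mod_cast hm
  have hms' : (m : ℝ) ≤ s ^ 2 := by exact_mod_cast hms
  have hs' : (0 : ℝ) < s := by
    rcases Nat.eq_zero_or_pos s with h | h
    · subst h; simp at hms; omega
    · exact_mod_cast h
  set κ := γ * α ^ 2 / (2 * d) with hκ
  have hκ0 : 0 < κ := by positivity
  have hterm : ∀ r : ℕ, Real.exp (-(γ * (c r / m) * s) / 2)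
      ≤ Real.exp (-κ) ^ r + Real.exp (-(γ * s / 4)) := by
    intro r
    rw [← Real.exp_nat_mul]
    rcases hc r with h | h
    · have : Real.exp (-(γ * (c r / m) * s) / 2) ≤ Real.exp (-(γ * s / 4)) := by
        apply Real.exp_le_exp.2
        have h1 : 1 / 2 ≤ c r / m := by rw [le_div_iff₀ hm']; linarith
        have h2 : γ * (1 / 2) * s ≤ γ * (c r / m) * s := by gcongr
        linarith
      have := (Real.exp_pos (r * -κ)).le
      linarith
    · have : Real.exp (-(γ * (c r / m) * s) / 2) ≤ Real.exp (r * -κ) := by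
        apply Real.exp_le_exp.2
        have h1 : r * (α / d) * α ≤ c r / m * s := by
          rw [div_mul_eq_mul_div, le_div_iff₀ hm']
          calc r * (α / d) * α * m ≤ r * (α / d) * α * s ^ 2 := by gcongr
            _ = (r * (α / d)) * (α * s) * s := by ring
            _ ≤ (1 + r * (α / d)) * (α * s) * s := by gcongr; linarith
            _ ≤ c r * s := by gcongr
        have h2 : γ * (r * (α / d) * α) ≤ γ * (c r / m * s) := by gcongr
        have h3 : γ * (r * (α / d) * α) = 2 * (r * κ) := by rw [hκ]; field_simp
        linarith
      have := (Real.exp_pos (-(γ * s / 4))).le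
      linarith
  have hlt : Real.exp (-κ) < 1 := Real.exp_lt_one_iff.2 (by linarith)
  have hgeom : ∑ r ∈ Finset.range m, Real.exp (-κ) ^ r ≤ 1 / (1 - Real.exp (-κ)) := by
    have h1 := Summable.sum_le_tsum (Finset.range m) (fun r _ => by positivity)
      (summable_geometric_of_lt_one (Real.exp_pos _).le hlt)
    rw [tsum_geometric_of_lt_one (Real.exp_pos _).le hlt] at h1
    simpa [one_div] using h1
  have hlast : (m : ℝ) * Real.exp (-(γ * s / 4)) ≤ 32 / γ ^ 2 := by
    have h1 := Real.quadratic_le_exp_of_nonneg (x := γ * s / 4) (by positivity)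
    rw [Real.exp_neg, ← div_eq_mul_inv, div_le_div_iff₀ (Real.exp_pos _) (by positivity)]
    have h2 : (m : ℝ) * γ ^ 2 ≤ s ^ 2 * γ ^ 2 := by gcongr
    have h3 : 0 ≤ γ * s / 4 := by positivity
    nlinarith
  calc _ ≤ ∑ r ∈ Finset.range m, (Real.exp (-κ) ^ r + Real.exp (-(γ * s / 4))) :=
        Finset.sum_le_sum fun r _ => hterm r
    _ ≤ _ := by
        rw [Finset.sum_add_distrib, Finset.sum_const, nsmul_eq_mul, Finset.card_range]
        exact add_le_add hgeom hlast

/-- The constant bounding the mean distance from a walk of length `s` to a target. -/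
def hitConst (d : ℕ) (α : ℝ) : ℝ :=
  1 / (1 - Real.exp (-(α ^ 2 / (16 * d ^ 2) * α ^ 2 / (2 * d)))) + 32 / (α ^ 2 / (16 * d ^ 2)) ^ 2

lemma card_filter_disjoint_le {P : ℕ → Prop} [DecidablePred P] {m : ℕ}
    (hP : ∀ i j, i ≤ j → P j → P i) (h : ((Finset.range m).filter P).card < m) :
    ¬ P ((Finset.range m).filter P).card := by
  intro hp
  have : Finset.range (((Finset.range m).filter P).card + 1) ⊆ (Finset.range m).filter P := by
    intro i hi
    rw [Finset.mem_range] at hi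
    exact Finset.mem_filter.2 ⟨Finset.mem_range.2 (by omega), hP i _ (by omega) hp⟩
  have := Finset.card_le_card this
  rw [Finset.card_range] at this
  omega

/-- In an expander, few moderately large sets are simultaneously met by a connected set of size
of order `s`. -/
lemma exists_connected_hitting {ι : Type*} {H : SimpleGraph V} {d : ℕ}
    (hd : ∀ x, (H.neighborSet x).ncard ≤ d) (hd0 : 0 < d) {U : Finset V} {α : ℝ} (hα : 0 < α)
    (hU : ExpandsOn H U α) {s t : ℕ} (hs : 0 < s) (hUs : U.card ≤ s ^ 2)
    (hsU : 2 * s ≤ U.card) (ht : t * (hitConst d α + 1) ≤ s) (J : Finset ι) (hJ : J.card ≤ t)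
    (S : ι → Finset V) (hSU : ∀ j ∈ J, S j ⊆ U) (hS : ∀ j ∈ J, α * s ≤ (S j).card) :
    ∃ W ⊆ U, (H.induce (↑W : Set V)).Connected ∧ W.card ≤ 3 * s ∧
      ∀ j ∈ J, ¬ Disjoint W (S j) := by
  have hd' : (0 : ℝ) < d := by exact_mod_cast hd0
  have hne : U.Nonempty := Finset.card_pos.1 (by omega)
  set m := U.card with hm
  set I := J ×ˢ Finset.range m with hI
  obtain ⟨W, hWU, hWc, hWl, hWm⟩ := exists_connected_few_missed_avg hd hd0 hne hα hU I
    (fun a => ballIn H U (S a.1) a.2)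
    (fun a ha => ballIn_subset H (hSU _ (Finset.mem_product.1 ha).1) _) s
  set ρ : ι → ℕ := fun j =>
    ((Finset.range m).filter (fun r => Disjoint W (ballIn H U (S j) r))).card with hρ
  have e1 : (I.filter (fun a => Disjoint W (ballIn H U (S a.1) a.2))).card = ∑ j ∈ J, ρ j := by
    rw [Finset.card_filter, hI, Finset.sum_product]
    refine Finset.sum_congr rfl fun j _ => ?_
    rw [hρ]
    simp only [Finset.card_filter]
  have e2 : ∑ a ∈ I, Real.exp (-(α ^ 2 / (16 * d ^ 2) *
      ((ballIn H U (S a.1) a.2).card / m) * s) / 2) ≤ t * hitConst d α := by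
    rw [hI, Finset.sum_product]
    have hb : ∀ j ∈ J, ∑ r ∈ Finset.range m, Real.exp (-(α ^ 2 / (16 * d ^ 2) *
      ((ballIn H U (S j) r).card / m) * s) / 2) ≤ hitConst d α := by
      intro j hj
      refine sum_exp_ball_le (by positivity) hα hd0 (by omega) hUs
        (fun r => ((ballIn H U (S j) r).card : ℝ)) fun r => ?_
      refine (card_ballIn hd hd0 hα hU (hSU j hj) r).imp id fun h => le_trans ?_ h
      have := hS j hj
      gcongr
    refine (Finset.sum_le_card_nsmul _ _ _ hb).trans ?_
    rw [nsmul_eq_mul]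
    have h0 : 0 ≤ hitConst d α := by
      have : Real.exp (-(α ^ 2 / (16 * d ^ 2) * α ^ 2 / (2 * d))) ≤ 1 :=
        Real.exp_le_one_iff.2 (neg_nonpos.2 (by positivity))
      unfold hitConst
      exact add_nonneg (div_nonneg zero_le_one (by linarith)) (by positivity)
    gcongr
  have e3 : (∑ j ∈ J, ρ j) + t ≤ s := by
    rw [← e1]
    have : (((I.filter (fun a => Disjoint W (ballIn H U (S a.1) a.2))).card : ℕ) : ℝ) + t ≤ s := by
      have := hWm.trans e2
      linarith
    exact_mod_cast this
  have hlt : ∀ j ∈ J, ρ j < m := by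
    intro j hj
    have := Finset.single_le_sum (f := ρ) (fun i _ => Nat.zero_le _) hj
    omega
  have hmeet : ∀ j ∈ J, ∃ P ⊆ U, (H.induce (↑P : Set V)).Connected ∧ P.card ≤ ρ j + 1 ∧
      ¬ Disjoint W P ∧ ¬ Disjoint P (S j) := by
    intro j hj
    have h1 := card_filter_disjoint_le (P := fun r => Disjoint W (ballIn H U (S j) r)) (m := m)
      (fun i k hik h => Finset.disjoint_of_subset_right (ballIn_mono H U (S j) hik) h) (hlt j hj)
    obtain ⟨x, hxW, hx⟩ := Finset.not_disjoint_iff.1 h1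
    obtain ⟨P, h1, h2, h3, h4, h5⟩ := exists_connected_of_mem_ballIn H (hSU j hj) _ x hx
    exact ⟨P, h1, h3, h4, Finset.not_disjoint_iff.2 ⟨x, hxW, h2⟩, h5⟩
  choose! P hPU hPc hPl hPW hPS using hmeet
  refine ⟨W ∪ J.biUnion P, Finset.union_subset hWU (Finset.biUnion_subset.2 hPU),
    induce_union_biUnion_connected H hWc J P hPc hPW, ?_, ?_⟩
  · have h1 := Finset.card_union_le W (J.biUnion P)
    have h2 : (J.biUnion P).card ≤ ∑ j ∈ J, (ρ j + 1) :=
      Finset.card_biUnion_le.trans (Finset.sum_le_sum hPl)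
    rw [Finset.sum_add_distrib, Finset.sum_const, smul_eq_mul, mul_one] at h2
    omega
  · intro j hj h
    refine hPS j hj (Finset.disjoint_of_subset_left ?_ h)
    exact (Finset.subset_biUnion_of_mem P hj).trans Finset.subset_union_right

lemma exists_connected_extension {H : SimpleGraph V} {U : Finset V} {α : ℝ} (hα : 0 < α)
    (hU : ExpandsOn H U α) {s : ℕ} (hsU : 2 * s ≤ U.card) {W : Finset V}
    (hWU : W ⊆ U) (hW : (H.induce (↑W : Set V)).Connected) (j : ℕ) (hj : j ≤ s) :
    ∃ W' ⊆ U, W ⊆ W' ∧ (H.induce (↑W' : Set V)).Connected ∧ j ≤ W'.card ∧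
      W'.card ≤ max W.card s := by
  induction j with
  | zero => exact ⟨W, hWU, subset_rfl, hW, by omega, le_max_left _ _⟩
  | succ j ih =>
    obtain ⟨W', h1, h2, h3, h4, h5⟩ := ih (by omega)
    by_cases hc : j + 1 ≤ W'.card
    · exact ⟨W', h1, h2, h3, hc, h5⟩
    have hne : W'.Nonempty := by
      obtain ⟨⟨x, hx⟩⟩ := h3.nonempty
      exact ⟨x, hx⟩
    have h6 : 0 < edgeBd H U W' := by
      refine lt_of_lt_of_le ?_ (hU W' h1 (by omega))
      have : (0 : ℝ) < W'.card := by exact_mod_cast hne.card_pos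
      positivity
    have h7 : ∃ x ∈ W', ∃ y ∈ U \ W', H.Adj x y := by
      by_contra hcon
      push Not at hcon
      refine h6.ne' (Finset.sum_eq_zero fun x hx => Finset.sum_eq_zero fun y hy => ?_)
      rw [adjW, if_neg (hcon x hx y hy)]
    obtain ⟨x, hx, y, hy, hxy⟩ := h7
    rw [Finset.mem_sdiff] at hy
    refine ⟨insert y W', Finset.insert_subset hy.1 h1, h2.trans (Finset.subset_insert _ _),
      induce_insert_connected h3 hx (Or.inr hxy.symm), ?_, ?_⟩
    · rw [Finset.card_insert_of_notMem hy.2]; omega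
    · rw [Finset.card_insert_of_notMem hy.2]
      exact le_max_of_le_right (by omega)

end Hitting

section MinorConstruction

/-- The vertices outside `D` and outside all members of `ℬ`. -/
def restVerts (D : Finset V) (ℬ : Finset (Finset V)) : Finset V := (D ∪ ℬ.biUnion id)ᶜ

/-- A partial construction of a complete minor: branch sets `ℬ` of size of order `s`, together
with a discarded set `D` of small boundary holding at most a third of `Z`. -/
structure PartialMinor (H : SimpleGraph V) (s t : ℕ) (α : ℝ) (Z D : Finset V)
    (ℬ : Finset (Finset V)) : Prop where
  connected : ∀ B ∈ ℬ, (H.induce (↑B : Set V)).Connected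
  le_card : ∀ B ∈ ℬ, s ≤ B.card
  card_le : ∀ B ∈ ℬ, B.card ≤ 3 * s
  disjoint_discarded : ∀ B ∈ ℬ, Disjoint B D
  disjoint : ∀ B ∈ ℬ, ∀ B' ∈ ℬ, B ≠ B' → Disjoint B B'
  adj : ∀ B ∈ ℬ, ∀ B' ∈ ℬ, B ≠ B' → ∃ x ∈ B, ∃ y ∈ B', H.Adj x y
  length_le : ℬ.card ≤ t
  boundary : ((nbrsIn H (restVerts D ℬ) D).card : ℝ) ≤ α * D.card
  measure : 3 * (D ∩ Z).card ≤ Z.card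

variable {H : SimpleGraph V} {s t : ℕ} {α ε : ℝ} {Z D : Finset V} {ℬ : Finset (Finset V)}

lemma nbrsIn_mono_left {U U' : Finset V} (h : U' ⊆ U) (S : Finset V) :
    nbrsIn H U' S ⊆ nbrsIn H U S :=
  Finset.filter_subset_filter _ (Finset.sdiff_subset_sdiff h subset_rfl)

lemma nbrsIn_union_subset (H : SimpleGraph V) (U S T : Finset V) :
    nbrsIn H U (S ∪ T) ⊆ nbrsIn H U S ∪ nbrsIn H U T := by
  intro y hy
  simp only [nbrsIn, Finset.mem_filter, Finset.mem_sdiff, Finset.mem_union] at hy ⊢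
  obtain ⟨⟨hU, hn⟩, x, hx, hxy⟩ := hy
  rcases hx with hx | hx
  · exact Or.inl ⟨⟨hU, fun h => hn (Or.inl h)⟩, x, hx, hxy⟩
  · exact Or.inr ⟨⟨hU, fun h => hn (Or.inr h)⟩, x, hx, hxy⟩

lemma PartialMinor.card_biUnion_le (h : PartialMinor H s t α Z D ℬ) :
    (ℬ.biUnion id).card ≤ 3 * s * t := by
  refine (Finset.card_biUnion_le_card_mul ℬ id (3 * s) h.card_le).trans ?_
  rw [mul_comm]
  exact Nat.mul_le_mul_left _ h.length_le

/-- A partial minor remains one when vertices and branch sets are discarded, provided that the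
discarded set keeps a small boundary and holds at most two thirds of `Z`. -/
lemma PartialMinor.discard (h : PartialMinor H s t α Z D ℬ)
    (hZ : ∀ A B X : Finset V, Disjoint A B → Disjoint A X → Disjoint B X →
      (∀ v, v ∈ A ∨ v ∈ B ∨ v ∈ X) → (∀ x ∈ A, ∀ y ∈ B, ¬ H.Adj x y) →
      Z.card ≤ 4 * (A ∩ Z).card → Z.card ≤ 4 * (B ∩ Z).card →
      ε * Fintype.card V < X.card)
    (hα : 4 * α ≤ ε) (hα0 : 0 ≤ α) (hεZ : 6 * (ε * Fintype.card V) ≤ Z.card)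
    (hst : ((3 * s * t : ℕ) : ℝ) ≤ ε * Fintype.card V / 4)
    {D' : Finset V} {ℬ' : Finset (Finset V)} (hℬ : ℬ' ⊆ ℬ)
    (hdisj : ∀ B ∈ ℬ', Disjoint B D')
    (hbd : ((nbrsIn H (restVerts D' ℬ') D').card : ℝ) ≤ α * D'.card)
    (hm : 3 * (D' ∩ Z).card ≤ 2 * Z.card) : PartialMinor H s t α Z D' ℬ' := by
  refine ⟨fun B hB => h.connected B (hℬ hB), fun B hB => h.le_card B (hℬ hB),
    fun B hB => h.card_le B (hℬ hB), hdisj,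
    fun B hB B' hB' => h.disjoint B (hℬ hB) B' (hℬ hB'),
    fun B hB B' hB' => h.adj B (hℬ hB) B' (hℬ hB'),
    (Finset.card_le_card hℬ).trans h.length_le, hbd, ?_⟩
  by_contra hcon
  set N := nbrsIn H (restVerts D' ℬ') D' with hN
  set X := ℬ'.biUnion id ∪ N with hX
  have hX1 : (X.card : ℝ) ≤ ε * Fintype.card V / 2 := by
    have h1 : X.card ≤ 3 * s * t + N.card := (Finset.card_union_le _ _).trans
      (Nat.add_le_add_right ((Finset.card_le_card
        (Finset.biUnion_subset_biUnion_of_subset_left _ hℬ)).trans h.card_biUnion_le) _)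
    have h2 : (X.card : ℝ) ≤ (3 * s * t : ℕ) + N.card := by exact_mod_cast h1
    have h3 : α * D'.card ≤ α * Fintype.card V := by
      gcongr
      exact Finset.card_le_univ _
    have h4 : 4 * α * Fintype.card V ≤ ε * Fintype.card V := by gcongr
    linarith
  have hε : 0 ≤ ε * Fintype.card V := mul_nonneg (by linarith) (Nat.cast_nonneg _)
  have hDX : Disjoint D' X := by
    rw [hX, Finset.disjoint_union_right, Finset.disjoint_biUnion_right]
    refine ⟨fun B hB => (hdisj B hB).symm, Finset.disjoint_left.2 fun x hx hx' => ?_⟩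
    exact (Finset.mem_sdiff.1 (Finset.mem_filter.1 hx').1).2 hx
  have hB : Z.card ≤ 4 * ((D' ∪ X)ᶜ ∩ Z).card := by
    have h1 : Z ⊆ (D' ∩ Z) ∪ X ∪ ((D' ∪ X)ᶜ ∩ Z) := by
      intro z hz
      simp only [Finset.mem_union, Finset.mem_inter, Finset.mem_compl]
      tauto
    have h2 := (Finset.card_le_card h1).trans ((Finset.card_union_le _ _).trans
      (Nat.add_le_add_right (Finset.card_union_le _ _) _))
    have h3 : (Z.card : ℝ) ≤ (D' ∩ Z).card + X.card + ((D' ∪ X)ᶜ ∩ Z).card := by exact_mod_cast h2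
    have h4 : (3 * (D' ∩ Z).card : ℝ) ≤ 2 * Z.card := by exact_mod_cast hm
    have h5 : (Z.card : ℝ) ≤ 4 * ((D' ∪ X)ᶜ ∩ Z).card := by linarith
    exact_mod_cast h5
  have key := hZ D' (D' ∪ X)ᶜ X
    (Finset.disjoint_left.2 fun x hx hx' =>
      Finset.mem_compl.1 hx' (Finset.mem_union_left _ hx)) hDX
    (Finset.disjoint_left.2 fun x hx hx' =>
      Finset.mem_compl.1 hx (Finset.mem_union_right _ hx'))
    (fun v => by simp only [Finset.mem_compl, Finset.mem_union]; tauto)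
    (fun x hx y hy hxy => by
      simp only [Finset.mem_compl, hX, hN, nbrsIn, restVerts, Finset.mem_union,
        Finset.mem_filter, Finset.mem_sdiff] at hy
      exact hy (or_iff_not_imp_left.2 fun h1 => or_iff_not_imp_left.2 fun h2 =>
        ⟨⟨not_or.2 ⟨h1, h2⟩, h1⟩, x, hx, hxy⟩)) (by omega) hB
  linarith

/-- A partial minor with fewer than `t` branch sets and with an expanding, well-attached rest
can be extended by a further branch set. -/
lemma PartialMinor.exists_insert {d : ℕ} (hd : ∀ x, (H.neighborSet x).ncard ≤ d) (hd0 : 0 < d)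
    (h : PartialMinor H s t α Z D ℬ) (hα : 0 < α) (hs : 0 < s)
    (hns : Fintype.card V ≤ s ^ 2) (ht : t * (hitConst d α + 1) ≤ s) (hlt : ℬ.card < t)
    (hU : ExpandsOn H (restVerts D ℬ) α) (hsU : 2 * s ≤ (restVerts D ℬ).card)
    (hN : ∀ B ∈ ℬ, α * B.card ≤ (nbrsIn H (restVerts D ℬ) B).card) :
    ∃ W ∉ ℬ, PartialMinor H s t α Z D (insert W ℬ) := by
  set U := restVerts D ℬ with hUdef
  obtain ⟨W₀, hW₀U, hW₀c, hW₀l, hW₀m⟩ := exists_connected_hitting hd hd0 hα hU hs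
    ((Finset.card_le_univ _).trans hns) hsU ht ℬ hlt.le (nbrsIn H U)
    (fun B _ => (Finset.filter_subset _ _).trans Finset.sdiff_subset)
    (fun B hB => le_trans (by have := h.le_card B hB; gcongr) (hN B hB))
  obtain ⟨W, hWU, hW₀W, hWc, hWs, hWl⟩ :=
    exists_connected_extension hα hU hsU hW₀U hW₀c s le_rfl
  have hWout : ∀ x ∈ W, x ∉ D ∧ ∀ B ∈ ℬ, x ∉ B := by
    intro x hx
    have := hWU hx
    simp only [hUdef, restVerts, Finset.mem_compl, Finset.mem_union, Finset.mem_biUnion, id] at this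
    push Not at this
    exact this
  have hWdisj : ∀ B ∈ ℬ, Disjoint W B := fun B hB =>
    Finset.disjoint_left.2 fun x hx => (hWout x hx).2 B hB
  have hWadj : ∀ B ∈ ℬ, ∃ y ∈ W, ∃ x ∈ B, H.Adj y x := by
    intro B hB
    obtain ⟨y, hy, hy'⟩ := Finset.not_disjoint_iff.1 (hW₀m B hB)
    obtain ⟨x, hx, hxy⟩ := (Finset.mem_filter.1 hy').2
    exact ⟨y, hW₀W hy, x, hx, hxy.symm⟩
  have hWn : W ∉ ℬ := by
    intro hW
    obtain ⟨⟨x, hx⟩⟩ := hWc.nonempty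
    exact (hWout x hx).2 W hW hx
  have hWl' : W.card ≤ 3 * s := hWl.trans (max_le hW₀l (by omega))
  refine ⟨W, hWn, ?_, ?_, ?_, ?_, ?_, ?_, ?_, ?_, h.measure⟩
  · exact Finset.forall_mem_insert _ _ _ |>.2 ⟨hWc, h.connected⟩
  · exact Finset.forall_mem_insert _ _ _ |>.2 ⟨hWs, h.le_card⟩
  · exact Finset.forall_mem_insert _ _ _ |>.2 ⟨hWl', h.card_le⟩
  · exact Finset.forall_mem_insert _ _ _ |>.2
      ⟨Finset.disjoint_left.2 fun x hx => (hWout x hx).1, h.disjoint_discarded⟩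
  · intro B hB B' hB' hne
    rcases Finset.mem_insert.1 hB with rfl | h1 <;> rcases Finset.mem_insert.1 hB' with rfl | h2
    · exact absurd rfl hne
    · exact hWdisj B' h2
    · exact (hWdisj B h1).symm
    · exact h.disjoint B h1 B' h2 hne
  · intro B hB B' hB' hne
    rcases Finset.mem_insert.1 hB with rfl | h1 <;> rcases Finset.mem_insert.1 hB' with rfl | h2
    · exact absurd rfl hne
    · exact hWadj B' h2
    · obtain ⟨y, hy, x, hx, hxy⟩ := hWadj B h1
      exact ⟨x, hx, y, hy, hxy.symm⟩
    · exact h.adj B h1 B' h2 hne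
  · rw [Finset.card_insert_of_notMem hWn]
    omega
  · refine le_trans ?_ h.boundary
    have : restVerts D (insert W ℬ) ⊆ restVerts D ℬ := Finset.compl_subset_compl.2
      (Finset.union_subset_union subset_rfl
        (Finset.biUnion_subset_biUnion_of_subset_left _ (Finset.subset_insert _ _)))
    exact_mod_cast Finset.card_le_card (nbrsIn_mono_left this D)

/-- A bounded-degree graph whose set `Z` has no small balanced separator contains a complete
minor on `t` branch sets. -/
lemma exists_partialMinor {d : ℕ} (hd : ∀ x, (H.neighborSet x).ncard ≤ d) (hd0 : 0 < d)
    (hZ : ∀ A B X : Finset V, Disjoint A B → Disjoint A X → Disjoint B X →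
      (∀ v, v ∈ A ∨ v ∈ B ∨ v ∈ X) → (∀ x ∈ A, ∀ y ∈ B, ¬ H.Adj x y) →
      Z.card ≤ 4 * (A ∩ Z).card → Z.card ≤ 4 * (B ∩ Z).card →
      ε * Fintype.card V < X.card)
    (hα : 4 * α ≤ ε) (hα0 : 0 < α) (hεZ : 6 * (ε * Fintype.card V) ≤ Z.card)
    (hst : ((3 * s * t : ℕ) : ℝ) ≤ ε * Fintype.card V / 4) (hs : 0 < s)
    (hns : Fintype.card V ≤ s ^ 2) (ht : t * (hitConst d α + 1) ≤ s) (hsZ : 4 * s ≤ Z.card) :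
    ∃ D ℬ, PartialMinor H s t α Z D ℬ ∧ ℬ.card = t := by
  have h0 : PartialMinor H s t α Z ∅ ∅ :=
    ⟨by simp, by simp, by simp, by simp, by simp, by simp, by simp, by simp [nbrsIn], by simp⟩
  obtain ⟨⟨D, ℬ⟩, hmem, hmax⟩ := Finset.exists_max_image
    ((Finset.univ : Finset (Finset V × Finset (Finset V))).filter
      (fun a => PartialMinor H s t α Z a.1 a.2))
    (fun a => a.1.card * (t + 1) + a.2.card) ⟨(∅, ∅), by simpa using h0⟩
  have h : PartialMinor H s t α Z D ℬ := (Finset.mem_filter.1 hmem).2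
  replace hmax : ∀ D' ℬ', PartialMinor H s t α Z D' ℬ' →
      D'.card * (t + 1) + ℬ'.card ≤ D.card * (t + 1) + ℬ.card := fun D' ℬ' h' =>
    hmax (D', ℬ') (Finset.mem_filter.2 ⟨Finset.mem_univ _, h'⟩)
  refine ⟨D, ℬ, h, le_antisymm h.length_le ?_⟩
  by_contra! hlt
  have hnomove : ∀ D' ℬ', D.card < D'.card → ¬ PartialMinor H s t α Z D' ℬ' := by
    intro D' ℬ' hD h'
    have h1 := hmax D' ℬ' h'
    have h2 : (D.card + 1) * (t + 1) ≤ D'.card * (t + 1) := Nat.mul_le_mul_right _ hD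
    have h3 := h.length_le
    rw [Nat.add_mul] at h2
    omega
  set U := restVerts D ℬ with hU
  have hUout : ∀ x ∈ U, x ∉ D ∧ ∀ B ∈ ℬ, x ∉ B := by
    intro x hx
    simp only [hU, restVerts, Finset.mem_compl, Finset.mem_union, Finset.mem_biUnion, id] at hx
    push Not at hx
    exact hx
  have hn : 24 * (3 * s * t) ≤ Z.card := by
    have : (24 * (3 * s * t : ℕ) : ℝ) ≤ Z.card := by linarith
    exact_mod_cast this
  have hs3 : 3 * s ≤ 3 * s * t := Nat.le_mul_of_pos_right _ (by omega)
  have hsU : 2 * s ≤ U.card := by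
    have h1 : Z ⊆ (D ∩ Z) ∪ ℬ.biUnion id ∪ U := by
      intro z hz
      simp only [hU, restVerts, Finset.mem_union, Finset.mem_inter, Finset.mem_compl]
      tauto
    have h2 := (Finset.card_le_card h1).trans ((Finset.card_union_le _ _).trans
      (Nat.add_le_add_right (Finset.card_union_le _ _) _))
    have h3 := h.card_biUnion_le
    have h4 := h.measure
    omega
  by_cases hN : ∀ B ∈ ℬ, α * B.card ≤ (nbrsIn H U B).card
  · by_cases hE : ExpandsOn H U α
    · obtain ⟨W, hW, h'⟩ := h.exists_insert hd hd0 hα0 hs hns ht hlt hE hsU hN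
      have := hmax _ _ h'
      rw [Finset.card_insert_of_notMem hW] at this
      omega
    · unfold ExpandsOn at hE
      push Not at hE
      obtain ⟨S, hSU, hS2, hSα⟩ := hE
      have hS0 : 0 < S.card := by
        by_contra! h1
        have h2 : S = ∅ := Finset.card_eq_zero.1 (by omega)
        rw [h2] at hSα
        simp [edgeBd] at hSα
      obtain ⟨S', hS'U, hS'c, hS'b, hS'Z⟩ : ∃ S' ⊆ U, S.card ≤ S'.card ∧
          edgeBd H U S' = edgeBd H U S ∧ 2 * (S' ∩ Z).card ≤ (U ∩ Z).card := by
        have h1 : (S ∩ Z).card + ((U \ S) ∩ Z).card = (U ∩ Z).card := by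
          rw [← Finset.card_union_of_disjoint, ← Finset.union_inter_distrib_right,
            Finset.union_sdiff_of_subset hSU]
          exact Finset.disjoint_of_subset_left Finset.inter_subset_left
            (Finset.disjoint_of_subset_right Finset.inter_subset_left Finset.disjoint_sdiff)
        by_cases h2 : 2 * (S ∩ Z).card ≤ (U ∩ Z).card
        · exact ⟨S, hSU, le_rfl, rfl, h2⟩
        · refine ⟨U \ S, Finset.sdiff_subset, ?_, edgeBd_compl H hSU, by omega⟩
          rw [Finset.card_sdiff_of_subset hSU]
          omega
      have hDS : Disjoint D S' := Finset.disjoint_right.2 fun x hx => (hUout x (hS'U hx)).1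
      have hcard := Finset.card_union_of_disjoint hDS
      refine hnomove (D ∪ S') ℬ (by omega)
        (h.discard hZ hα hα0.le hεZ hst subset_rfl (fun B hB => ?_) ?_ ?_)
      · refine Finset.disjoint_union_right.2 ⟨h.disjoint_discarded B hB, ?_⟩
        exact Finset.disjoint_right.2 fun x hx => (hUout x (hS'U hx)).2 B hB
      · have hsub : restVerts (D ∪ S') ℬ ⊆ U := Finset.compl_subset_compl.2
          (Finset.union_subset_union Finset.subset_union_left subset_rfl)
        have h1 : (nbrsIn H (restVerts (D ∪ S') ℬ) (D ∪ S')).card ≤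
            (nbrsIn H U D).card + (nbrsIn H U S').card :=
          (Finset.card_le_card ((nbrsIn_mono_left hsub _).trans
            (nbrsIn_union_subset H U D S'))).trans (Finset.card_union_le _ _)
        have h2 : ((nbrsIn H (restVerts (D ∪ S') ℬ) (D ∪ S')).card : ℝ) ≤
            (nbrsIn H U D).card + (nbrsIn H U S').card := by exact_mod_cast h1
        have h3 := card_nbrsIn_le H U S'
        have h4 : α * S.card ≤ α * S'.card := by gcongr
        have h5 := h.boundary
        rw [hcard]
        push_cast
        rw [← hU] at h5
        linarith
      · have h1 : (D ∪ S') ∩ Z = (D ∩ Z) ∪ (S' ∩ Z) := Finset.union_inter_distrib_right _ _ _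
        have h2 := Finset.card_union_le (D ∩ Z) (S' ∩ Z)
        have h3 : (D ∩ Z).card + (U ∩ Z).card ≤ Z.card := by
          rw [← Finset.card_union_of_disjoint]
          · exact Finset.card_le_card
              (Finset.union_subset Finset.inter_subset_right Finset.inter_subset_right)
          · exact Finset.disjoint_right.2 fun x hx hx' =>
              (hUout x (Finset.mem_inter.1 hx).1).1 (Finset.mem_inter.1 hx').1
        have h4 := h.measure
        rw [h1]
        omega
  · push Not at hN
    obtain ⟨B, hB, hBα⟩ := hN
    have hDB : Disjoint D B := (h.disjoint_discarded B hB).symm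
    have hcard := Finset.card_union_of_disjoint hDB
    have hBs := h.le_card B hB
    have hB3 := h.card_le B hB
    refine hnomove (D ∪ B) (ℬ.erase B) (by omega)
      (h.discard hZ hα hα0.le hεZ hst (Finset.erase_subset _ _) (fun B' hB' => ?_) ?_ ?_)
    · obtain ⟨hne, hB'⟩ := Finset.mem_erase.1 hB'
      exact Finset.disjoint_union_right.2
        ⟨h.disjoint_discarded B' hB', h.disjoint B' hB' B hB hne⟩
    · have hsub : restVerts (D ∪ B) (ℬ.erase B) ⊆ U := by
        refine Finset.compl_subset_compl.2 ?_
        refine Finset.union_subset (Finset.subset_union_left.trans Finset.subset_union_left) ?_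
        refine Finset.biUnion_subset.2 fun B' hB' => ?_
        by_cases hne : B' = B
        · exact hne ▸ Finset.subset_union_right.trans Finset.subset_union_left
        · exact (Finset.subset_biUnion_of_mem id (Finset.mem_erase.2 ⟨hne, hB'⟩)).trans
            Finset.subset_union_right
      have h1 : (nbrsIn H (restVerts (D ∪ B) (ℬ.erase B)) (D ∪ B)).card ≤
          (nbrsIn H U D).card + (nbrsIn H U B).card :=
        (Finset.card_le_card ((nbrsIn_mono_left hsub _).trans
          (nbrsIn_union_subset H U D B))).trans (Finset.card_union_le _ _)
      have h2 : ((nbrsIn H (restVerts (D ∪ B) (ℬ.erase B)) (D ∪ B)).card : ℝ) ≤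
          (nbrsIn H U D).card + (nbrsIn H U B).card := by exact_mod_cast h1
      have h5 := h.boundary
      rw [hcard]
      push_cast
      rw [← hU] at h5
      linarith
    · have h1 : (D ∪ B) ∩ Z = (D ∩ Z) ∪ (B ∩ Z) := Finset.union_inter_distrib_right _ _ _
      have h2 := Finset.card_union_le (D ∩ Z) (B ∩ Z)
      have h3 : (B ∩ Z).card ≤ B.card := Finset.card_le_card Finset.inter_subset_left
      have h4 := h.measure
      rw [h1]
      omega

/-- `H` has a complete minor with at least `δ √n` branch sets. -/
def HasLargeCompleteMinor (δ : ℝ) (H : SimpleGraph V) : Prop :=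
  ∃ t : ℕ, δ * Real.sqrt (Fintype.card V) ≤ (t : ℝ) ∧
    ∃ f : Fin t → Finset V,
      (∀ i j, i ≠ j → Disjoint (f i) (f j)) ∧
      (∀ i, (H.induce (↑(f i) : Set V)).Connected) ∧
      (∀ i j, i ≠ j → ∃ x ∈ f i, ∃ y ∈ f j, H.Adj x y)

lemma PartialMinor.hasLargeCompleteMinor {δ : ℝ} (h : PartialMinor H s t α Z D ℬ)
    (hcard : ℬ.card = t) (ht : δ * Real.sqrt (Fintype.card V) ≤ t) :
    HasLargeCompleteMinor δ H := by
  let e : Fin t ≃ ℬ := (Finset.equivFinOfCardEq hcard).symm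
  have hne : ∀ i j, i ≠ j → (e i : Finset V) ≠ e j := fun i j hij hE =>
    hij (e.injective (Subtype.ext hE))
  exact ⟨t, ht, fun i => e i,
    fun i j hij => h.disjoint _ (e i).2 _ (e j).2 (hne i j hij),
    fun i => h.connected _ (e i).2,
    fun i j hij => h.adj _ (e i).2 _ (e j).2 (hne i j hij)⟩

/-- A large well-linked graph of bounded degree has a complete minor of order `√n`. -/
lemma exists_hasLargeCompleteMinor {d : ℕ} (hd0 : 0 < d) {η ε : ℝ} (hη : 0 < η) (hε : 0 < ε) :
    ∃ δ > (0 : ℝ), ∃ n₀ : ℕ, ∀ (V : Type) [Fintype V] [DecidableEq V] (H : SimpleGraph V),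
      n₀ ≤ Fintype.card V → (∀ x, (H.neighborSet x).ncard ≤ d) → WellLinked H η ε →
      HasLargeCompleteMinor δ H := by
  set ε' := min ε (η / 6) with hε'
  have hε'0 : 0 < ε' := lt_min hε (by positivity)
  set K := hitConst d (ε' / 4) + 1 with hK
  set δ := min (ε' / 48) (1 / (2 * max K 1)) with hδ
  have hK0 : 0 < max K 1 := lt_of_lt_of_le one_pos (le_max_right _ _)
  have hδ0 : 0 < δ := lt_min (by positivity) (by positivity)
  refine ⟨δ, hδ0, ⌈max 1 (max (1 / δ) (8 / η)) ^ 2⌉₊, ?_⟩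
  intro V _ _ H hn hd hW
  obtain ⟨Z, hZη, hZ⟩ := hW
  set n : ℝ := ((Fintype.card V : ℕ) : ℝ) with hnd
  have hr : max 1 (max (1 / δ) (8 / η)) ≤ Real.sqrt n := by
    apply Real.le_sqrt_of_sq_le
    exact (Nat.le_ceil _).trans (hnd ▸ Nat.cast_le.2 hn)
  have hr1 : 1 ≤ Real.sqrt n := (le_max_left _ _).trans hr
  have hr2 : 1 ≤ δ * Real.sqrt n := by
    have := ((le_max_left _ _).trans (le_max_right _ _)).trans hr
    rw [div_le_iff₀ hδ0] at this
    linarith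
  have hr3 : 8 ≤ η * Real.sqrt n := by
    have := ((le_max_right _ _).trans (le_max_right _ _)).trans hr
    rw [div_le_iff₀ hη] at this
    linarith
  have hsq : Real.sqrt n * Real.sqrt n = n := Real.mul_self_sqrt (Nat.cast_nonneg _)
  set r := Real.sqrt n with hrd
  set s := ⌈r⌉₊ with hs
  set t := ⌈δ * r⌉₊ with ht
  have hs1 : r ≤ s := Nat.le_ceil _
  have hs2 : (s : ℝ) ≤ 2 * r := by
    have := Nat.ceil_lt_add_one (a := r) (by linarith)
    linarith
  have ht2 : (t : ℝ) ≤ 2 * (δ * r) := by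
    have := Nat.ceil_lt_add_one (a := δ * r) (by linarith)
    linarith
  obtain ⟨D, ℬ, h, hc⟩ := exists_partialMinor (H := H) (s := s) (t := t) (α := ε' / 4) (ε := ε')
    (Z := Z) hd hd0
    (fun A B X h1 h2 h3 h4 h5 h6 h7 => lt_of_le_of_lt (by gcongr; exact min_le_left _ _)
      (hZ A B X h1 h2 h3 h4 h5 h6 h7)) (by linarith) (by positivity)
    (by
      refine le_trans ?_ hZη
      have : 6 * ε' ≤ η := by
        have := min_le_right ε (η / 6)
        linarith
      calc 6 * (ε' * (Fintype.card V : ℝ)) = 6 * ε' * Fintype.card V := by ring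
        _ ≤ _ := by gcongr)
    (by
      push_cast
      have h1 : δ ≤ ε' / 48 := min_le_left _ _
      calc 3 * (s : ℝ) * t ≤ 3 * (2 * r) * (2 * (ε' / 48 * r)) := by
            gcongr
            exact ht2.trans (by gcongr)
        _ = ε' * (r * r) / 4 := by ring
        _ = _ := by rw [hsq])
    (by
      have : (0 : ℝ) < s := by linarith
      exact_mod_cast this)
    (by
      have : (Fintype.card V : ℝ) ≤ (s : ℝ) ^ 2 := by
        rw [← hnd, ← hsq, sq]
        gcongr
      exact_mod_cast this)
    (by
      have h1 : δ ≤ 1 / (2 * max K 1) := min_le_right _ _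
      calc (t : ℝ) * K ≤ t * max K 1 := by gcongr; exact le_max_left _ _
        _ ≤ 2 * (1 / (2 * max K 1) * r) * max K 1 := by
            gcongr
            exact ht2.trans (by gcongr)
        _ = r := by field_simp
        _ ≤ s := hs1)
    (by
      have : (4 * s : ℝ) ≤ Z.card := by
        refine le_trans ?_ hZη
        rw [← hsq]
        nlinarith
      exact_mod_cast this)
  exact h.hasLargeCompleteMinor hc (Nat.le_ceil _)

end MinorConstruction

theorem complete_minor_in_percolated_expander (d : ℕ) (hd : 3 ≤ d) (p : ℝ)
    (hp : 1 / ((d : ℝ) - 1) < p) (hp1 : p < 1) (b : ℝ) (hb : 0 < b) :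
    ∃ δ > (0:ℝ), ∃ c > (0:ℝ), ∃ C > (0:ℝ), ∃ R : ℕ, 0 < R ∧
      ∀ (V : Type) [Fintype V] [DecidableEq V] (G : SimpleGraph V),
        IsRegularExpander G b d → (R : ℕ∞) < G.girth →
        1 - C * Real.exp (-c * Fintype.card V) ≤
          percProb G p (fun H =>
            ∃ t : ℕ, δ * Real.sqrt (Fintype.card V) ≤ (t : ℝ) ∧
              ∃ f : Fin t → Finset V,
                (∀ i j, i ≠ j → Disjoint (f i) (f j)) ∧
                (∀ i, (H.induce (↑(f i) : Set V)).Connected) ∧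
                (∀ i j, i ≠ j → ∃ x ∈ f i, ∃ y ∈ f j, H.Adj x y)) := by
  obtain ⟨η, hη, ε, hε, c, hc, R, hR, hmain⟩ := exists_percExp_not_wellLinked_le hd hp hp1 hb
  obtain ⟨δ, hδ, n₀, hminor⟩ := exists_hasLargeCompleteMinor (d := d) (by omega) hη hε
  have hd' : (3 : ℝ) ≤ d := by exact_mod_cast hd
  have hp0 : 0 ≤ p := le_trans (one_div_nonneg.2 (by linarith)) hp.le
  refine ⟨δ, hδ, c, hc, 1 + Real.exp 1 + Real.exp (c * n₀), by positivity, R, hR, ?_⟩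
  intro V _ _ G hG hgirth
  change _ ≤ percExp p (edgeFinset' G) (fun s =>
    if HasLargeCompleteMinor δ (SimpleGraph.fromEdgeSet (↑s : Set (Sym2 V))) then 1 else 0)
  by_cases hn : n₀ ≤ Fintype.card V
  · have h1 := hmain V G hG (by exact_mod_cast hgirth)
    have h2 : percExp p (edgeFinset' G) (fun s => 1 -
        if WellLinked (SimpleGraph.fromEdgeSet (↑s : Set (Sym2 V))) η ε then 0 else 1) ≤
        percExp p (edgeFinset' G) (fun s =>
          if HasLargeCompleteMinor δ (SimpleGraph.fromEdgeSet (↑s : Set (Sym2 V)))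
            then 1 else 0) := by
      refine percExp_mono hp0 hp1.le fun s hs => ?_
      by_cases hW : WellLinked (SimpleGraph.fromEdgeSet (↑s : Set (Sym2 V))) η ε
      · have hdeg : ∀ x, ((SimpleGraph.fromEdgeSet (↑s : Set (Sym2 V))).neighborSet x).ncard ≤ d :=
          fun x => (Set.ncard_le_ncard (fun y hy => fromEdgeSet_le hs hy)
            (Set.toFinite _)).trans (hG.1.1 x)
        rw [if_pos hW, if_pos (hminor V _ hn hdeg hW)]
        norm_num
      · rw [if_neg hW]
        split_ifs <;> norm_num
    rw [percExp_sub, percExp_const] at h2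
    have h3 : 0 ≤ Real.exp (c * n₀) * Real.exp (-c * Fintype.card V) := by positivity
    linarith
  · have h1 : 0 ≤ percExp p (edgeFinset' G) (fun s =>
        if HasLargeCompleteMinor δ (SimpleGraph.fromEdgeSet (↑s : Set (Sym2 V)))
          then 1 else 0) := by
      refine (percExp_const p (edgeFinset' G) 0).symm.le.trans
        (percExp_mono hp0 hp1.le fun s _ => ?_)
      split_ifs <;> norm_num
    have h2 : 1 ≤ Real.exp (c * n₀) * Real.exp (-c * Fintype.card V) := by
      rw [← Real.exp_add]
      apply Real.one_le_exp
      have : (Fintype.card V : ℝ) ≤ n₀ := by exact_mod_cast (not_le.1 hn).le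
      nlinarith
    have h3 : 0 ≤ (1 + Real.exp 1) * Real.exp (-c * Fintype.card V) := by positivity
    linarith

end Percolation

end
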